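/- Leading order of the ground state energy in three dimensions (Lieb–Yngvason): Let V:ℝ³→[0,∞] be measurable, radial and compactly supported, with scattering length a∈(0,∞). Then lim_{ρ→0⁺} e₃⁻(ρ)/(4πaρ²) = lim_{ρ→0⁺} e₃⁺(ρ)/(4πaρ²) = 1, where e₃⁻(ρ)=liminf_{N→∞}E₃(N,T_N)/T_N³ and e₃⁺(ρ)=limsup_{N→∞}E₃(N,T_N)/T_N³ with T_N=(N/ρ)^{1/3}. -/

import Mathlib

open MeasureTheory Filter Real
open scoped ENNReal NNReal

noncomputable section

abbrev Vec (d : ℕ) := Fin d → ℝ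

def box (d N : ℕ) (T : ℝ) : Set (Fin N → Vec d) :=
  {x | ∀ i k, x i k ∈ Set.Icc (-T/2) (T/2)}

def periodize (d : ℕ) (V : Vec d → ℝ≥0∞) (T : ℝ) (z : Vec d) : ℝ≥0∞ :=
  ∑' n : Fin d → ℤ, V (fun k => z k + T * n k)

def kineticE (d N : ℕ) (T : ℝ) (ψ : (Fin N → Vec d) → ℂ) : ℝ≥0∞ :=
  ∑ i : Fin N, ∑ k : Fin d,
    ∫⁻ x in box d N T, (‖fderiv ℝ ψ x (Pi.single i (Pi.single k 1))‖₊ : ℝ≥0∞) ^ 2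

def interE (d N : ℕ) (T : ℝ) (V : Vec d → ℝ≥0∞) (ψ : (Fin N → Vec d) → ℂ) : ℝ≥0∞ :=
  ∑ i : Fin N, ∑ j : Fin N,
    if i < j then
      ∫⁻ x in box d N T, periodize d V T (fun k => x i k - x j k) * (‖ψ x‖₊ : ℝ≥0∞) ^ 2
    else 0

def IsTrialState (d N : ℕ) (T : ℝ) (ψ : (Fin N → Vec d) → ℂ) : Prop :=
  ContDiff ℝ (⊤ : ℕ∞) ψ ∧
  (∀ (x : Fin N → Vec d) (v : Fin N → Fin d → ℤ), ψ (fun i k => x i k + T * v i k) = ψ x) ∧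
  (∀ (σ : Equiv.Perm (Fin N)) (x : Fin N → Vec d), ψ (x ∘ σ) = ψ x) ∧
  ∫⁻ x in box d N T, (‖ψ x‖₊ : ℝ≥0∞) ^ 2 = 1

def gsEnergy (d N : ℕ) (T : ℝ) (V : Vec d → ℝ≥0∞) : ℝ :=
  sInf {e : ℝ | ∃ ψ, IsTrialState d N T ψ ∧
        kineticE d N T ψ + interE d N T V ψ ≠ ⊤ ∧
        (kineticE d N T ψ + interE d N T V ψ).toReal = e}

/-- side length of the thermodynamic box -/
def sideLength (d : ℕ) (ρ : ℝ) (N : ℕ) : ℝ := ((N : ℝ) / ρ) ^ ((1 : ℝ) / d)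

def eMinus (d : ℕ) (V : Vec d → ℝ≥0∞) (ρ : ℝ) : ℝ :=
  liminf (fun N : ℕ => gsEnergy d N (sideLength d ρ N) V / (sideLength d ρ N) ^ d) atTop

def ePlus (d : ℕ) (V : Vec d → ℝ≥0∞) (ρ : ℝ) : ℝ :=
  limsup (fun N : ℕ => gsEnergy d N (sideLength d ρ N) V / (sideLength d ρ N) ^ d) atTop

def scatSet3 (V : Vec 3 → ℝ≥0∞) : Set ℝ≥0∞ :=
  {E | ∃ f : Vec 3 → ℝ, ContDiff ℝ (⊤ : ℕ∞) f ∧ HasCompactSupport (fun x => f x - 1) ∧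
       E = ∫⁻ x, ((∑ k, ((‖fderiv ℝ f x (Pi.single k 1)‖₊ : ℝ≥0∞)) ^ 2)
             + V x * (‖f x‖₊ : ℝ≥0∞) ^ 2 / 2)}

/-!
Lower bound: the torus is cut into cells which hold a large but bounded number of particles on
average. By Poincaré's inequality the wave function in a cell is, in the mean square, close to a
constant `c`, at the price of a small fraction of its energy. A particle that moves near one other
particle and far from all the rest sees a two-body problem: cutting its wave function off
logarithmically to the constant `c`, with the error controlled by Hardy's inequality, gives a
competitor for the scattering functional, so that each ordered pair contributes about
`4πa c² / ℓ³` in a cell of side `ℓ`. The resulting bound `n (n - 1)` for `n` particles in a cell is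
convex in `n`, so an uneven distribution over the cells does not lower the energy.

Upper bound: the trial state is the Jastrow product over all pairs of a periodised near-minimiser
`f` of the scattering functional, truncated so that `f² ≤ 1`. Expanding its energy, each pair
contributes its scattering energy; the cross terms are of order `N³` divided by the square of the
volume, hence of order `ρ³` per volume. Dropping the factors of one or two particles from the
product costs a factor `1 - O(ρ)` in the norm.
-/

variable {d : ℕ}

/-- The squared Euclidean length of a vector (`Vec d` itself carries the sup norm). -/
def sqLen (x : Vec d) : ℝ := ∑ k, x k ^ 2

/-- The squared Euclidean length of the gradient. -/
def gradSq (f : Vec d → ℝ) (x : Vec d) : ℝ := ∑ k, fderiv ℝ f x (Pi.single k 1) ^ 2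

lemma sqLen_nonneg (x : Vec d) : 0 ≤ sqLen x := Finset.sum_nonneg fun _ _ => sq_nonneg _

lemma one_add_sqLen_pos (x : Vec d) : 0 < 1 + sqLen x := by linarith [sqLen_nonneg x]

lemma contDiff_sqLen {n : WithTop ℕ∞} : ContDiff ℝ n (sqLen (d := d)) := by
  unfold sqLen; fun_prop

@[fun_prop]
lemma continuous_sqLen : Continuous (sqLen (d := d)) := (contDiff_sqLen (n := 0)).continuous

lemma differentiableAt_sqLen (x : Vec d) : DifferentiableAt ℝ sqLen x :=
  (contDiff_sqLen (n := 1)).differentiable one_ne_zero x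

lemma fderiv_sqLen_single (x : Vec d) (k : Fin d) :
    fderiv ℝ sqLen x (Pi.single k 1) = 2 * x k := by
  have h : HasFDerivAt sqLen
      (∑ j : Fin d, (2 * x j) • ContinuousLinearMap.proj (R := ℝ) (φ := fun _ : Fin d => ℝ) j)
      x := by
    refine HasFDerivAt.fun_sum fun k _ => ?_
    simpa using ((ContinuousLinearMap.proj (R := ℝ) (φ := fun _ : Fin d => ℝ) k).hasFDerivAt
      (x := x)).pow 2
  simp [h.fderiv, Pi.single_apply]

lemma mem_closedBall_zero_of_sqLen_le {x : Vec d} {R : ℝ} (hR : 0 ≤ R) (h : sqLen x ≤ R ^ 2) :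
    x ∈ Metric.closedBall 0 R := by
  rw [mem_closedBall_zero_iff, pi_norm_le_iff_of_nonneg hR]
  intro k
  have hk : x k ^ 2 ≤ sqLen x :=
    Finset.single_le_sum (f := fun k => x k ^ 2) (fun _ _ => sq_nonneg _) (Finset.mem_univ k)
  exact abs_le_of_sq_le_sq (hk.trans h) hR

lemma exists_sqLen_le_of_hasCompactSupport {M : Type*} [Zero M] {V : Vec d → M}
    (hV : HasCompactSupport V) : ∃ S : ℝ, 0 ≤ S ∧ ∀ x, V x ≠ 0 → sqLen x ≤ S := by
  obtain ⟨C, hC⟩ := hV.exists_bound_of_continuousOn (f := sqLen) continuous_sqLen.continuousOn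
  exact ⟨max C 0, le_max_right _ _, fun x hx =>
    ((le_abs_self _).trans (hC x (subset_tsupport V hx))).trans (le_max_left _ _)⟩

lemma gradSq_nonneg (f : Vec d → ℝ) (x : Vec d) : 0 ≤ gradSq f x :=
  Finset.sum_nonneg fun _ _ => sq_nonneg _

lemma continuous_gradSq {f : Vec d → ℝ} (hf : ContDiff ℝ 1 f) : Continuous (gradSq f) := by
  have := hf.continuous_fderiv one_ne_zero
  unfold gradSq
  fun_prop

lemma hasCompactSupport_gradSq {f : Vec d → ℝ} (hf : HasCompactSupport f) :
    HasCompactSupport (gradSq f) := by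
  refine (hf.fderiv (𝕜 := ℝ)).mono fun x hx hx' => hx ?_
  simp [gradSq, hx']

lemma integrable_gradSq {f : Vec d → ℝ} (hf : ContDiff ℝ 1 f) (hc : HasCompactSupport f) :
    Integrable (gradSq f) :=
  (continuous_gradSq hf).integrable_of_hasCompactSupport (hasCompactSupport_gradSq hc)

lemma gradSq_eq_zero_of_eventuallyEq {f : Vec d → ℝ} {x : Vec d} {c : ℝ}
    (h : f =ᶠ[nhds x] fun _ => c) : gradSq f x = 0 := by
  simp [gradSq, h.fderiv_eq]

lemma gradSq_sub_const (g : Vec d → ℝ) (c : ℝ) : gradSq (fun x => g x - c) = gradSq g := by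
  funext x
  simp only [gradSq, fderiv_sub_const]

lemma gradSq_const_add_mul (c b : ℝ) {u : Vec d → ℝ} {x : Vec d} (hu : DifferentiableAt ℝ u x) :
    gradSq (fun y => c + b * u y) x = b ^ 2 * gradSq u x := by
  have h : fderiv ℝ (fun y => c + b * u y) x = b • fderiv ℝ u x :=
    ((hu.hasFDerivAt.const_mul b).const_add c).fderiv
  simp only [gradSq, h, Finset.mul_sum, smul_apply, smul_eq_mul, mul_pow]

lemma gradSq_comp {g : ℝ → ℝ} {g' : ℝ} {f : Vec d → ℝ} {x : Vec d}
    (hg : HasDerivAt g g' (f x)) (hf : DifferentiableAt ℝ f x) :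
    gradSq (fun y => g (f y)) x = g' ^ 2 * gradSq f x := by
  have h : fderiv ℝ (fun y => g (f y)) x = g' • fderiv ℝ f x :=
    (hg.comp_hasFDerivAt x hf.hasFDerivAt).fderiv
  simp only [gradSq, h, Finset.mul_sum, smul_apply, smul_eq_mul, mul_pow]

lemma gradSq_sqLen (x : Vec d) : gradSq sqLen x = 4 * sqLen x := by
  simp only [gradSq, fderiv_sqLen_single, sqLen, Finset.mul_sum]
  exact Finset.sum_congr rfl fun k _ => by ring

lemma add_sq_le_one_add_mul_sq {δ : ℝ} (hδ : 0 < δ) (p q : ℝ) :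
    (p + q) ^ 2 ≤ (1 + δ) * p ^ 2 + (1 + 1 / δ) * q ^ 2 := by
  have h : (1 + δ) * p ^ 2 + (1 + 1 / δ) * q ^ 2 - (p + q) ^ 2 = (δ * p - q) ^ 2 / δ := by
    field_simp; ring
  have : 0 ≤ (δ * p - q) ^ 2 / δ := by positivity
  linarith

lemma gradSq_mul_le {u w : Vec d → ℝ} {x : Vec d} (hu : DifferentiableAt ℝ u x)
    (hw : DifferentiableAt ℝ w x) {δ : ℝ} (hδ : 0 < δ) : gradSq (fun y => u y * w y) x
      ≤ (1 + δ) * (u x ^ 2 * gradSq w x) + (1 + 1 / δ) * (w x ^ 2 * gradSq u x) := by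
  have h : fderiv ℝ (fun y => u y * w y) x = u x • fderiv ℝ w x + w x • fderiv ℝ u x :=
    (hu.hasFDerivAt.mul hw.hasFDerivAt).fderiv
  simp only [gradSq, h, Finset.mul_sum, ← Finset.sum_add_distrib, add_apply, smul_apply,
    smul_eq_mul, ← mul_pow]
  exact Finset.sum_le_sum fun k _ => add_sq_le_one_add_mul_sq hδ _ _

/-! ### Hardy's inequality -/

lemma integral_sq_mul_fderiv {E : Type*} [NormedAddCommGroup E] [NormedSpace ℝ E]
    [FiniteDimensional ℝ E] [MeasurableSpace E] [BorelSpace E] (μ : Measure E) [μ.IsAddHaarMeasure]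
    {h F : E → ℝ} (hh : ContDiff ℝ 1 h) (hc : HasCompactSupport h) (hF : ContDiff ℝ 1 F) (v : E) :
    ∫ x, h x ^ 2 * fderiv ℝ F x v ∂μ = -∫ x, 2 * h x * fderiv ℝ h x v * F x ∂μ := by
  have hmul (g : E → ℝ) (hg : Continuous g) : Integrable (fun x => h x * g x) μ :=
    (hh.continuous.mul hg).integrable_of_hasCompactSupport hc.mul_right
  have hsq (x : E) : fderiv ℝ (fun x => h x ^ 2) x v = 2 * h x * fderiv ℝ h x v := by
    rw [(HasFDerivAt.pow (hh.differentiable one_ne_zero x).hasFDerivAt 2).fderiv]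
    simp
  have hparts := integral_mul_fderiv_eq_neg_fderiv_mul_of_integrable (μ := μ)
    (f := fun x => h x ^ 2) (g := F) (v := v)
    ((hmul (fun x => 2 * fderiv ℝ h x v * F x) (by
        have := hh.continuous_fderiv one_ne_zero
        have := hF.continuous
        fun_prop)).congr
      (.of_forall fun x => by simp only [hsq]; ring))
    ((hmul (fun x => h x * fderiv ℝ F x v)
      (hh.continuous.mul ((hF.continuous_fderiv one_ne_zero).clm_apply continuous_const))).congr
      (.of_forall fun x => by simp only; ring))
    ((hmul (fun x => h x * F x) (hh.continuous.mul hF.continuous)).congr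
      (.of_forall fun x => by simp only; ring))
    (fun x _ => (hh.differentiable one_ne_zero x).pow 2)
    (fun x _ => hF.differentiable one_ne_zero x)
  simpa only [hsq] using hparts

/-- The vector field `x / (1 + |x|²)`, whose divergence dominates the regularised Hardy weight
`1 / (1 + |x|²)` in dimension at least three. -/
def hardyField (k : Fin d) (x : Vec d) : ℝ := x k / (1 + sqLen x)

lemma contDiff_hardyField {n : WithTop ℕ∞} (k : Fin d) : ContDiff ℝ n (hardyField k) :=
  ContDiff.div (by fun_prop) (contDiff_const.add contDiff_sqLen) fun x => (one_add_sqLen_pos x).ne'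

lemma fderiv_hardyField_single (k : Fin d) (x : Vec d) :
    fderiv ℝ (hardyField k) x (Pi.single k 1)
      = 1 / (1 + sqLen x) - 2 * x k ^ 2 / (1 + sqLen x) ^ 2 := by
  have hx := (one_add_sqLen_pos x).ne'
  have hcoord : HasFDerivAt (fun x : Vec d => x k)
      (ContinuousLinearMap.proj (R := ℝ) (φ := fun _ : Fin d => ℝ) k) x :=
    (ContinuousLinearMap.proj (R := ℝ) (φ := fun _ : Fin d => ℝ) k).hasFDerivAt
  have hinv : HasFDerivAt (fun x => (1 + sqLen x)⁻¹)
      (-((1 + sqLen x) ^ 2)⁻¹ • fderiv ℝ sqLen x) x :=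
    (hasDerivAt_inv hx).comp_hasFDerivAt x ((differentiableAt_sqLen x).hasFDerivAt.const_add 1)
  have hdiv : hardyField k = fun x => x k * (1 + sqLen x)⁻¹ := rfl
  rw [hdiv, (hcoord.fun_mul hinv).fderiv]
  simp only [add_apply, smul_apply, ContinuousLinearMap.proj_apply, Pi.single_eq_same,
    fderiv_sqLen_single, smul_eq_mul]
  field_simp
  ring

lemma sub_two_div_le_sum_fderiv_hardyField (x : Vec d) :
    ((d : ℝ) - 2) / (1 + sqLen x) ≤ ∑ k, fderiv ℝ (hardyField k) x (Pi.single k 1) := by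
  have hx := one_add_sqLen_pos x
  have hdiv : ∑ k, fderiv ℝ (hardyField k) x (Pi.single k 1)
      = d / (1 + sqLen x) - 2 * sqLen x / (1 + sqLen x) ^ 2 := by
    simp only [fderiv_hardyField_single, Finset.sum_sub_distrib, Finset.sum_const,
      Finset.card_univ, Fintype.card_fin, nsmul_eq_mul, mul_one_div, ← Finset.sum_div,
      ← Finset.mul_sum, sqLen]
  have hratio : 2 * sqLen x / (1 + sqLen x) ^ 2 ≤ 2 / (1 + sqLen x) := by
    rw [div_le_div_iff₀ (by positivity) hx]
    nlinarith
  rw [hdiv, sub_div]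
  linarith

lemma sum_hardyField_sq_le (x : Vec d) : ∑ k, hardyField k x ^ 2 ≤ 1 / (1 + sqLen x) := by
  have hx := one_add_sqLen_pos x
  have hsum : ∑ k, hardyField k x ^ 2 = sqLen x / (1 + sqLen x) ^ 2 := by
    simp only [hardyField, div_pow, ← Finset.sum_div, sqLen]
  rw [hsum, div_le_div_iff₀ (by positivity) hx]
  nlinarith

lemma mul_neg_sum_mul_hardyField_le (h : Vec d → ℝ) (α : ℝ) (x : Vec d) :
    α * -∑ k, 2 * h x * fderiv ℝ h x (Pi.single k 1) * hardyField k x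
      ≤ 2 * gradSq h x + α ^ 2 / 2 * (h x ^ 2 / (1 + sqLen x)) := by
  have hsq : h x ^ 2 * ∑ k, hardyField k x ^ 2 ≤ h x ^ 2 / (1 + sqLen x) := by
    rw [div_eq_mul_one_div (h x ^ 2)]
    exact mul_le_mul_of_nonneg_left (sum_hardyField_sq_le x) (sq_nonneg _)
  calc α * -∑ k, 2 * h x * fderiv ℝ h x (Pi.single k 1) * hardyField k x
      ≤ 2 * gradSq h x + α ^ 2 / 2 * (h x ^ 2 * ∑ k, hardyField k x ^ 2) := by
        rw [gradSq, ← Finset.sum_neg_distrib, Finset.mul_sum, Finset.mul_sum, Finset.mul_sum,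
          Finset.mul_sum, ← Finset.sum_add_distrib]
        refine Finset.sum_le_sum fun k _ => ?_
        nlinarith [sq_nonneg (2 * fderiv ℝ h x (Pi.single k 1) + α * h x * hardyField k x)]
    _ ≤ _ := by gcongr

section Hardy

variable {h : Vec d → ℝ} (hh : ContDiff ℝ 1 h) (hc : HasCompactSupport h)
include hh hc

lemma integrable_sq_div_one_add_sqLen : Integrable fun x => h x ^ 2 / (1 + sqLen x) := by
  have hw : Continuous fun x : Vec d => h x / (1 + sqLen x) :=
    hh.continuous.div (by fun_prop) fun x => (one_add_sqLen_pos x).ne'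
  refine ((hh.continuous.mul hw).integrable_of_hasCompactSupport hc.mul_right).congr
    (.of_forall fun x => ?_)
  simp only [Pi.mul_apply]
  ring

lemma integral_sq_mul_sum_fderiv_hardyField :
    ∫ x, h x ^ 2 * ∑ k, fderiv ℝ (hardyField k) x (Pi.single k 1)
      = ∫ x, -∑ k, 2 * h x * fderiv ℝ h x (Pi.single k 1) * hardyField k x := by
  have hmul (g : Vec d → ℝ) (hg : Continuous g) : Integrable (fun x => h x * g x) :=
    (hh.continuous.mul hg).integrable_of_hasCompactSupport hc.mul_right
  have hdiv (k : Fin d) : Integrable fun x =>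
      h x ^ 2 * fderiv ℝ (hardyField k) x (Pi.single k 1) :=
    (hmul (fun x => h x * fderiv ℝ (hardyField k) x (Pi.single k 1))
      (hh.continuous.mul (((contDiff_hardyField k).continuous_fderiv one_ne_zero).clm_apply
        continuous_const))).congr (.of_forall fun x => by simp only; ring)
  have hcross (k : Fin d) : Integrable fun x =>
      2 * h x * fderiv ℝ h x (Pi.single k 1) * hardyField k x :=
    (hmul (fun x => 2 * fderiv ℝ h x (Pi.single k 1) * hardyField k x) (by
      have := hh.continuous_fderiv one_ne_zero
      have := (contDiff_hardyField (n := 1) k).continuous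
      fun_prop)).congr (.of_forall fun x => by simp only; ring)
  simp only [Finset.mul_sum]
  rw [integral_finsetSum _ fun k _ => hdiv k, integral_neg,
    integral_finsetSum _ fun k _ => hcross k, ← Finset.sum_neg_distrib]
  simp only [integral_sq_mul_fderiv volume hh hc (contDiff_hardyField _)]

lemma integrable_sq_mul_sum_fderiv_hardyField :
    Integrable fun x => h x ^ 2 * ∑ k, fderiv ℝ (hardyField k) x (Pi.single k 1) := by
  have hcont : Continuous fun x => h x * ∑ k, fderiv ℝ (hardyField k) x (Pi.single k 1) :=
    hh.continuous.mul (continuous_finsetSum _ fun k _ =>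
      ((contDiff_hardyField k).continuous_fderiv one_ne_zero).clm_apply continuous_const)
  refine ((hh.continuous.mul hcont).integrable_of_hasCompactSupport hc.mul_right).congr
    (.of_forall fun x => ?_)
  simp only [Pi.mul_apply]
  ring

lemma integrable_sum_mul_hardyField :
    Integrable fun x => ∑ k, 2 * h x * fderiv ℝ h x (Pi.single k 1) * hardyField k x := by
  have hcont : Continuous fun x =>
      ∑ k, 2 * fderiv ℝ h x (Pi.single k 1) * hardyField k x := by
    have := hh.continuous_fderiv one_ne_zero
    have := fun k : Fin d => (contDiff_hardyField (n := 1) k).continuous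
    fun_prop
  refine ((hh.continuous.mul hcont).integrable_of_hasCompactSupport hc.mul_right).congr
    (.of_forall fun x => ?_)
  simp only [Pi.mul_apply, Finset.mul_sum]
  exact Finset.sum_congr rfl fun k _ => by ring

lemma hardy_inequality (hd : 2 ≤ d) :
    (((d : ℝ) - 2) / 2) ^ 2 * ∫ x, h x ^ 2 / (1 + sqLen x) ≤ ∫ x, gradSq h x := by
  set α : ℝ := (d : ℝ) - 2
  have hα : 0 ≤ α := sub_nonneg.2 (by exact_mod_cast hd)
  have hweight := integrable_sq_div_one_add_sqLen hh hc
  have hgrad := integrable_gradSq hh hc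
  have hquadratic : α ^ 2 * ∫ x, h x ^ 2 / (1 + sqLen x)
      ≤ 2 * (∫ x, gradSq h x) + α ^ 2 / 2 * ∫ x, h x ^ 2 / (1 + sqLen x) := calc
    α ^ 2 * ∫ x, h x ^ 2 / (1 + sqLen x)
      = α * ∫ x, α * (h x ^ 2 / (1 + sqLen x)) := by
        rw [integral_const_mul]; ring
    _ ≤ α * ∫ x, h x ^ 2 * ∑ k, fderiv ℝ (hardyField k) x (Pi.single k 1) := by
        refine mul_le_mul_of_nonneg_left (integral_mono (hweight.const_mul α)
          (integrable_sq_mul_sum_fderiv_hardyField hh hc) fun x => ?_) hα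
        refine le_trans (le_of_eq ?_) (mul_le_mul_of_nonneg_left
          (sub_two_div_le_sum_fderiv_hardyField x) (sq_nonneg (h x)))
        ring
    _ = ∫ x, α * -∑ k, 2 * h x * fderiv ℝ h x (Pi.single k 1) * hardyField k x := by
        rw [integral_sq_mul_sum_fderiv_hardyField hh hc, integral_const_mul]
    _ ≤ ∫ x, (2 * gradSq h x + α ^ 2 / 2 * (h x ^ 2 / (1 + sqLen x))) :=
        integral_mono ((integrable_sum_mul_hardyField hh hc).neg.const_mul α)
          ((hgrad.const_mul 2).add (hweight.const_mul _)) (mul_neg_sum_mul_hardyField_le h α)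
    _ = _ := by
        rw [integral_add (hgrad.const_mul 2) (hweight.const_mul _), integral_const_mul,
          integral_const_mul]
  linarith

lemma lintegral_hardy_inequality (hd : 3 ≤ d) :
    ∫⁻ x, ENNReal.ofReal (h x ^ 2 / (1 + sqLen x))
      ≤ ∫⁻ x, ENNReal.ofReal (((((d : ℝ) - 2) / 2) ^ 2)⁻¹ * gradSq h x) := by
  have hd' : (3 : ℝ) ≤ d := by exact_mod_cast hd
  have hpos : 0 < (((d : ℝ) - 2) / 2) ^ 2 := pow_pos (by linarith) 2
  rw [← ofReal_integral_eq_lintegral_ofReal (integrable_sq_div_one_add_sqLen hh hc)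
      (.of_forall fun x => by have := one_add_sqLen_pos x; positivity),
    ← ofReal_integral_eq_lintegral_ofReal ((integrable_gradSq hh hc).const_mul _)
      (.of_forall fun x => by have := gradSq_nonneg h x; positivity), integral_const_mul]
  exact ENNReal.ofReal_le_ofReal ((le_inv_mul_iff₀ hpos).2 (hardy_inequality hh hc (by lia)))

end Hardy

/-! ### Smooth radial cutoffs -/

lemma exists_abs_deriv_smoothTransition_le :
    ∃ M : ℝ, 0 < M ∧ ∀ t, |deriv smoothTransition t| ≤ M := by
  have hc : Continuous (deriv smoothTransition) :=
    (smoothTransition.contDiff (n := 1)).continuous_deriv le_rfl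
  obtain ⟨C, hC⟩ :=
    (isCompact_Icc (a := (0 : ℝ)) (b := 1)).exists_bound_of_continuousOn hc.continuousOn
  refine ⟨max C 1, by positivity, fun t => ?_⟩
  rcases lt_or_ge t 0 with h0 | h0
  · have : smoothTransition =ᶠ[nhds t] fun _ => 0 := by
      filter_upwards [Iio_mem_nhds h0] with s hs
      exact smoothTransition.zero_of_nonpos (le_of_lt hs)
    simp [this.deriv_eq]
  rcases lt_or_ge 1 t with h1 | h1
  · have : smoothTransition =ᶠ[nhds t] fun _ => 1 := by
      filter_upwards [Ioi_mem_nhds h1] with s hs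
      exact smoothTransition.one_of_one_le (le_of_lt hs)
    simp [this.deriv_eq]
  · exact (hC t ⟨h0, h1⟩).trans (le_max_left _ _)

/-- `χ` is a smooth cutoff between the squared radii `r` and `s`: it takes values in `[0, 1]`,
equals `1` where `|x|² ≤ r` and vanishes where `|x|² ≥ s`. -/
structure IsCutoff (χ : Vec d → ℝ) (r s : ℝ) : Prop where
  contDiff : ContDiff ℝ (⊤ : ℕ∞) χ
  nonneg : ∀ x, 0 ≤ χ x
  le_one : ∀ x, χ x ≤ 1
  eq_one : ∀ x, sqLen x ≤ r → χ x = 1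
  eq_zero : ∀ x, s ≤ sqLen x → χ x = 0

namespace IsCutoff

variable {χ : Vec d → ℝ} {r s : ℝ}

lemma contDiff_one (hχ : IsCutoff χ r s) : ContDiff ℝ 1 χ := hχ.contDiff.of_le (by simp)

lemma differentiableAt (hχ : IsCutoff χ r s) (x : Vec d) : DifferentiableAt ℝ χ x :=
  hχ.contDiff_one.differentiable one_ne_zero x

lemma sq_le_one (hχ : IsCutoff χ r s) (x : Vec d) : χ x ^ 2 ≤ 1 :=
  pow_le_one₀ (hχ.nonneg x) (hχ.le_one x)

lemma gradSq_eq_zero (hχ : IsCutoff χ r s) {x : Vec d} (hx : s < sqLen x) : gradSq χ x = 0 := by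
  refine gradSq_eq_zero_of_eventuallyEq (c := 0) ?_
  filter_upwards [(isOpen_lt continuous_const continuous_sqLen).mem_nhds hx] with y hy
  exact hχ.eq_zero y (le_of_lt hy)

lemma hasCompactSupport_mul (hχ : IsCutoff χ r s) (w : Vec d → ℝ) :
    HasCompactSupport fun x => χ x * w x := by
  refine HasCompactSupport.intro (isCompact_closedBall (0 : Vec d) √(max s 0)) fun x hx => ?_
  have hs : s ≤ sqLen x := by
    by_contra! h
    refine hx (mem_closedBall_zero_of_sqLen_le (sqrt_nonneg _) ?_)
    rw [sq_sqrt (le_max_right _ _)]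
    exact h.le.trans (le_max_left _ _)
  rw [hχ.eq_zero x hs, zero_mul]

end IsCutoff

/-- The radial function `1 - σ(φ(|x|²))` with `σ` Mathlib's smooth transition from `0` to `1`: it
cuts off between the region `φ ≤ 0` and the region `φ ≥ 1`. -/
def radialCutoff (φ : ℝ → ℝ) (x : Vec d) : ℝ := 1 - smoothTransition (φ (sqLen x))

lemma isCutoff_radialCutoff {φ : ℝ → ℝ} {r s : ℝ}
    (hφ : ContDiff ℝ (⊤ : ℕ∞) fun x : Vec d => φ (sqLen x))
    (hr : ∀ x : Vec d, sqLen x ≤ r → φ (sqLen x) ≤ 0)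
    (hs : ∀ x : Vec d, s ≤ sqLen x → 1 ≤ φ (sqLen x)) :
    IsCutoff (radialCutoff (d := d) φ) r s where
  contDiff := contDiff_const.sub (smoothTransition.contDiff.comp hφ)
  nonneg x := sub_nonneg.2 (smoothTransition.le_one _)
  le_one x := sub_le_self _ (smoothTransition.nonneg _)
  eq_one x hx := by simp [radialCutoff, smoothTransition.zero_of_nonpos (hr x hx)]
  eq_zero x hx := by simp [radialCutoff, smoothTransition.one_of_one_le (hs x hx)]

lemma gradSq_radialCutoff_le {M : ℝ} (hM : ∀ t, |deriv smoothTransition t| ≤ M) {φ : ℝ → ℝ}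
    {φ' : ℝ} {x : Vec d} (hφ : HasDerivAt φ φ' (sqLen x)) :
    gradSq (radialCutoff φ) x ≤ 4 * M ^ 2 * φ' ^ 2 * sqLen x := by
  have hσ := ((smoothTransition.contDiff (n := 1)).differentiable one_ne_zero
    (φ (sqLen x))).hasDerivAt
  have hgrad : gradSq (radialCutoff φ) x
      = (-(deriv smoothTransition (φ (sqLen x)) * φ')) ^ 2 * gradSq sqLen x :=
    gradSq_comp (g := fun s => 1 - smoothTransition (φ s)) ((hσ.comp _ hφ).const_sub 1)
      (differentiableAt_sqLen x)
  have hσM : deriv smoothTransition (φ (sqLen x)) ^ 2 ≤ M ^ 2 := by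
    rw [← sq_abs]
    exact pow_le_pow_left₀ (abs_nonneg _) (hM _) 2
  rw [hgrad, gradSq_sqLen]
  have := sqLen_nonneg x
  calc (-(deriv smoothTransition (φ (sqLen x)) * φ')) ^ 2 * (4 * sqLen x)
      = 4 * deriv smoothTransition (φ (sqLen x)) ^ 2 * φ' ^ 2 * sqLen x := by ring
    _ ≤ 4 * M ^ 2 * φ' ^ 2 * sqLen x := by gcongr

/- Rising only logarithmically in `|x|²` over a long range makes the gradient small relative to the
Hardy weight. -/
lemma exists_isCutoff_gradSq_le_div_one_add_sqLen {S δ : ℝ} (hS : 0 ≤ S) (hδ : 0 < δ) :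
    ∃ R₀ : ℝ, 0 < R₀ ∧ ∀ R ≥ R₀, ∃ χ : Vec d → ℝ, IsCutoff χ S (R ^ 2 / 4) ∧
      ∀ x, gradSq χ x ≤ δ / (1 + sqLen x) := by
  obtain ⟨M, hM, hMb⟩ := exists_abs_deriv_smoothTransition_le
  let D := 2 * M / √δ
  have hD : 0 < D := by positivity
  have hDδ : 4 * M ^ 2 / D ^ 2 = δ := by
    simp only [D, div_pow, mul_pow, sq_sqrt hδ.le]
    field_simp
    ring
  let R₀ := 2 * √((1 + S) * exp D)
  refine ⟨R₀, by positivity, fun R hR => ?_⟩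
  have hR2 : (1 + S) * exp D ≤ R ^ 2 / 4 := by
    have hR₀2 : R₀ ^ 2 = 4 * ((1 + S) * exp D) := by
      simp only [R₀, mul_pow]
      rw [sq_sqrt (by positivity)]
      ring
    linarith [pow_le_pow_left₀ (by positivity : 0 ≤ R₀) hR 2]
  let φ : ℝ → ℝ := fun s => (log (1 + s) - log (1 + S)) / D
  have hφsmooth : ContDiff ℝ (⊤ : ℕ∞) fun x : Vec d => φ (sqLen x) :=
    (((contDiff_const.add contDiff_sqLen).log fun x => (one_add_sqLen_pos x).ne').sub
      contDiff_const).div_const _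
  refine ⟨radialCutoff φ, isCutoff_radialCutoff hφsmooth (fun x hx => ?_) (fun x hx => ?_),
    fun x => ?_⟩
  · refine div_nonpos_of_nonpos_of_nonneg ?_ hD.le
    linarith [log_le_log (one_add_sqLen_pos x) (by linarith : 1 + sqLen x ≤ 1 + S)]
  · rw [le_div_iff₀ hD, one_mul, le_sub_iff_add_le, ← log_exp D,
      ← log_mul (exp_pos _).ne' (by positivity)]
    exact log_le_log (by positivity) (by rw [mul_comm]; linarith)
  · have hx := one_add_sqLen_pos x
    have hφ : HasDerivAt φ (1 / (1 + sqLen x) / D) (sqLen x) := by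
      simpa using ((((hasDerivAt_id (sqLen x)).const_add 1).log hx.ne').sub_const
        (log (1 + S))).div_const D
    calc gradSq (radialCutoff φ) x
        ≤ 4 * M ^ 2 * (1 / (1 + sqLen x) / D) ^ 2 * sqLen x := gradSq_radialCutoff_le hMb hφ
      _ = 4 * M ^ 2 / D ^ 2 / (1 + sqLen x) * (sqLen x / (1 + sqLen x)) := by field_simp
      _ ≤ 4 * M ^ 2 / D ^ 2 / (1 + sqLen x) :=
          mul_le_of_le_one_right (by positivity) ((div_le_one hx).2 (by linarith))
      _ = δ / (1 + sqLen x) := by rw [hDδ]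

variable (d) in
lemma exists_isCutoff_gradSq_le_div_sq : ∃ K : ℝ, 0 < K ∧ ∀ R : ℝ, 0 < R → ∃ η : Vec d → ℝ,
    IsCutoff η (R ^ 2 / 4) (R ^ 2) ∧ ∀ x, gradSq η x ≤ K / R ^ 2 := by
  obtain ⟨M, hM, hMb⟩ := exists_abs_deriv_smoothTransition_le
  refine ⟨64 / 9 * M ^ 2, by positivity, fun R hR => ?_⟩
  let φ : ℝ → ℝ := fun s => (4 * s / R ^ 2 - 1) / 3
  have hφ (s : ℝ) : HasDerivAt φ (4 / R ^ 2 / 3) s := by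
    simpa using ((((hasDerivAt_id s).const_mul 4).div_const (R ^ 2)).sub_const 1).div_const 3
  have hcut : IsCutoff (radialCutoff (d := d) φ) (R ^ 2 / 4) (R ^ 2) := by
    refine isCutoff_radialCutoff
      (((contDiff_const.mul contDiff_sqLen).div_const _).sub contDiff_const |>.div_const _)
      (fun x hx => ?_) (fun x hx => ?_)
    · have : 4 * sqLen x / R ^ 2 ≤ 1 := by rw [div_le_one (by positivity)]; linarith
      simp only [φ]; linarith
    · have : 4 ≤ 4 * sqLen x / R ^ 2 := by rw [le_div_iff₀ (by positivity)]; linarith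
      simp only [φ]; linarith
  refine ⟨radialCutoff φ, hcut, fun x => ?_⟩
  rcases lt_or_ge (R ^ 2) (sqLen x) with hx | hx
  · rw [hcut.gradSq_eq_zero hx]; positivity
  calc gradSq (radialCutoff φ) x
      ≤ 4 * M ^ 2 * (4 / R ^ 2 / 3) ^ 2 * sqLen x := gradSq_radialCutoff_le hMb (hφ _)
    _ ≤ 4 * M ^ 2 * (4 / R ^ 2 / 3) ^ 2 * R ^ 2 := by gcongr
    _ = 64 / 9 * M ^ 2 / R ^ 2 := by field_simp; ring

/-! ### The local scattering bound -/

lemma IsCutoff.gradSq_mul_le_indicator {η w : Vec d → ℝ} {r R K : ℝ} (hη : IsCutoff η r (R ^ 2))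
    (hR : 0 ≤ R) (hgrad : ∀ x, gradSq η x ≤ K) (hw : ContDiff ℝ 1 w) (x : Vec d) :
    gradSq (fun y => η y * w y) x ≤ (Metric.closedBall (0 : Vec d) R).indicator
      (fun y => 2 * gradSq w y + 2 * K * w y ^ 2) x := by
  have hmul := gradSq_mul_le (hη.differentiableAt x) (hw.differentiable one_ne_zero x) one_pos
  by_cases hx : x ∈ Metric.closedBall (0 : Vec d) R
  · rw [Set.indicator_of_mem hx]
    have hη2 : η x ^ 2 * gradSq w x ≤ gradSq w x :=
      mul_le_of_le_one_left (gradSq_nonneg w x) (hη.sq_le_one x)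
    have hηK : w x ^ 2 * gradSq η x ≤ w x ^ 2 * K := by gcongr; exact hgrad x
    norm_num at hmul
    linarith
  · rw [Set.indicator_of_notMem hx]
    have hx2 : R ^ 2 < sqLen x := by
      by_contra! h
      exact hx (mem_closedBall_zero_of_sqLen_le hR h)
    simpa [hη.eq_zero x hx2.le, hη.gradSq_eq_zero hx2] using hmul

variable (d) in
lemma exists_lintegral_sq_div_one_add_sqLen_le (hd : 3 ≤ d) : ∃ K : ℝ, 0 < K ∧
    ∀ R : ℝ, 0 < R → ∀ w : Vec d → ℝ, ContDiff ℝ 1 w →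
      ∫⁻ x in {x | sqLen x ≤ R ^ 2 / 4}, ENNReal.ofReal (w x ^ 2 / (1 + sqLen x))
        ≤ ∫⁻ x in Metric.closedBall (0 : Vec d) R,
            ENNReal.ofReal (K * gradSq w x + K / R ^ 2 * w x ^ 2) := by
  obtain ⟨K, hK, hcut⟩ := exists_isCutoff_gradSq_le_div_sq d
  set C : ℝ := (((d : ℝ) - 2) / 2) ^ 2
  have hC : 0 < C := by
    have : (3 : ℝ) ≤ d := by exact_mod_cast hd
    exact pow_pos (by linarith) 2
  set K' := C⁻¹ * (2 + 2 * K)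
  refine ⟨K', by positivity, fun R hR w hw => ?_⟩
  obtain ⟨η, hη, hηK⟩ := hcut R hR
  have hgrad (x : Vec d) : C⁻¹ * gradSq (fun y => η y * w y) x
      ≤ (Metric.closedBall (0 : Vec d) R).indicator
        (fun y => K' * gradSq w y + K' / R ^ 2 * w y ^ 2) x := by
    refine (mul_le_mul_of_nonneg_left (hη.gradSq_mul_le_indicator hR.le hηK hw x)
      (by positivity)).trans ?_
    rw [← Set.indicator_const_mul]
    refine Set.indicator_le_indicator ?_
    have hgradK : 0 ≤ C⁻¹ * (2 * K) * gradSq w x := by have := gradSq_nonneg w x; positivity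
    have hsq : 0 ≤ C⁻¹ * 2 / R ^ 2 * w x ^ 2 := by positivity
    linear_combination hgradK + hsq
  calc ∫⁻ x in {x | sqLen x ≤ R ^ 2 / 4}, ENNReal.ofReal (w x ^ 2 / (1 + sqLen x))
      ≤ ∫⁻ x in {x | sqLen x ≤ R ^ 2 / 4}, ENNReal.ofReal ((η x * w x) ^ 2 / (1 + sqLen x)) :=
        setLIntegral_mono' (measurableSet_le continuous_sqLen.measurable measurable_const)
          fun x hx => by rw [hη.eq_one x hx, one_mul]
    _ ≤ ∫⁻ x, ENNReal.ofReal ((η x * w x) ^ 2 / (1 + sqLen x)) := setLIntegral_le_lintegral _ _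
    _ ≤ ∫⁻ x, ENNReal.ofReal (C⁻¹ * gradSq (fun y => η y * w y) x) :=
        lintegral_hardy_inequality (hη.contDiff_one.mul hw) (hη.hasCompactSupport_mul w) hd
    _ ≤ ∫⁻ x in Metric.closedBall (0 : Vec d) R,
          ENNReal.ofReal (K' * gradSq w x + K' / R ^ 2 * w x ^ 2) := by
        rw [← lintegral_indicator Metric.isClosed_closedBall.measurableSet]
        refine lintegral_mono fun x => (ENNReal.ofReal_le_ofReal (hgrad x)).trans_eq ?_
        exact Set.indicator_comp_of_zero ENNReal.ofReal_zero ▸ rfl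

/-- The integrand of the scattering functional. -/
def scatDensity (V : Vec d → ℝ≥0∞) (f : Vec d → ℝ) (x : Vec d) : ℝ≥0∞ :=
  ENNReal.ofReal (gradSq f x) + V x * ENNReal.ofReal (f x ^ 2) / 2

lemma nnnorm_sq_eq_ofReal (r : ℝ) : (‖r‖₊ : ℝ≥0∞) ^ 2 = ENNReal.ofReal (r ^ 2) := by
  rw [← sq_abs, ENNReal.ofReal_pow (abs_nonneg r), ← Real.norm_eq_abs, ofReal_norm]
  rfl

lemma scatDensity_eq (V : Vec d → ℝ≥0∞) (f : Vec d → ℝ) (x : Vec d) :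
    scatDensity V f x = (∑ k, (‖fderiv ℝ f x (Pi.single k 1)‖₊ : ℝ≥0∞) ^ 2)
      + V x * (‖f x‖₊ : ℝ≥0∞) ^ 2 / 2 := by
  simp only [scatDensity, gradSq, nnnorm_sq_eq_ofReal,
    ENNReal.ofReal_sum_of_nonneg fun _ _ => sq_nonneg _]

lemma sInf_scatSet3_le {V : Vec 3 → ℝ≥0∞} {f : Vec 3 → ℝ} (hf : ContDiff ℝ (⊤ : ℕ∞) f)
    (hc : HasCompactSupport fun x => f x - 1) : sInf (scatSet3 V) ≤ ∫⁻ x, scatDensity V f x :=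
  sInf_le ⟨f, hf, hc, lintegral_congr fun x => scatDensity_eq V f x⟩

/- The trial function on the left equals `g / c` on the support of `V` and `1` far away. -/
lemma IsCutoff.ofReal_sq_mul_scatDensity_le {V : Vec d → ℝ≥0∞} {χ g : Vec d → ℝ} {S r κ δ c : ℝ}
    (hχ : IsCutoff χ S r) (hV : ∀ x, V x ≠ 0 → sqLen x ≤ S)
    (hgrad : ∀ x, gradSq χ x ≤ κ / (1 + sqLen x)) (hδ : 0 < δ) (hg : ContDiff ℝ 1 g) (hc : c ≠ 0)
    (x : Vec d) :
    ENNReal.ofReal (c ^ 2) * scatDensity V (fun y => 1 + c⁻¹ * (χ y * (g y - c))) x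
      ≤ {y | sqLen y ≤ r}.indicator (fun y =>
          ENNReal.ofReal ((1 + δ) * gradSq g y
            + (1 + 1 / δ) * (κ * ((g y - c) ^ 2 / (1 + sqLen y))))
          + V y * ENNReal.ofReal (g y ^ 2) / 2) x := by
  have hw : DifferentiableAt ℝ (fun y => g y - c) x :=
    (hg.differentiable one_ne_zero x).sub_const c
  have hmul := gradSq_mul_le (hχ.differentiableAt x) hw hδ
  rw [gradSq_sub_const] at hmul
  have hscale : ENNReal.ofReal (c ^ 2) * scatDensity V (fun y => 1 + c⁻¹ * (χ y * (g y - c))) x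
      = ENNReal.ofReal (gradSq (fun y => χ y * (g y - c)) x)
        + V x * ENNReal.ofReal ((c + χ x * (g x - c)) ^ 2) / 2 := by
    have hgradf : c ^ 2 * gradSq (fun y => 1 + c⁻¹ * (χ y * (g y - c))) x
        = gradSq (fun y => χ y * (g y - c)) x := by
      rw [gradSq_const_add_mul 1 c⁻¹ ((hχ.differentiableAt x).fun_mul hw)]
      field_simp
    have hval : c ^ 2 * (1 + c⁻¹ * (χ x * (g x - c))) ^ 2 = (c + χ x * (g x - c)) ^ 2 := by
      rw [← mul_pow]; congr 1; field_simp
    rw [scatDensity, mul_add, ← mul_div_assoc, mul_left_comm, ← ENNReal.ofReal_mul (sq_nonneg c),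
      ← ENNReal.ofReal_mul (sq_nonneg c), hgradf, hval]
  rw [hscale]
  by_cases hx : sqLen x ≤ r
  · rw [Set.indicator_of_mem (show x ∈ {y | sqLen y ≤ r} from hx)]
    refine add_le_add (ENNReal.ofReal_le_ofReal (hmul.trans ?_)) ?_
    · have hχg : χ x ^ 2 * gradSq g x ≤ gradSq g x :=
        mul_le_of_le_one_left (gradSq_nonneg g x) (hχ.sq_le_one x)
      have hχw : (g x - c) ^ 2 * gradSq χ x ≤ κ * ((g x - c) ^ 2 / (1 + sqLen x)) :=
        (mul_le_mul_of_nonneg_left (hgrad x) (sq_nonneg _)).trans_eq (by ring)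
      gcongr
    · rcases eq_or_ne (V x) 0 with h0 | h0
      · simp [h0]
      · rw [hχ.eq_one x (hV x h0), one_mul, add_sub_cancel]
  · have hχ0 := hχ.eq_zero x (not_le.1 hx).le
    have hV0 : V x = 0 := by
      by_contra h0
      exact zero_ne_one (hχ0.symm.trans (hχ.eq_one x (hV x h0)))
    rw [hχ0, hχ.gradSq_eq_zero (not_le.1 hx)] at hmul
    rw [ENNReal.ofReal_of_nonpos (by simpa using hmul), hV0]
    simp

lemma IsCutoff.ofReal_sq_mul_sInf_scatSet3_le {V : Vec 3 → ℝ≥0∞} {χ g : Vec 3 → ℝ}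
    {S r κ δ : ℝ} (hχ : IsCutoff χ S r) (hV : ∀ x, V x ≠ 0 → sqLen x ≤ S)
    (hgrad : ∀ x, gradSq χ x ≤ κ / (1 + sqLen x)) (hκ : 0 ≤ κ) (hδ : 0 < δ)
    (hg : ContDiff ℝ (⊤ : ℕ∞) g) (c : ℝ) :
    ENNReal.ofReal (c ^ 2) * sInf (scatSet3 V)
      ≤ (∫⁻ z in {x | sqLen x ≤ r},
          (ENNReal.ofReal ((1 + δ) * gradSq g z) + V z * ENNReal.ofReal (g z ^ 2) / 2))
        + ENNReal.ofReal ((1 + 1 / δ) * κ)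
          * ∫⁻ z in {x | sqLen x ≤ r}, ENNReal.ofReal ((g z - c) ^ 2 / (1 + sqLen z)) := by
  rcases eq_or_ne c 0 with rfl | hc
  · simp
  have hg1 : ContDiff ℝ 1 g := hg.of_le (by simp)
  have hweight : Measurable fun z : Vec 3 => (g z - c) ^ 2 / (1 + sqLen z) :=
    ((hg.continuous.measurable.sub_const c).pow_const 2).div
      (continuous_sqLen.measurable.const_add 1)
  let f : Vec 3 → ℝ := fun x => 1 + c⁻¹ * (χ x * (g x - c))
  have hf : ContDiff ℝ (⊤ : ℕ∞) f :=
    contDiff_const.add (contDiff_const.mul (hχ.contDiff.mul (hg.sub contDiff_const)))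
  have hfc : HasCompactSupport fun x => f x - 1 :=
    (hχ.hasCompactSupport_mul fun x => g x - c).mono fun x hx hx' => hx (by simp [f, hx'])
  calc ENNReal.ofReal (c ^ 2) * sInf (scatSet3 V)
      ≤ ∫⁻ x, ENNReal.ofReal (c ^ 2) * scatDensity V f x := by
        rw [lintegral_const_mul' _ _ ENNReal.ofReal_ne_top]
        gcongr
        exact sInf_scatSet3_le hf hfc
    _ ≤ ∫⁻ z in {x | sqLen x ≤ r},
          (ENNReal.ofReal ((1 + δ) * gradSq g z) + V z * ENNReal.ofReal (g z ^ 2) / 2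
            + ENNReal.ofReal ((1 + 1 / δ) * κ)
              * ENNReal.ofReal ((g z - c) ^ 2 / (1 + sqLen z))) := by
        rw [← lintegral_indicator (measurableSet_le continuous_sqLen.measurable measurable_const)]
        refine lintegral_mono fun x =>
          (hχ.ofReal_sq_mul_scatDensity_le hV hgrad hδ hg1 hc x).trans (le_of_eq ?_)
        congr 2 with z
        have := gradSq_nonneg g z
        have := one_add_sqLen_pos z
        rw [← mul_assoc, ENNReal.ofReal_add (by positivity) (by positivity),
          ENNReal.ofReal_mul (p := (1 + 1 / δ) * κ) (by positivity), add_right_comm]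
    _ = _ := by
        rw [lintegral_add_right _ (hweight.ennreal_ofReal.const_mul _),
          lintegral_const_mul' _ _ ENNReal.ofReal_ne_top]

lemma exists_ofReal_sq_mul_sInf_scatSet3_le {V : Vec 3 → ℝ≥0∞} (hV : HasCompactSupport V) {ε : ℝ}
    (hε : 0 < ε) :
    ∃ R₀ : ℝ, 0 < R₀ ∧ ∀ R ≥ R₀, ∀ g : Vec 3 → ℝ, ContDiff ℝ (⊤ : ℕ∞) g → ∀ c : ℝ,
      ENNReal.ofReal (c ^ 2) * sInf (scatSet3 V) ≤ ∫⁻ z in Metric.closedBall (0 : Vec 3) R,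
        (ENNReal.ofReal ((1 + ε) * gradSq g z + ε / R ^ 2 * (g z - c) ^ 2)
          + V z * ENNReal.ofReal (g z ^ 2) / 2) := by
  obtain ⟨K, hK, hKb⟩ := exists_lintegral_sq_div_one_add_sqLen_le 3 le_rfl
  obtain ⟨S, hS, hVS⟩ := exists_sqLen_le_of_hasCompactSupport hV
  set δ : ℝ := ε / 2 with hδε
  have hδ : 0 < δ := by positivity
  set κ : ℝ := δ / ((1 + 1 / δ) * K)
  have hκK : (1 + 1 / δ) * κ * K = δ := by simp only [κ]; field_simp
  have hκ : 0 ≤ (1 + 1 / δ) * κ := by positivity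
  obtain ⟨R₀, hR₀, hcut⟩ := exists_isCutoff_gradSq_le_div_one_add_sqLen hS (δ := κ) (by positivity)
  refine ⟨R₀, hR₀, fun R hR g hg c => ?_⟩
  have hRpos : 0 < R := hR₀.trans_le hR
  obtain ⟨χ, hχ, hχκ⟩ := hcut R hR
  have hg1 : ContDiff ℝ 1 g := hg.of_le (by simp)
  have hgrad := (continuous_gradSq hg1).measurable
  have hgm := hg.continuous.measurable
  have hsub : {x : Vec 3 | sqLen x ≤ R ^ 2 / 4} ⊆ Metric.closedBall 0 R := fun x hx =>
    mem_closedBall_zero_of_sqLen_le hRpos.le (le_trans hx (by linarith [sq_nonneg R]))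
  have hw := hKb R hRpos (fun x => g x - c) (hg1.sub contDiff_const)
  rw [gradSq_sub_const] at hw
  let near : Vec 3 → ℝ≥0∞ := fun z =>
    ENNReal.ofReal ((1 + δ) * gradSq g z) + V z * ENNReal.ofReal (g z ^ 2) / 2
  calc ENNReal.ofReal (c ^ 2) * sInf (scatSet3 V)
      ≤ (∫⁻ z in {x | sqLen x ≤ R ^ 2 / 4}, near z) + ENNReal.ofReal ((1 + 1 / δ) * κ)
          * ∫⁻ z in {x | sqLen x ≤ R ^ 2 / 4}, ENNReal.ofReal ((g z - c) ^ 2 / (1 + sqLen z)) :=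
        hχ.ofReal_sq_mul_sInf_scatSet3_le hVS hχκ (by positivity) hδ hg c
    _ ≤ (∫⁻ z in Metric.closedBall 0 R, near z) + ENNReal.ofReal ((1 + 1 / δ) * κ)
          * ∫⁻ z in Metric.closedBall 0 R,
            ENNReal.ofReal (K * gradSq g z + K / R ^ 2 * (g z - c) ^ 2) := by gcongr
    _ = ∫⁻ z in Metric.closedBall 0 R, (near z
          + ENNReal.ofReal (δ * gradSq g z + δ / R ^ 2 * (g z - c) ^ 2)) := by
        rw [← lintegral_const_mul' _ _ ENNReal.ofReal_ne_top, ← lintegral_add_right _ (by fun_prop)]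
        refine lintegral_congr fun z => ?_
        rw [← ENNReal.ofReal_mul hκ]
        congr 2
        linear_combination (gradSq g z + (g z - c) ^ 2 / R ^ 2) * hκK
    _ ≤ _ := by
        refine lintegral_mono fun z => ?_
        have := gradSq_nonneg g z
        rw [add_right_comm, ← ENNReal.ofReal_add (by positivity) (by positivity), ← add_assoc]
        gcongr
        · exact le_of_eq (by rw [hδε]; ring)
        · linarith

/-- The local scattering bound with constant `A`, relative error `ε` and radius `R`: a particle
moving in the ball of radius `R` around a fixed particle at `y` has energy at least `A c²`, up to
the deviation of its wave function `g` from the constant `c`. -/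
def HasLocalScatteringBound (V : Vec d → ℝ≥0∞) (A ε R : ℝ) : Prop :=
  ∀ g : Vec d → ℝ, ContDiff ℝ (⊤ : ℕ∞) g → ∀ (c : ℝ) (y : Vec d),
    ENNReal.ofReal (A * c ^ 2) ≤ ∫⁻ z in Metric.closedBall y R,
      (ENNReal.ofReal ((1 + ε) * gradSq g z + ε / R ^ 2 * (g z - c) ^ 2)
        + V (z - y) * ENNReal.ofReal (g z ^ 2) / 2)

lemma exists_hasLocalScatteringBound {V : Vec 3 → ℝ≥0∞} (hV : HasCompactSupport V) {A : ℝ}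
    (hA : 0 ≤ A) (hAV : ENNReal.ofReal A ≤ sInf (scatSet3 V)) {ε : ℝ} (hε : 0 < ε) :
    ∃ R₀ : ℝ, 0 < R₀ ∧ ∀ R ≥ R₀, HasLocalScatteringBound V A ε R := by
  obtain ⟨R₀, hR₀, h⟩ := exists_ofReal_sq_mul_sInf_scatSet3_le hV hε
  refine ⟨R₀, hR₀, fun R hR g hg c y => ?_⟩
  have hle : ENNReal.ofReal (A * c ^ 2) ≤ ENNReal.ofReal (c ^ 2) * sInf (scatSet3 V) := by
    rw [ENNReal.ofReal_mul hA, mul_comm]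
    gcongr
  refine (hle.trans (h R hR (fun x => g (y + x))
    (hg.comp (contDiff_const.add contDiff_id)) c)).trans (le_of_eq ?_)
  have hball (y : Vec 3) : MeasurableSet (Metric.closedBall y R) :=
    Metric.isClosed_closedBall.measurableSet
  rw [← lintegral_indicator (hball _), ← lintegral_indicator (hball _)]
  refine Eq.trans (lintegral_congr fun z => ?_) (lintegral_add_left_eq_self _ y)
  have hmem : y + z ∈ Metric.closedBall y R ↔ z ∈ Metric.closedBall (0 : Vec 3) R := by simp
  by_cases hz : z ∈ Metric.closedBall (0 : Vec 3) R
  · rw [Set.indicator_of_mem hz, Set.indicator_of_mem (hmem.2 hz)]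
    simp only [gradSq, fderiv_comp_add_left, add_sub_cancel_left]
  · rw [Set.indicator_of_notMem hz, Set.indicator_of_notMem (mt hmem.1 hz)]

/-! ### A Poincaré inequality on convex sets -/

lemma lintegral_lintegral_update {ι : Type*} [Fintype ι] [DecidableEq ι] {X : ι → Type*}
    [∀ i, MeasurableSpace (X i)] (μ : ∀ i, Measure (X i)) [∀ i, SigmaFinite (μ i)] (i : ι)
    {g : (∀ i, X i) → ℝ≥0∞} (hg : Measurable g) :
    ∫⁻ x, ∫⁻ z, g (Function.update x i z) ∂μ i ∂Measure.pi μ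
      = (∫⁻ x, g x ∂Measure.pi μ) * μ i Set.univ := by
  rcases isEmpty_or_nonempty (∀ i, X i) with h | ⟨⟨x⟩⟩
  · simp [Measure.eq_zero_of_isEmpty (Measure.pi μ)]
  let F := ∫⋯∫⁻_{i}, g ∂μ
  have hF : (fun x => ∫⁻ z, g (Function.update x i z) ∂μ i) = F :=
    (lmarginal_singleton (μ := μ) g i).symm
  have hFF : (fun x => ∫⁻ z, F (Function.update x i z) ∂μ i) = fun x => μ i Set.univ * F x := by
    funext x
    have hconst (z : X i) : F (Function.update x i z) = F x :=
      lmarginal_update_of_mem μ (Finset.mem_singleton_self i) g x z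
    simp [hconst, mul_comm]
  have hFm : Measurable F := hg.lmarginal μ
  calc ∫⁻ x, ∫⁻ z, g (Function.update x i z) ∂μ i ∂Measure.pi μ
      = ∫⁻ x, F x ∂Measure.pi μ := by rw [← hF]
    _ = (∫⋯∫⁻_Finset.univ.erase i, fun x => μ i Set.univ * F x ∂μ) x := by
        rw [lintegral_eq_lmarginal_univ x, lmarginal_erase' _ hFm (Finset.mem_univ i), hFF]
    _ = μ i Set.univ * (∫⋯∫⁻_Finset.univ.erase i, F ∂μ) x :=
        lintegral_const_mul _ (hFm.comp measurable_updateFinset)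
    _ = (∫⁻ x, g x ∂Measure.pi μ) * μ i Set.univ := by
        rw [lintegral_eq_lmarginal_univ (f := g) x, lmarginal_erase' _ hg (Finset.mem_univ i), hF,
          mul_comm]

section Poincare

variable {E : Type*} [NormedAddCommGroup E] [NormedSpace ℝ E]

lemma hasDerivAt_comp_segment {φ : E → ℝ} (hφ : Differentiable ℝ φ) (x y : E) (t : ℝ) :
    HasDerivAt (fun t : ℝ => φ ((1 - t) • y + t • x))
      (fderiv ℝ φ ((1 - t) • y + t • x) (x - y)) t := by
  have hseg : HasDerivAt (fun t : ℝ => (1 - t) • y + t • x) (x - y) t := by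
    refine ((((hasDerivAt_id t).const_sub 1).smul_const y).add
      ((hasDerivAt_id t).smul_const x)).congr_deriv ?_
    rw [neg_one_smul, one_smul, neg_add_eq_sub]
  exact (hφ _).hasFDerivAt.comp_hasDerivAt t hseg

lemma sq_intervalIntegral_le {h : ℝ → ℝ} (hh : Continuous h) :
    (∫ t in (0 : ℝ)..1, h t) ^ 2 ≤ ∫ t in (0 : ℝ)..1, h t ^ 2 := by
  set m := ∫ t in (0 : ℝ)..1, h t
  have hvar : 0 ≤ ∫ t in (0 : ℝ)..1, (h t - m) ^ 2 :=
    intervalIntegral.integral_nonneg zero_le_one fun t _ => sq_nonneg _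
  have hexpand : ∫ t in (0 : ℝ)..1, (h t - m) ^ 2
      = (∫ t in (0 : ℝ)..1, h t ^ 2) - 2 * m * m + m ^ 2 := by
    simp only [show ∀ t, (h t - m) ^ 2 = h t ^ 2 - 2 * m * h t + m ^ 2 from fun t => by ring]
    rw [intervalIntegral.integral_add, intervalIntegral.integral_sub,
      intervalIntegral.integral_const_mul]
    · simp [m]
    all_goals exact Continuous.intervalIntegrable (by fun_prop) _ _
  rw [hexpand] at hvar
  linarith [sq m]

lemma sq_sub_le_lintegral_segment {φ : E → ℝ} (hφ : ContDiff ℝ 1 φ) {G : E → ℝ≥0∞} {x y : E}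
    (hG : ∀ z, ENNReal.ofReal (fderiv ℝ φ z (x - y) ^ 2) ≤ G z) :
    ENNReal.ofReal ((φ x - φ y) ^ 2) ≤ ∫⁻ t in Set.Icc (0 : ℝ) 1, G ((1 - t) • y + t • x) := by
  let h : ℝ → ℝ := fun t => fderiv ℝ φ ((1 - t) • y + t • x) (x - y)
  have hcont : Continuous h :=
    ((hφ.continuous_fderiv one_ne_zero).comp (by fun_prop)).clm_apply continuous_const
  have hftc : ∫ t in (0 : ℝ)..1, h t = φ x - φ y := by
    rw [intervalIntegral.integral_eq_sub_of_hasDerivAt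
      (fun t _ => hasDerivAt_comp_segment (hφ.differentiable one_ne_zero) x y t)
      (hcont.intervalIntegrable _ _)]
    simp
  have hsq := sq_intervalIntegral_le hcont
  rw [hftc, intervalIntegral.integral_of_le zero_le_one, ← integral_Icc_eq_integral_Ioc] at hsq
  refine (ENNReal.ofReal_le_ofReal hsq).trans ?_
  rw [ofReal_integral_eq_lintegral_ofReal (f := fun t => h t ^ 2)
    (Continuous.integrableOn_Icc (by fun_prop)) (.of_forall fun t => sq_nonneg _)]
  exact lintegral_mono fun t => hG _

variable [FiniteDimensional ℝ E] [MeasurableSpace E] [BorelSpace E]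

section AddHaar

variable (μ : Measure E) [μ.IsAddHaarMeasure]

lemma lintegral_comp_affine_le {H : E → ℝ≥0∞} (hH : Measurable H) (c : E) {s : ℝ}
    (hs : 1 / 2 ≤ s) :
    ∫⁻ x, H (c + s • x) ∂μ ≤ 2 ^ Module.finrank ℝ E * ∫⁻ x, H x ∂μ := by
  have hs0 : 0 < s := by linarith
  have hscale : ∫⁻ x, H (c + s • x) ∂μ = ∫⁻ x, H (c + x) ∂(Measure.map (s • ·) μ) := by
    rw [lintegral_map (by fun_prop) (by fun_prop)]
  have hjac : ENNReal.ofReal |(s ^ Module.finrank ℝ E)⁻¹| ≤ 2 ^ Module.finrank ℝ E := by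
    have hinv : s⁻¹ ≤ 2 := by
      rw [inv_le_comm₀ hs0 two_pos]; linarith
    calc ENNReal.ofReal |(s ^ Module.finrank ℝ E)⁻¹|
        ≤ ENNReal.ofReal (2 ^ Module.finrank ℝ E) := by
          rw [abs_of_pos (by positivity), ← inv_pow]
          gcongr
      _ = 2 ^ Module.finrank ℝ E := by
          rw [ENNReal.ofReal_pow zero_le_two, ENNReal.ofReal_ofNat]
  rw [hscale, Measure.map_addHaar_smul μ hs0.ne', lintegral_smul_measure,
    lintegral_add_left_eq_self, smul_eq_mul]
  gcongr

lemma setLIntegral_comp_affine_le {S : Set E} (hS : Convex ℝ S) (hSm : MeasurableSet S)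
    {G : E → ℝ≥0∞} (hG : Measurable G) {y : E} (hy : y ∈ S) {s : ℝ} (hs : 1 / 2 ≤ s)
    (hs1 : s ≤ 1) :
    ∫⁻ x in S, G ((1 - s) • y + s • x) ∂μ ≤ 2 ^ Module.finrank ℝ E * ∫⁻ x in S, G x ∂μ := by
  rw [← lintegral_indicator hSm, ← lintegral_indicator hSm]
  refine le_trans (lintegral_mono fun x => ?_)
    (lintegral_comp_affine_le μ (hG.indicator hSm) ((1 - s) • y) hs)
  by_cases hx : x ∈ S
  · have : (1 - s) • y + s • x ∈ S := hS hy hx (by linarith) (by linarith) (by ring)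
    simp [hx, this]
  · simp [hx]

/- The map is affine in `x` and in `y`; at least one of the two has a factor `≥ 1 / 2`. -/
lemma lintegral_lintegral_segment_le {S : Set E} (hS : Convex ℝ S) (hSm : MeasurableSet S)
    (htop : μ S ≠ ⊤) {G : E → ℝ≥0∞} (hG : Measurable G) {t : ℝ} (ht : t ∈ Set.Icc (0 : ℝ) 1) :
    ∫⁻ y in S, ∫⁻ x in S, G ((1 - t) • y + t • x) ∂μ ∂μ
      ≤ 2 ^ Module.finrank ℝ E * (∫⁻ x in S, G x ∂μ) * μ S := by
  have : IsFiniteMeasure (μ.restrict S) := ⟨by simpa using htop.lt_top⟩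
  have hhalf {t : ℝ} (ht : 1 / 2 ≤ t) (ht1 : t ≤ 1) :
      ∫⁻ y in S, ∫⁻ x in S, G ((1 - t) • y + t • x) ∂μ ∂μ
        ≤ 2 ^ Module.finrank ℝ E * (∫⁻ x in S, G x ∂μ) * μ S := by
    rw [← setLIntegral_const]
    exact setLIntegral_mono' hSm fun y hy => setLIntegral_comp_affine_le μ hS hSm hG hy ht ht1
  rcases le_total (1 / 2) t with h | h
  · exact hhalf h ht.2
  · have hGt : Measurable fun p : E × E => G ((1 - t) • p.1 + t • p.2) := hG.comp (by fun_prop)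
    rw [lintegral_lintegral_swap hGt.aemeasurable]
    simpa only [sub_sub_cancel, add_comm] using
      hhalf (t := 1 - t) (by linarith) (by linarith [ht.1])

lemma exists_const_setLIntegral_sq_sub_le {S : Set E} (hS : Convex ℝ S) (hSm : MeasurableSet S)
    (h0 : μ S ≠ 0) (htop : μ S ≠ ⊤) {φ : E → ℝ} (hφ : ContDiff ℝ 1 φ) {G : E → ℝ≥0∞}
    (hGm : Measurable G)
    (hG : ∀ x ∈ S, ∀ y ∈ S, ∀ z, ENNReal.ofReal (fderiv ℝ φ z (x - y) ^ 2) ≤ G z) :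
    ∃ c : ℝ, ∫⁻ x in S, ENNReal.ofReal ((φ x - c) ^ 2) ∂μ
      ≤ 2 ^ Module.finrank ℝ E * ∫⁻ x in S, G x ∂μ := by
  have : IsFiniteMeasure (μ.restrict S) := ⟨by simpa using htop.lt_top⟩
  set B := 2 ^ Module.finrank ℝ E * ∫⁻ x in S, G x ∂μ
  have hmeas : Measurable fun p : E × E => ENNReal.ofReal ((φ p.2 - φ p.1) ^ 2) := by
    have := hφ.continuous.measurable
    fun_prop
  have hdouble : ∫⁻ y in S, ∫⁻ x in S, ENNReal.ofReal ((φ x - φ y) ^ 2) ∂μ ∂μ ≤ B * μ S := calc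
    _ ≤ ∫⁻ y in S, ∫⁻ x in S, (∫⁻ t in Set.Icc (0 : ℝ) 1, G ((1 - t) • y + t • x)) ∂μ ∂μ :=
        setLIntegral_mono' hSm fun y hy => setLIntegral_mono' hSm fun x hx =>
          sq_sub_le_lintegral_segment hφ (hG x hx y hy)
    _ = ∫⁻ y in S, (∫⁻ t in Set.Icc (0 : ℝ) 1, ∫⁻ x in S, G ((1 - t) • y + t • x) ∂μ) ∂μ :=
        lintegral_congr fun y => lintegral_lintegral_swap (hGm.comp (by fun_prop)).aemeasurable
    _ = ∫⁻ t in Set.Icc (0 : ℝ) 1, ∫⁻ y in S, ∫⁻ x in S, G ((1 - t) • y + t • x) ∂μ ∂μ :=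
        lintegral_lintegral_swap (Measurable.lintegral_prod_right'
          (f := fun q : (E × ℝ) × E => G ((1 - q.1.2) • q.1.1 + q.1.2 • q.2))
          (hGm.comp (by fun_prop))).aemeasurable
    _ ≤ ∫⁻ _ in Set.Icc (0 : ℝ) 1, B * μ S := setLIntegral_mono' measurableSet_Icc fun _ ht =>
        lintegral_lintegral_segment_le μ hS hSm htop hGm ht
    _ = B * μ S := by simp
  have hinner : Measurable fun y => ∫⁻ x in S, ENNReal.ofReal ((φ x - φ y) ^ 2) ∂μ :=
    hmeas.lintegral_prod_right
  obtain ⟨y, hy⟩ := exists_le_laverage (Measure.restrict_eq_zero.not.2 h0) hinner.aemeasurable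
  refine ⟨φ y, hy.trans ?_⟩
  rw [laverage_eq, Measure.restrict_apply_univ]
  exact ENNReal.div_le_of_le_mul hdouble

end AddHaar

end Poincare

/-! ### Cells -/

/-- The half-open cube with lower corner `b` and side `ℓ`. Half-open cubes tile the space exactly,
so that no null sets have to be removed when the torus is cut into cells. -/
def cell (b : Vec d) (ℓ : ℝ) : Set (Vec d) := Set.pi Set.univ fun k => Set.Ico (b k) (b k + ℓ)

lemma mem_cell {b : Vec d} {ℓ : ℝ} {z : Vec d} :
    z ∈ cell b ℓ ↔ ∀ k, b k ≤ z k ∧ z k < b k + ℓ := by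
  simp [cell, Set.mem_pi]

lemma measurableSet_cell (b : Vec d) (ℓ : ℝ) : MeasurableSet (cell b ℓ) :=
  MeasurableSet.univ_pi fun _ => measurableSet_Ico

lemma volume_cell (b : Vec d) (ℓ : ℝ) : volume (cell b ℓ) = ENNReal.ofReal ℓ ^ d := by
  simp [cell, volume_pi_pi]

lemma convex_cell (b : Vec d) (ℓ : ℝ) : Convex ℝ (cell b ℓ) :=
  convex_pi fun _ _ => convex_Ico _ _

instance isFiniteMeasure_restrict_cell (b : Vec d) (ℓ : ℝ) :
    IsFiniteMeasure ((volume : Measure (Vec d)).restrict (cell b ℓ)) :=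
  ⟨by rw [Measure.restrict_apply_univ, volume_cell]; finiteness⟩

lemma closedBall_subset_cell {b : Vec d} {ℓ R : ℝ} {y : Vec d}
    (hy : y ∈ cell (fun k => b k + R) (ℓ - 2 * R)) : Metric.closedBall y R ⊆ cell b ℓ := by
  intro z hz
  rw [mem_cell] at hy ⊢
  intro k
  have hzy : |z k - y k| ≤ R := by
    rw [← Real.dist_eq]
    exact (dist_le_pi_dist z y k).trans (Metric.mem_closedBall.1 hz)
  rw [abs_le] at hzy
  constructor <;> linarith [hy k]

/-- Lebesgue measure on the configurations in which each particle `i` lies in the cell of side `ℓ`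
with corner `b i`. -/
abbrev cellsMeasure {ι : Type*} [Fintype ι] (b : ι → Vec d) (ℓ : ℝ) : Measure (ι → Vec d) :=
  Measure.pi fun i => volume.restrict (cell (b i) ℓ)

lemma cellsMeasure_eq_restrict {ι : Type*} [Fintype ι] (b : ι → Vec d) (ℓ : ℝ) :
    cellsMeasure b ℓ = volume.restrict (Set.pi Set.univ fun i => cell (b i) ℓ) := by
  rw [cellsMeasure, ← Measure.restrict_pi_pi, ← volume_pi]

lemma cellsMeasure_univ {ι : Type*} [Fintype ι] (b : ι → Vec d) (ℓ : ℝ) :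
    cellsMeasure b ℓ Set.univ = (ENNReal.ofReal ℓ ^ d) ^ Fintype.card ι := by
  simp [Measure.pi_univ, volume_cell]

/-! ### Isolated particles -/

lemma lintegral_pi_mul_le_of_forall_update {ι : Type*} [Fintype ι] [DecidableEq ι] {X : ι → Type*}
    [∀ i, MeasurableSpace (X i)] (μ : ∀ i, Measure (X i)) [∀ i, IsFiniteMeasure (μ i)] (i : ι)
    {K W : (∀ i, X i) → ℝ≥0∞} (hK : Measurable K) (hW : Measurable W)
    (hWi : ∀ x z, W (Function.update x i z) = W x) {c : ℝ≥0∞}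
    (hc : ∀ x, ∫⁻ z, K (Function.update x i z) ∂μ i ≤ c * μ i Set.univ) :
    ∫⁻ x, K x * W x ∂Measure.pi μ ≤ c * ∫⁻ x, W x ∂Measure.pi μ := by
  rcases eq_or_ne (μ i Set.univ) 0 with h0 | h0
  · have hpi : Measure.pi μ = 0 := by
      rw [← Measure.measure_univ_eq_zero, Measure.pi_univ]
      exact Finset.prod_eq_zero (Finset.mem_univ i) h0
    simp [hpi]
  rw [← ENNReal.mul_le_mul_iff_left h0 (measure_ne_top (μ i) _),
    ← lintegral_lintegral_update μ i (g := fun x => K x * W x) (hK.mul hW), mul_right_comm,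
    ← lintegral_const_mul _ hW]
  refine lintegral_mono fun x => ?_
  have hKi : Measurable fun z => K (Function.update x i z) := hK.comp (measurable_update x)
  simp_rw [hWi]
  rw [lintegral_mul_const _ hKi]
  gcongr
  exact hc x

lemma measure_pi_le_of_forall_update {ι : Type*} [Fintype ι] [DecidableEq ι] {X : ι → Type*}
    [∀ i, MeasurableSpace (X i)] (μ : ∀ i, Measure (X i)) [∀ i, IsFiniteMeasure (μ i)] (i : ι)
    {S : Set (∀ i, X i)} (hS : MeasurableSet S) {β : ℝ≥0∞}
    (h : ∀ x, μ i {z | Function.update x i z ∈ S} ≤ β * μ i Set.univ) :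
    Measure.pi μ S ≤ β * Measure.pi μ Set.univ := by
  have hmul := lintegral_pi_mul_le_of_forall_update μ i (K := S.indicator 1) (W := 1) (c := β)
    (measurable_one.indicator hS) measurable_one (fun _ _ => rfl) fun x => by
      refine (lintegral_indicator_one (measurable_update x hS)).trans_le (h x)
  simpa [lintegral_indicator_one hS] using hmul

/-- Configurations in which particle `j` is at distance `R` from the boundary of the cell and at
distance more than `2 * R` from every particle other than `i`. Then `i` can be moved freely through
the ball of radius `R` around `j`, and no other particle is within `R` of `i` while it does so. -/
def isolatedSet {ι : Type*} (b : Vec d) (ℓ R : ℝ) (i j : ι) : Set (ι → Vec d) :=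
  {x | x j ∈ cell (fun k => b k + R) (ℓ - 2 * R) ∧ ∀ k, k ≠ i → k ≠ j → 2 * R < dist (x j) (x k)}

/-- Configurations in which `j` is isolated and `i` lies within `R` of `j`. -/
def isolatedPairSet {ι : Type*} (b : Vec d) (ℓ R : ℝ) (i j : ι) : Set (ι → Vec d) :=
  isolatedSet b ℓ R i j ∩ {x | dist (x i) (x j) ≤ R}

section Isolated

variable {ι : Type*}

lemma measurableSet_isolatedSet [Countable ι] (b : Vec d) (ℓ R : ℝ) (i j : ι) :
    MeasurableSet (isolatedSet b ℓ R i j) := by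
  have hinter : isolatedSet b ℓ R i j
      = (fun x : ι → Vec d => x j) ⁻¹' cell (fun k => b k + R) (ℓ - 2 * R)
        ∩ ⋂ k, ⋂ (_ : k ≠ i), ⋂ (_ : k ≠ j), {x | 2 * R < dist (x j) (x k)} := by
    ext x; simp [isolatedSet]
  rw [hinter]
  exact ((measurableSet_cell _ _).preimage (measurable_pi_apply j)).inter <|
    .iInter fun k => .iInter fun _ => .iInter fun _ =>
      measurableSet_lt measurable_const (by fun_prop)

lemma measurableSet_isolatedPairSet [Countable ι] (b : Vec d) (ℓ R : ℝ) (i j : ι) :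
    MeasurableSet (isolatedPairSet b ℓ R i j) :=
  (measurableSet_isolatedSet b ℓ R i j).inter (measurableSet_le (by fun_prop) measurable_const)

lemma volume_restrict_cell_compl_shrunk_le (b : Vec d) {ℓ κ : ℝ} (hℓ : 0 ≤ ℓ) (hκ : 0 ≤ κ) :
    volume.restrict (cell b ℓ) (cell (fun k => b k + κ * ℓ) (ℓ - 2 * (κ * ℓ)))ᶜ
      ≤ ENNReal.ofReal (2 * d * κ) * volume.restrict (cell b ℓ) Set.univ := by
  have hsub : cell (fun k => b k + κ * ℓ) (ℓ - 2 * (κ * ℓ)) ⊆ cell b ℓ := by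
    intro z hz
    rw [mem_cell] at hz ⊢
    intro k
    have : 0 ≤ κ * ℓ := by positivity
    constructor <;> linarith [hz k]
  have hbernoulli : 1 ≤ ENNReal.ofReal (2 * d * κ) + ENNReal.ofReal (1 - 2 * κ) ^ d := by
    set m := max (1 - 2 * κ) 0
    have hm : 1 + d * (m - 1) ≤ m ^ d := by
      simpa using one_add_mul_le_pow (a := m - 1) (by linarith [le_max_right (1 - 2 * κ) 0]) d
    have hmκ : d * (1 - 2 * κ) ≤ d * m := by gcongr; exact le_max_left _ _
    rw [show ENNReal.ofReal (1 - 2 * κ) = ENNReal.ofReal m by simp [m, ENNReal.ofReal_max],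
      ← ENNReal.ofReal_pow (le_max_right _ _),
      ← ENNReal.ofReal_add (by positivity) (by positivity), ENNReal.one_le_ofReal]
    linarith
  rw [measure_compl (measurableSet_cell _ _) (measure_ne_top _ _), Measure.restrict_apply_univ,
    Measure.restrict_apply (measurableSet_cell _ _), Set.inter_eq_left.2 hsub, volume_cell,
    volume_cell, tsub_le_iff_right, show ℓ - 2 * (κ * ℓ) = (1 - 2 * κ) * ℓ by ring,
    ENNReal.ofReal_mul' hℓ, mul_pow, ← add_mul]
  exact le_mul_of_one_le_left zero_le hbernoulli

variable [Fintype ι]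

lemma cellsMeasure_apply_notMem_shrunk_le (b : ι → Vec d) {ℓ κ : ℝ} (hℓ : 0 ≤ ℓ) (hκ : 0 ≤ κ)
    (j : ι) :
    cellsMeasure b ℓ {x | x j ∉ cell (fun k => b j k + κ * ℓ) (ℓ - 2 * (κ * ℓ))}
      ≤ ENNReal.ofReal (2 * d * κ) * cellsMeasure b ℓ Set.univ := by
  classical
  refine measure_pi_le_of_forall_update _ j
    ((measurableSet_cell _ _).compl.preimage (measurable_pi_apply j)) fun x => ?_
  have hset : {z | Function.update x j z ∈
      (fun x : ι → Vec d => x j) ⁻¹' (cell (fun k => b j k + κ * ℓ) (ℓ - 2 * (κ * ℓ)))ᶜ}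
      = (cell (fun k => b j k + κ * ℓ) (ℓ - 2 * (κ * ℓ)))ᶜ := by
    ext z
    simp
  rw [hset]
  exact volume_restrict_cell_compl_shrunk_le (b j) hℓ hκ

lemma cellsMeasure_dist_le_le (hd : d ≠ 0) (b : ι → Vec d) {ℓ κ : ℝ} (hℓ : 0 ≤ ℓ) (hκ : 0 ≤ κ)
    (hκ1 : κ ≤ 1) {j k : ι} (hkj : k ≠ j) :
    cellsMeasure b ℓ {x | dist (x j) (x k) ≤ 2 * (κ * ℓ)}
      ≤ ENNReal.ofReal (4 ^ d * κ) * cellsMeasure b ℓ Set.univ := by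
  classical
  refine measure_pi_le_of_forall_update _ k
    (measurableSet_le (by fun_prop) measurable_const) fun x => ?_
  have hball : {z | Function.update x k z ∈ {x : ι → Vec d | dist (x j) (x k) ≤ 2 * (κ * ℓ)}}
      = Metric.closedBall (x j) (2 * (κ * ℓ)) := by
    ext z
    simp [Function.update_of_ne hkj.symm, dist_comm]
  rw [hball]
  refine (Measure.restrict_apply_le _ _).trans ?_
  rw [Real.volume_pi_closedBall (x j) (by positivity), Measure.restrict_apply_univ, volume_cell,
    Fintype.card_fin, ← ENNReal.ofReal_pow hℓ, ← ENNReal.ofReal_mul (by positivity)]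
  refine ENNReal.ofReal_le_ofReal ?_
  calc (2 * (2 * (κ * ℓ))) ^ d = 4 ^ d * κ ^ d * ℓ ^ d := by rw [← mul_pow, ← mul_pow]; ring
    _ ≤ 4 ^ d * κ * ℓ ^ d := by gcongr; exact pow_le_of_le_one hκ hκ1 hd

lemma cellsMeasure_compl_isolatedSet_le (hd : d ≠ 0) (b : Vec d) {ℓ κ : ℝ} (hℓ : 0 ≤ ℓ)
    (hκ : 0 ≤ κ) (hκ1 : κ ≤ 1) (i j : ι) :
    cellsMeasure (fun _ : ι => b) ℓ (isolatedSet b ℓ (κ * ℓ) i j)ᶜ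
      ≤ ENNReal.ofReal ((2 * d + 4 ^ d * Fintype.card ι) * κ)
        * cellsMeasure (fun _ : ι => b) ℓ Set.univ := by
  set μ := cellsMeasure (fun _ : ι => b) ℓ
  set outer : Set (ι → Vec d) := {x | x j ∉ cell (fun k => b k + κ * ℓ) (ℓ - 2 * (κ * ℓ))}
  set close : ι → Set (ι → Vec d) := fun k => {x | k ≠ j ∧ dist (x j) (x k) ≤ 2 * (κ * ℓ)}
  have hsub : (isolatedSet b ℓ (κ * ℓ) i j)ᶜ ⊆ outer ∪ ⋃ k, close k := by
    intro x hx
    simp only [isolatedSet, Set.mem_compl_iff, Set.mem_ofPred_eq, not_and_or, not_forall,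
      not_lt] at hx
    rcases hx with h | ⟨k, -, hkj, h⟩
    · exact Or.inl h
    · exact Or.inr (Set.mem_iUnion.2 ⟨k, hkj, h⟩)
  have hclose (k : ι) : μ (close k) ≤ ENNReal.ofReal (4 ^ d * κ) * μ Set.univ := by
    rcases eq_or_ne k j with rfl | hkj
    · simp [close]
    · exact (measure_mono fun x hx => hx.2).trans (cellsMeasure_dist_le_le hd _ hℓ hκ hκ1 hkj)
  calc μ (isolatedSet b ℓ (κ * ℓ) i j)ᶜ
      ≤ μ outer + ∑ k, μ (close k) := (measure_mono hsub).trans <|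
        (measure_union_le _ _).trans (by gcongr; exact measure_iUnion_fintype_le _ _)
    _ ≤ ENNReal.ofReal (2 * d * κ) * μ Set.univ
        + ∑ _k : ι, ENNReal.ofReal (4 ^ d * κ) * μ Set.univ := by
        gcongr with k
        · exact cellsMeasure_apply_notMem_shrunk_le (fun _ => b) hℓ hκ j
        · exact hclose k
    _ = _ := by
        rw [Finset.sum_const, nsmul_eq_mul, ← mul_assoc, ← add_mul, Finset.card_univ,
          ← ENNReal.ofReal_natCast, ← ENNReal.ofReal_mul (by positivity),
          ← ENNReal.ofReal_add (by positivity) (by positivity)]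
        congr 2; ring

end Isolated

/-! ### Energy of an isolated pair -/

section PairEnergy

variable {ι : Type*} [DecidableEq ι]

/-- The squared gradient of `φ` with respect to the position of particle `i`. -/
def partialSq (φ : (ι → Vec d) → ℝ) (i : ι) (x : ι → Vec d) : ℝ :=
  ∑ k, fderiv ℝ φ x (Pi.single i (Pi.single k 1)) ^ 2

lemma partialSq_nonneg (φ : (ι → Vec d) → ℝ) (i : ι) (x : ι → Vec d) : 0 ≤ partialSq φ i x :=
  Finset.sum_nonneg fun _ _ => sq_nonneg _

lemma continuous_partialSq [Fintype ι] {φ : (ι → Vec d) → ℝ} (hφ : ContDiff ℝ 1 φ) (i : ι) :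
    Continuous (partialSq φ i) := by
  unfold partialSq
  have := hφ.continuous_fderiv one_ne_zero
  fun_prop

lemma gradSq_comp_update [Finite ι] {φ : (ι → Vec d) → ℝ} {x : ι → Vec d} {i : ι} {z : Vec d}
    (hφ : DifferentiableAt ℝ φ (Function.update x i z)) :
    gradSq (fun z => φ (Function.update x i z)) z = partialSq φ i (Function.update x i z) := by
  have := Fintype.ofFinite ι
  have hderiv : fderiv ℝ (fun z => φ (Function.update x i z)) z = _ :=
    (hφ.hasFDerivAt.comp z (hasFDerivAt_update x (i := i) z)).fderiv
  have hsingle (k : Fin d) : ContinuousLinearMap.pi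
      (Pi.single i (ContinuousLinearMap.id ℝ (Vec d))) (Pi.single k 1)
        = (Pi.single i (Pi.single k 1) : ι → Vec d) := by
    funext m
    rcases eq_or_ne m i with rfl | hm
    · simp
    · simp [hm]
  simp only [gradSq, partialSq, hderiv, ContinuousLinearMap.comp_apply, hsingle]

variable [Fintype ι]

/-- The energy density assigned to the pair `(i, j)`: the kinetic energy of `i`, its interaction
with `j`, and the error terms of the local scattering bound at scale `R`. -/
def pairDensity (V : Vec d → ℝ≥0∞) (φ : (ι → Vec d) → ℝ) (ε R c : ℝ) (i j : ι)
    (x : ι → Vec d) : ℝ≥0∞ :=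
  ENNReal.ofReal ((1 + ε) * partialSq φ i x + ε / R ^ 2 * (φ x - c) ^ 2)
    + V (x i - x j) * ENNReal.ofReal (φ x ^ 2) / 2

lemma measurable_pairDensity {V : Vec d → ℝ≥0∞} (hV : Measurable V) {φ : (ι → Vec d) → ℝ}
    (hφ : ContDiff ℝ 1 φ) (ε R c : ℝ) (i j : ι) : Measurable (pairDensity V φ ε R c i j) := by
  unfold pairDensity
  have := (continuous_partialSq hφ i).measurable
  have := hφ.continuous.measurable
  have : Measurable fun x : ι → Vec d => V (x i - x j) := hV.comp (by fun_prop)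
  fun_prop

lemma HasLocalScatteringBound.ofReal_le_lintegral_update {V : Vec d → ℝ≥0∞} {A ε R : ℝ}
    (hscat : HasLocalScatteringBound V A ε R) {φ : (ι → Vec d) → ℝ}
    (hφ : ContDiff ℝ (⊤ : ℕ∞) φ) {b : Vec d} {ℓ : ℝ} (c : ℝ) {i j : ι} (hij : i ≠ j)
    {x : ι → Vec d} (hx : x ∈ isolatedSet b ℓ R i j) :
    ENNReal.ofReal (A * c ^ 2) ≤ ∫⁻ z in cell b ℓ,
      (isolatedPairSet b ℓ R i j).indicator (pairDensity V φ ε R c i j)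
        (Function.update x i z) := by
  refine (hscat (fun z => φ (Function.update x i z)) (hφ.comp (contDiff_update _ x i)) c
    (x j)).trans ?_
  rw [← lintegral_indicator Metric.isClosed_closedBall.measurableSet,
    ← lintegral_indicator (measurableSet_cell b ℓ)]
  refine lintegral_mono fun z => ?_
  by_cases hz : z ∈ Metric.closedBall (x j) R
  · have hpair : Function.update x i z ∈ isolatedPairSet b ℓ R i j := by
      refine ⟨⟨?_, fun k hki hkj => ?_⟩, ?_⟩
      · simpa [hij.symm] using hx.1
      · simpa [hij.symm, hki] using hx.2 k hki hkj
      · simpa [hij.symm] using hz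
    rw [Set.indicator_of_mem hz, Set.indicator_of_mem (closedBall_subset_cell hx.1 hz),
      Set.indicator_of_mem hpair, pairDensity,
      gradSq_comp_update (hφ.differentiable (by simp) _)]
    simp [hij.symm]
  · simp [hz]

lemma HasLocalScatteringBound.mul_cellsMeasure_isolatedSet_le {V : Vec d → ℝ≥0∞}
    (hV : Measurable V) {A ε R : ℝ} (hscat : HasLocalScatteringBound V A ε R)
    {φ : (ι → Vec d) → ℝ} (hφ : ContDiff ℝ (⊤ : ℕ∞) φ) (b : Vec d) (ℓ c : ℝ) {i j : ι}
    (hij : i ≠ j) :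
    ENNReal.ofReal (A * c ^ 2) * cellsMeasure (fun _ : ι => b) ℓ (isolatedSet b ℓ R i j)
      ≤ (∫⁻ x, (isolatedPairSet b ℓ R i j).indicator (pairDensity V φ ε R c i j) x
          ∂cellsMeasure (fun _ => b) ℓ) * ENNReal.ofReal ℓ ^ d := by
  have hmeas : Measurable
      ((isolatedPairSet b ℓ R i j).indicator (pairDensity V φ ε R c i j)) :=
    (measurable_pairDensity hV (hφ.of_le (by simp)) ε R c i j).indicator
      (measurableSet_isolatedPairSet b ℓ R i j)
  rw [← volume_cell b ℓ, ← Measure.restrict_apply_univ (cell b ℓ),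
    ← lintegral_lintegral_update (fun _ : ι => volume.restrict (cell b ℓ)) i hmeas,
    ← setLIntegral_const]
  exact (setLIntegral_mono' (measurableSet_isolatedSet b ℓ R i j) fun x hx =>
    hscat.ofReal_le_lintegral_update hφ c hij hx).trans (setLIntegral_le_lintegral _ _)

/- At most one `j` contributes: two partners of `i` would be within `2 * R` of each other. -/
lemma sum_indicator_pairDensity_le (V : Vec d → ℝ≥0∞) (φ : (ι → Vec d) → ℝ) (ε R c : ℝ)
    (b : Vec d) (ℓ : ℝ) (i : ι) (x : ι → Vec d) :
    ∑ j ∈ Finset.univ.erase i, (isolatedPairSet b ℓ R i j).indicator (pairDensity V φ ε R c i j) x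
      ≤ ENNReal.ofReal ((1 + ε) * partialSq φ i x + ε / R ^ 2 * (φ x - c) ^ 2)
        + (∑ j ∈ Finset.univ.erase i, V (x i - x j)) * ENNReal.ofReal (φ x ^ 2) / 2 := by
  by_cases h : ∃ j ∈ Finset.univ.erase i, x ∈ isolatedPairSet b ℓ R i j
  · obtain ⟨j, hj, hx⟩ := h
    rw [Finset.sum_eq_single_of_mem j hj fun j' hj' hne => ?_]
    · rw [Set.indicator_of_mem hx, pairDensity]
      gcongr
      exact Finset.single_le_sum (f := fun j => V (x i - x j)) (fun _ _ => zero_le) hj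
    · refine Set.indicator_of_notMem (fun hx' => ?_) _
      have hfar := hx.1.2 j' (Finset.ne_of_mem_erase hj') hne
      have hxj : dist (x i) (x j) ≤ R := hx.2
      have hxj' : dist (x i) (x j') ≤ R := hx'.2
      linarith [dist_triangle_left (x j) (x j') (x i)]
  · push Not at h
    rw [Finset.sum_eq_zero fun j hj => Set.indicator_of_notMem (h j hj) _]
    exact zero_le

end PairEnergy

/-! ### Poincaré inequality in a cell -/

section PoincareCell

variable {ι : Type*} [Fintype ι] [DecidableEq ι]

lemma fderiv_apply_eq_sum (φ : (ι → Vec d) → ℝ) (z v : ι → Vec d) :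
    fderiv ℝ φ z v = ∑ i, ∑ k, v i k * fderiv ℝ φ z (Pi.single i (Pi.single k 1)) := by
  have hv : v = ∑ i, ∑ k, v i k • (Pi.single i (Pi.single k 1) : ι → Vec d) := by
    funext i k
    simp [Finset.sum_apply, Pi.single_apply, ite_apply]
  conv_lhs => rw [hv]
  simp [map_sum]

lemma sq_fderiv_apply_le (φ : (ι → Vec d) → ℝ) (z v : ι → Vec d) {ℓ : ℝ}
    (hv : ∀ i k, v i k ^ 2 ≤ ℓ ^ 2) :
    fderiv ℝ φ z v ^ 2 ≤ d * Fintype.card ι * ℓ ^ 2 * ∑ i, partialSq φ i z := by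
  unfold partialSq
  rw [fderiv_apply_eq_sum, ← Finset.sum_product', ← Finset.sum_product', Finset.univ_product_univ]
  refine (Finset.sum_mul_sq_le_sq_mul_sq _ _ _).trans ?_
  gcongr
  calc ∑ p : ι × Fin d, v p.1 p.2 ^ 2 ≤ ∑ _p : ι × Fin d, ℓ ^ 2 :=
        Finset.sum_le_sum fun p _ => hv _ _
    _ = d * Fintype.card ι * ℓ ^ 2 := by simp [mul_comm]

lemma exists_const_lintegral_sq_sub_le_cellsMeasure {φ : (ι → Vec d) → ℝ} (hφ : ContDiff ℝ 1 φ)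
    (b : ι → Vec d) {ℓ : ℝ} (hℓ : 0 < ℓ) :
    ∃ c : ℝ, ∫⁻ x, ENNReal.ofReal ((φ x - c) ^ 2) ∂cellsMeasure b ℓ
      ≤ ENNReal.ofReal (2 ^ (d * Fintype.card ι) * (d * Fintype.card ι) * ℓ ^ 2) *
        ∫⁻ x, ENNReal.ofReal (∑ i, partialSq φ i x) ∂cellsMeasure b ℓ := by
  have hgrad : Measurable fun x => ∑ i, partialSq φ i x :=
    Finset.measurable_sum _ fun i _ => (continuous_partialSq hφ i).measurable
  have hvol : volume (Set.pi Set.univ fun i => cell (b i) ℓ)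
      = (ENNReal.ofReal ℓ ^ d) ^ Fintype.card ι := by
    rw [← cellsMeasure_univ b ℓ, cellsMeasure_eq_restrict, Measure.restrict_apply_univ]
  have hfinrank : Module.finrank ℝ (ι → Vec d) = d * Fintype.card ι := by
    simp [Module.finrank_pi_fintype, mul_comm]
  obtain ⟨c, hc⟩ := exists_const_setLIntegral_sq_sub_le volume
    (convex_pi fun i _ => convex_cell (b i) ℓ)
    (MeasurableSet.univ_pi fun i => measurableSet_cell (b i) ℓ)
    (by rw [hvol]; simp [hℓ]) (by rw [hvol]; finiteness) hφ
    (G := fun z => ENNReal.ofReal (d * Fintype.card ι * ℓ ^ 2 * ∑ i, partialSq φ i z))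
    (by fun_prop) fun x hx y hy z => by
      refine ENNReal.ofReal_le_ofReal (sq_fderiv_apply_le φ z _ fun i k => ?_)
      have := mem_cell.1 (hx i trivial) k
      have := mem_cell.1 (hy i trivial) k
      apply sq_le_sq' <;> simp <;> linarith
  refine ⟨c, ?_⟩
  rw [cellsMeasure_eq_restrict]
  refine hc.trans (le_of_eq ?_)
  simp_rw [ENNReal.ofReal_mul (p := d * (Fintype.card ι : ℝ) * ℓ ^ 2) (by positivity)]
  rw [hfinrank, lintegral_const_mul _ (by fun_prop), ← mul_assoc,
    mul_assoc (2 ^ (d * Fintype.card ι) : ℝ), ENNReal.ofReal_mul (p := 2 ^ _) (by positivity),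
    ENNReal.ofReal_pow zero_le_two, ENNReal.ofReal_ofNat]

end PoincareCell

/-! ### Energy of the particles in one cell -/

lemma natCast_mul_natCast_sub_one_nonneg (n : ℕ) : (0 : ℝ) ≤ n * (n - 1) := by
  rcases Nat.eq_zero_or_pos n with rfl | h
  · simp
  · exact mul_nonneg n.cast_nonneg (sub_nonneg.2 (Nat.one_le_cast.2 h))

lemma sum_sum_erase_const {ι : Type*} [Fintype ι] [DecidableEq ι] (c : ℝ≥0∞) :
    ∑ i : ι, ∑ _j ∈ Finset.univ.erase i, c
      = ENNReal.ofReal (Fintype.card ι * (Fintype.card ι - 1)) * c := by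
  simp only [Finset.sum_const, Finset.card_erase_of_mem (Finset.mem_univ _), Finset.card_univ,
    nsmul_eq_mul]
  rcases Nat.eq_zero_or_pos (Fintype.card ι) with h | h
  · simp [h]
  · rw [← mul_assoc, ENNReal.ofReal_mul (by positivity), ENNReal.ofReal_natCast,
      ENNReal.ofReal_sub _ zero_le_one, ENNReal.ofReal_natCast, ENNReal.ofReal_one,
      ENNReal.natCast_sub, Nat.cast_one]

lemma ofReal_mul_cellsMeasure_univ_le_isolatedSet {ι : Type*} [Fintype ι] (hd : d ≠ 0) (b : Vec d)
    {ℓ κ : ℝ} (hℓ : 0 ≤ ℓ) (hκ : 0 ≤ κ) (hκ1 : κ ≤ 1) (i j : ι) :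
    ENNReal.ofReal (1 - (2 * d + 4 ^ d * Fintype.card ι) * κ)
        * cellsMeasure (fun _ : ι => b) ℓ Set.univ
      ≤ cellsMeasure (fun _ : ι => b) ℓ (isolatedSet b ℓ (κ * ℓ) i j) := by
  have hcompl := cellsMeasure_compl_isolatedSet_le hd b hℓ hκ hκ1 i j
  rw [ENNReal.ofReal_sub _ (by positivity), ENNReal.ofReal_one,
    ENNReal.sub_mul fun _ _ => measure_ne_top _ _, one_mul, tsub_le_iff_right]
  exact (measure_add_measure_compl (measurableSet_isolatedSet b ℓ (κ * ℓ) i j)).ge.trans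
    (add_le_add_right hcompl _)

section

variable {ι : Type*} [Fintype ι] [DecidableEq ι]

/-- The energy density of the particles in `S`, including their mutual interaction. The sum over
ordered pairs counts every interaction twice, hence the factor `1 / 2`. -/
def energyDensity (V : Vec d → ℝ≥0∞) (φ : (ι → Vec d) → ℝ) (S : Finset ι) (x : ι → Vec d) :
    ℝ≥0∞ :=
  ENNReal.ofReal (∑ i ∈ S, partialSq φ i x)
    + (∑ i ∈ S, ∑ j ∈ S.erase i, V (x i - x j)) * ENNReal.ofReal (φ x ^ 2) / 2

lemma measurable_energyDensity {V : Vec d → ℝ≥0∞} (hV : Measurable V) {φ : (ι → Vec d) → ℝ}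
    (hφ : ContDiff ℝ 1 φ) (S : Finset ι) : Measurable (energyDensity V φ S) := by
  unfold energyDensity
  have : Measurable fun x => ∑ i ∈ S, partialSq φ i x :=
    Finset.measurable_sum _ fun i _ => (continuous_partialSq hφ i).measurable
  have := hφ.continuous.measurable
  have : Measurable fun x : ι → Vec d => ∑ i ∈ S, ∑ j ∈ S.erase i, V (x i - x j) :=
    Finset.measurable_sum _ fun i _ => Finset.measurable_sum _ fun j _ => hV.comp (by fun_prop)
  fun_prop

lemma sum_sum_indicator_pairDensity_le (V : Vec d → ℝ≥0∞) (φ : (ι → Vec d) → ℝ) {ε : ℝ}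
    (hε : 0 ≤ ε) (R c : ℝ) (b : Vec d) (ℓ : ℝ) (x : ι → Vec d) :
    ∑ i, ∑ j ∈ Finset.univ.erase i,
        (isolatedPairSet b ℓ R i j).indicator (pairDensity V φ ε R c i j) x
      ≤ ENNReal.ofReal (1 + ε) * energyDensity V φ Finset.univ x
        + ENNReal.ofReal (Fintype.card ι * (ε / R ^ 2)) * ENNReal.ofReal ((φ x - c) ^ 2) := by
  have hsum : 0 ≤ ∑ i, partialSq φ i x := Finset.sum_nonneg fun i _ => partialSq_nonneg φ i x
  set W := (∑ i, ∑ j ∈ Finset.univ.erase i, V (x i - x j)) * ENNReal.ofReal (φ x ^ 2) / 2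
  calc _ ≤ ∑ i, (ENNReal.ofReal ((1 + ε) * partialSq φ i x + ε / R ^ 2 * (φ x - c) ^ 2)
          + (∑ j ∈ Finset.univ.erase i, V (x i - x j)) * ENNReal.ofReal (φ x ^ 2) / 2) :=
        Finset.sum_le_sum fun i _ => sum_indicator_pairDensity_le V φ ε R c b ℓ i x
    _ = ENNReal.ofReal (1 + ε) * ENNReal.ofReal (∑ i, partialSq φ i x)
          + ENNReal.ofReal (Fintype.card ι * (ε / R ^ 2)) * ENNReal.ofReal ((φ x - c) ^ 2) + W := by
        rw [Finset.sum_add_distrib, ← ENNReal.ofReal_sum_of_nonneg fun i _ => by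
            have := partialSq_nonneg φ i x
            positivity,
          Finset.sum_add_distrib, ← Finset.mul_sum, Finset.sum_const, Finset.card_univ,
          nsmul_eq_mul, ← mul_assoc, ENNReal.ofReal_add (by positivity) (by positivity),
          ENNReal.ofReal_mul (by positivity), ENNReal.ofReal_mul (by positivity)]
        simp_rw [W, div_eq_mul_inv, Finset.sum_mul]
    _ ≤ ENNReal.ofReal (1 + ε) * ENNReal.ofReal (∑ i, partialSq φ i x)
          + ENNReal.ofReal (Fintype.card ι * (ε / R ^ 2)) * ENNReal.ofReal ((φ x - c) ^ 2)
          + ENNReal.ofReal (1 + ε) * W := by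
        gcongr
        exact le_mul_of_one_le_left zero_le (by rw [ENNReal.one_le_ofReal]; linarith)
    _ = _ := by
        rw [energyDensity]
        ring

lemma HasLocalScatteringBound.mul_cellsMeasure_univ_le (hd : d ≠ 0) {V : Vec d → ℝ≥0∞}
    (hV : Measurable V) {A ε κ ℓ : ℝ} (hε : 0 ≤ ε) (hℓ : 0 ≤ ℓ) (hκ : 0 ≤ κ) (hκ1 : κ ≤ 1)
    (hscat : HasLocalScatteringBound V A ε (κ * ℓ)) {φ : (ι → Vec d) → ℝ}
    (hφ : ContDiff ℝ (⊤ : ℕ∞) φ) (b : Vec d) (c : ℝ) :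
    ENNReal.ofReal (Fintype.card ι * (Fintype.card ι - 1)) * (ENNReal.ofReal (A * c ^ 2) *
        (ENNReal.ofReal (1 - (2 * d + 4 ^ d * Fintype.card ι) * κ)
          * cellsMeasure (fun _ : ι => b) ℓ Set.univ))
      ≤ (ENNReal.ofReal (1 + ε)
            * ∫⁻ x, energyDensity V φ Finset.univ x ∂cellsMeasure (fun _ => b) ℓ
          + ENNReal.ofReal (Fintype.card ι * (ε / (κ * ℓ) ^ 2))
            * ∫⁻ x, ENNReal.ofReal ((φ x - c) ^ 2) ∂cellsMeasure (fun _ => b) ℓ)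
        * ENNReal.ofReal ℓ ^ d := by
  set μ := cellsMeasure (fun _ : ι => b) ℓ
  have hφ1 : ContDiff ℝ 1 φ := hφ.of_le (by simp)
  have hφm := hφ.continuous.measurable
  have hdens := measurable_energyDensity hV hφ1 Finset.univ
  have hpair (i j : ι) : Measurable ((isolatedPairSet b ℓ (κ * ℓ) i j).indicator
      (pairDensity V φ ε (κ * ℓ) c i j)) :=
    (measurable_pairDensity hV hφ1 _ _ _ i j).indicator (measurableSet_isolatedPairSet _ _ _ i j)
  rw [← sum_sum_erase_const]
  calc _ ≤ ∑ i : ι, ∑ j ∈ Finset.univ.erase i, (∫⁻ x, (isolatedPairSet b ℓ (κ * ℓ) i j).indicator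
          (pairDensity V φ ε (κ * ℓ) c i j) x ∂μ) * ENNReal.ofReal ℓ ^ d := by
        refine Finset.sum_le_sum fun i _ => Finset.sum_le_sum fun j hj => ?_
        refine le_trans ?_ (hscat.mul_cellsMeasure_isolatedSet_le hV hφ b ℓ c
          (Finset.ne_of_mem_erase hj).symm)
        gcongr
        exact ofReal_mul_cellsMeasure_univ_le_isolatedSet hd b hℓ hκ hκ1 i j
    _ = (∫⁻ x, ∑ i : ι, ∑ j ∈ Finset.univ.erase i, (isolatedPairSet b ℓ (κ * ℓ) i j).indicator
          (pairDensity V φ ε (κ * ℓ) c i j) x ∂μ) * ENNReal.ofReal ℓ ^ d := by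
        rw [lintegral_finsetSum _ fun i _ => Finset.measurable_sum _ fun j _ => hpair i j,
          Finset.sum_mul]
        refine Finset.sum_congr rfl fun i _ => ?_
        rw [lintegral_finsetSum _ fun j _ => hpair i j, Finset.sum_mul]
    _ ≤ _ := by
        rw [← lintegral_const_mul _ hdens, ← lintegral_const_mul _ (by fun_prop),
          ← lintegral_add_left (by fun_prop)]
        gcongr with x
        exact sum_sum_indicator_pairDensity_le V φ hε _ c b ℓ x

lemma HasLocalScatteringBound.mul_sq_mul_cellsMeasure_univ_le (hd : d ≠ 0) {V : Vec d → ℝ≥0∞}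
    (hV : Measurable V) {A ε κ ℓ : ℝ} (hA : 0 ≤ A) (hε : 0 ≤ ε) (hℓ : 0 < ℓ) (hκ : 0 < κ)
    (hκ1 : κ ≤ 1) (hscat : HasLocalScatteringBound V A ε (κ * ℓ)) {φ : (ι → Vec d) → ℝ}
    (hφ : ContDiff ℝ (⊤ : ℕ∞) φ) (b : Vec d) {c C : ℝ} (hC : 0 ≤ C)
    (hc : ∫⁻ x, ENNReal.ofReal ((φ x - c) ^ 2) ∂cellsMeasure (fun _ => b) ℓ
      ≤ ENNReal.ofReal (C * ℓ ^ 2)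
        * ∫⁻ x, energyDensity V φ Finset.univ x ∂cellsMeasure (fun _ => b) ℓ) :
    ENNReal.ofReal (A * (Fintype.card ι * (Fintype.card ι - 1)) * c ^ 2
          * (1 - (2 * d + 4 ^ d * Fintype.card ι) * κ)) * cellsMeasure (fun _ : ι => b) ℓ Set.univ
      ≤ ENNReal.ofReal (1 + ε * (1 + Fintype.card ι * C / κ ^ 2))
        * (∫⁻ x, energyDensity V φ Finset.univ x ∂cellsMeasure (fun _ => b) ℓ)
        * ENNReal.ofReal ℓ ^ d := by
  set E := ∫⁻ x, energyDensity V φ Finset.univ x ∂cellsMeasure (fun _ => b) ℓ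
  set n : ℝ := (Fintype.card ι : ℝ)
  have hn : 0 ≤ n * (n - 1) := natCast_mul_natCast_sub_one_nonneg _
  calc _ = ENNReal.ofReal (n * (n - 1)) * (ENNReal.ofReal (A * c ^ 2) *
        (ENNReal.ofReal (1 - (2 * d + 4 ^ d * n) * κ)
          * cellsMeasure (fun _ : ι => b) ℓ Set.univ)) := by
        rw [← mul_assoc (ENNReal.ofReal (A * c ^ 2)), ← ENNReal.ofReal_mul (by positivity),
          ← mul_assoc (ENNReal.ofReal (n * (n - 1))),
          ← ENNReal.ofReal_mul hn]
        ring_nf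
    _ ≤ (ENNReal.ofReal (1 + ε) * E + ENNReal.ofReal (n * (ε / (κ * ℓ) ^ 2))
          * (ENNReal.ofReal (C * ℓ ^ 2) * E)) * ENNReal.ofReal ℓ ^ d := by
        refine (hscat.mul_cellsMeasure_univ_le hd hV hε hℓ.le hκ.le hκ1 hφ b c).trans ?_
        gcongr
    _ = _ := by
        rw [← mul_assoc, ← ENNReal.ofReal_mul (by positivity), ← add_mul,
          ← ENNReal.ofReal_add (by positivity) (by positivity)]
        congr 3
        field_simp
        ring

end

lemma lintegral_ofReal_sq_le {α : Type*} [MeasurableSpace α] (μ : Measure α) {φ : α → ℝ}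
    (hφ : Measurable φ) (c : ℝ) {δ : ℝ} (hδ : 0 < δ) :
    ∫⁻ x, ENNReal.ofReal (φ x ^ 2) ∂μ ≤ ENNReal.ofReal ((1 + δ) * c ^ 2) * μ Set.univ
      + ENNReal.ofReal (1 + 1 / δ) * ∫⁻ x, ENNReal.ofReal ((φ x - c) ^ 2) ∂μ := by
  rw [← lintegral_const, ← lintegral_const_mul _ (by fun_prop), ← lintegral_add_left (by fun_prop)]
  refine lintegral_mono fun x => ?_
  rw [← ENNReal.ofReal_mul (by positivity), ← ENNReal.ofReal_add (by positivity) (by positivity)]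
  simpa using ENNReal.ofReal_le_ofReal (add_sq_le_one_add_mul_sq hδ c (φ x - c))

lemma ofReal_mul_le_of_mean_bound {W c ε ℓ C : ℝ} {U E I : ℝ≥0∞} (hε : 0 < ε) (hε1 : ε < 1)
    (hW : 0 ≤ W) (hℓ : 0 < ℓ) (hC : 0 ≤ C) (hWC : W * (1 + 1 / (ε / 4)) * C ≤ ε / 4 * ℓ)
    (hmean : ENNReal.ofReal (W * c ^ 2 * (1 - ε / 4)) * U
      ≤ ENNReal.ofReal (1 + ε / 4) * E * ENNReal.ofReal ℓ ^ 3)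
    (hI : I ≤ ENNReal.ofReal ((1 + ε / 4) * c ^ 2) * U
      + ENNReal.ofReal (1 + 1 / (ε / 4)) * (ENNReal.ofReal (C * ℓ ^ 2) * E)) :
    ENNReal.ofReal (W * (1 - ε) / ℓ ^ 3) * I ≤ E := by
  have h1ε : 0 < 1 - ε := by linarith
  have hmain : W * (1 - ε) / ℓ ^ 3 * ((1 + ε / 4) * c ^ 2)
      ≤ (1 - ε / 2) / ℓ ^ 3 * (W * c ^ 2 * (1 - ε / 4)) := by
    have hcoef : (1 - ε) * (1 + ε / 4) ≤ (1 - ε / 2) * (1 - ε / 4) := by nlinarith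
    calc _ = (1 - ε) * (1 + ε / 4) * (W * c ^ 2 / ℓ ^ 3) := by ring
      _ ≤ (1 - ε / 2) * (1 - ε / 4) * (W * c ^ 2 / ℓ ^ 3) := by gcongr
      _ = _ := by ring
  have herror : W * (1 - ε) / ℓ ^ 3 * ((1 + 1 / (ε / 4)) * (C * ℓ ^ 2)) ≤ ε / 4 := by
    calc _ = (1 - ε) * (W * (1 + 1 / (ε / 4)) * C / ℓ) := by field_simp
      _ ≤ 1 * (ε / 4 * ℓ / ℓ) := by gcongr; linarith
      _ = ε / 4 := by field_simp
  have hsum : (1 - ε / 2) * (1 + ε / 4) + ε / 4 ≤ 1 := by nlinarith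
  calc ENNReal.ofReal (W * (1 - ε) / ℓ ^ 3) * I
      ≤ ENNReal.ofReal (W * (1 - ε) / ℓ ^ 3) * (ENNReal.ofReal ((1 + ε / 4) * c ^ 2) * U
        + ENNReal.ofReal (1 + 1 / (ε / 4)) * (ENNReal.ofReal (C * ℓ ^ 2) * E)) := by gcongr
    _ = ENNReal.ofReal (W * (1 - ε) / ℓ ^ 3 * ((1 + ε / 4) * c ^ 2)) * U
        + ENNReal.ofReal (W * (1 - ε) / ℓ ^ 3 * ((1 + 1 / (ε / 4)) * (C * ℓ ^ 2))) * E := by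
        simp only [ENNReal.ofReal_mul (p := W * (1 - ε) / ℓ ^ 3) (by positivity),
          ENNReal.ofReal_mul (p := 1 + 1 / (ε / 4)) (by positivity), mul_add, mul_assoc]
    _ ≤ ENNReal.ofReal ((1 - ε / 2) / ℓ ^ 3 * (W * c ^ 2 * (1 - ε / 4))) * U
        + ENNReal.ofReal (ε / 4) * E := by gcongr
    _ = ENNReal.ofReal ((1 - ε / 2) / ℓ ^ 3) * (ENNReal.ofReal (W * c ^ 2 * (1 - ε / 4)) * U)
        + ENNReal.ofReal (ε / 4) * E := by
        rw [ENNReal.ofReal_mul (div_nonneg (by linarith) (by positivity)), mul_assoc]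
    _ ≤ ENNReal.ofReal ((1 - ε / 2) / ℓ ^ 3)
          * (ENNReal.ofReal (1 + ε / 4) * E * ENNReal.ofReal ℓ ^ 3)
        + ENNReal.ofReal (ε / 4) * E := by gcongr
    _ = ENNReal.ofReal ((1 - ε / 2) * (1 + ε / 4) + ε / 4) * E := by
        rw [ENNReal.ofReal_add (mul_nonneg (by linarith) (by positivity)) (by positivity), add_mul,
          show (1 - ε / 2) * (1 + ε / 4) = (1 - ε / 2) / ℓ ^ 3 * ((1 + ε / 4) * ℓ ^ 3) by
            field_simp,
          ENNReal.ofReal_mul (div_nonneg (by linarith) (by positivity)),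
          ENNReal.ofReal_mul (by positivity), ENNReal.ofReal_pow hℓ.le]
        ring
    _ ≤ 1 * E := by gcongr; simpa using hsum
    _ = E := one_mul E

/-- `n` particles in a cell of side `ℓ` have energy at least `κ` per ordered pair, for wave
functions which are subject to no boundary condition and no symmetry. -/
def HasCellEnergyBound (V : Vec d → ℝ≥0∞) (κ ℓ : ℝ) (n : ℕ) : Prop :=
  ∀ (ι : Type) [Fintype ι] [DecidableEq ι], Fintype.card ι = n →
    ∀ (b : Vec d) (φ : (ι → Vec d) → ℝ), ContDiff ℝ (⊤ : ℕ∞) φ →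
      ENNReal.ofReal (κ * (n * (n - 1)))
          * ∫⁻ x, ENNReal.ofReal (φ x ^ 2) ∂cellsMeasure (fun _ : ι => b) ℓ
        ≤ ∫⁻ x, energyDensity V φ Finset.univ x ∂cellsMeasure (fun _ => b) ℓ

lemma HasLocalScatteringBound.hasCellEnergyBound {V : Vec 3 → ℝ≥0∞} (hV : Measurable V)
    {A ε ε' κ ℓ C : ℝ} {n : ℕ} (hA : 0 ≤ A) (hε : 0 < ε) (hε1 : ε < 1) (hℓ : 0 < ℓ) (hκ : 0 < κ)
    (hκ1 : κ ≤ 1) (hε' : 0 ≤ ε') (hscat : HasLocalScatteringBound V A ε' (κ * ℓ))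
    (hC : C = 2 ^ (3 * n) * (3 * n)) (hκn : (6 + 64 * n) * κ ≤ ε / 4)
    (hε'C : ε' * (1 + n * C / κ ^ 2) ≤ ε / 4)
    (hWC : A * (n * (n - 1)) * (1 + 1 / (ε / 4)) * C ≤ ε / 4 * ℓ) :
    HasCellEnergyBound V (A * (1 - ε) / ℓ ^ 3) ℓ n := by
  intro ι _ _ hcard b φ hφ
  have hC0 : 0 ≤ C := hC ▸ by positivity
  have hW : 0 ≤ A * (n * (n - 1) : ℝ) := by
    have := natCast_mul_natCast_sub_one_nonneg n
    positivity
  set E := ∫⁻ x, energyDensity V φ Finset.univ x ∂cellsMeasure (fun _ => b) ℓ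
  obtain ⟨c, hc⟩ :=
    exists_const_lintegral_sq_sub_le_cellsMeasure (hφ.of_le (by simp)) (fun _ : ι => b) hℓ
  have hcE : ∫⁻ x, ENNReal.ofReal ((φ x - c) ^ 2) ∂cellsMeasure (fun _ => b) ℓ
      ≤ ENNReal.ofReal (C * ℓ ^ 2) * E := by
    rw [hcard, Nat.cast_ofNat, ← hC] at hc
    refine hc.trans ?_
    gcongr
    exact lintegral_mono fun x => le_self_add
  have hmean := hscat.mul_sq_mul_cellsMeasure_univ_le three_ne_zero hV hA hε' hℓ hκ hκ1 hφ b hC0 hcE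
  have hI := (lintegral_ofReal_sq_le (cellsMeasure (fun _ : ι => b) ℓ) hφ.continuous.measurable c
    (δ := ε / 4) (by positivity)).trans
      (add_le_add_right (mul_le_mul_right hcE (ENNReal.ofReal (1 + 1 / (ε / 4)))) _)
  have hbound := ofReal_mul_le_of_mean_bound (c := c) hε hε1 hW hℓ hC0 hWC
    (E := E) (le_trans ?_ (hmean.trans ?_)) hI
  · rwa [show A * (n * (n - 1)) * (1 - ε) / ℓ ^ 3 = A * (1 - ε) / ℓ ^ 3 * (n * (n - 1)) by ring]
      at hbound
  · rw [hcard]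
    gcongr
    push_cast
    linarith
  · rw [hcard]
    gcongr

lemma exists_hasCellEnergyBound {V : Vec 3 → ℝ≥0∞} (hV : Measurable V) (hVc : HasCompactSupport V)
    {A : ℝ} (hA : 0 ≤ A) (hAV : ENNReal.ofReal A ≤ sInf (scatSet3 V)) (n : ℕ) {ε : ℝ}
    (hε : 0 < ε) (hε1 : ε < 1) :
    ∃ ℓ₀ : ℝ, 0 < ℓ₀ ∧ ∀ ℓ ≥ ℓ₀, HasCellEnergyBound V (A * (1 - ε) / ℓ ^ 3) ℓ n := by
  set κ : ℝ := ε / (4 * (6 + 64 * n)) with hκ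
  have hκ0 : 0 < κ := by positivity
  set C : ℝ := 2 ^ (3 * n) * (3 * n) with hC
  set ε' : ℝ := ε / 4 / (1 + n * C / κ ^ 2)
  have hε'0 : 0 < ε' := by positivity
  obtain ⟨R₀, hR₀, hscat⟩ := exists_hasLocalScatteringBound hVc hA hAV hε'0
  set B : ℝ := A * (n * (n - 1)) * (1 + 1 / (ε / 4)) * C
  refine ⟨max (R₀ / κ) (max (B / (ε / 4)) 1), by positivity, fun ℓ hℓ => ?_⟩
  simp only [ge_iff_le, max_le_iff, div_le_iff₀' hκ0, div_le_iff₀' (show 0 < ε / 4 by positivity)]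
    at hℓ
  obtain ⟨hRℓ, hBℓ, hℓ1⟩ := hℓ
  refine HasLocalScatteringBound.hasCellEnergyBound hV hA hε hε1 (by linarith) hκ0 ?_ hε'0.le
    (hscat _ hRℓ) hC (le_of_eq (by rw [hκ]; field_simp)) (div_mul_cancel₀ _ (by positivity)).le hBℓ
  rw [hκ, div_le_one (by positivity)]
  linarith [n.cast_nonneg (α := ℝ)]

/-! ### Clusters: particles distributed over many cells -/

section

variable {ι : Type*} [DecidableEq ι]

lemma energyDensity_add_le (V : Vec d → ℝ≥0∞) (φ : (ι → Vec d) → ℝ) {S S' : Finset ι}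
    (h : Disjoint S S') (x : ι → Vec d) :
    energyDensity V φ S x + energyDensity V φ S' x ≤ energyDensity V φ (S ∪ S') x := by
  unfold energyDensity
  rw [add_add_add_comm, ← ENNReal.ofReal_add, ← Finset.sum_union h, ← ENNReal.add_div, ← add_mul,
    Finset.sum_union h (f := fun i => ∑ j ∈ (S ∪ S').erase i, V (x i - x j))]
  · gcongr <;> simp
  all_goals exact Finset.sum_nonneg fun i _ => partialSq_nonneg φ i x

lemma sum_energyDensity_fiber_le [Fintype ι] (V : Vec d → ℝ≥0∞) (φ : (ι → Vec d) → ℝ) {γ : Type*}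
    [DecidableEq γ] (α : ι → γ) (x : ι → Vec d) (Γ : Finset γ) :
    ∑ g ∈ Γ, energyDensity V φ {i | α i = g} x ≤ energyDensity V φ {i | α i ∈ Γ} x := by
  induction Γ using Finset.induction_on with
  | empty => simp
  | insert g Γ hg ih =>
    have hdisj : Disjoint ({i | α i = g} : Finset ι) ({i | α i ∈ Γ} : Finset ι) := by
      rw [Finset.disjoint_filter]
      rintro i - rfl
      exact hg
    have hunion : ({i | α i = g} : Finset ι) ∪ ({i | α i ∈ Γ} : Finset ι)
        = ({i | α i ∈ insert g Γ} : Finset ι) := by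
      ext i
      simp
    rw [Finset.sum_insert hg, ← hunion]
    exact (add_le_add_right ih _).trans (energyDensity_add_le V φ hdisj x)

lemma hasFDerivAt_updateFinset (x : ι → Vec d) (S : Finset ι) (y : S → Vec d) :
    HasFDerivAt (fun y : S → Vec d => Function.updateFinset x S y)
      (ContinuousLinearMap.pi fun i =>
        if h : i ∈ S then ContinuousLinearMap.proj (R := ℝ) (φ := fun _ : S => Vec d) ⟨i, h⟩ else 0)
      y := by
  rw [hasFDerivAt_pi]
  intro i
  by_cases h : i ∈ S
  · simp only [Function.updateFinset, h, dif_pos]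
    exact hasFDerivAt_apply _ _
  · simp only [Function.updateFinset, h, dif_neg, not_false_eq_true]
    exact hasFDerivAt_const _ _

lemma contDiff_updateFinset [Fintype ι] {n : WithTop ℕ∞} (x : ι → Vec d) (S : Finset ι) :
    ContDiff ℝ n fun y : S → Vec d => Function.updateFinset x S y := by
  rw [contDiff_pi]
  intro i
  by_cases h : i ∈ S
  · simp only [Function.updateFinset, h, dif_pos]
    exact contDiff_apply _ _ _
  · simp only [Function.updateFinset, h, dif_neg, not_false_eq_true]
    exact contDiff_const

lemma partialSq_updateFinset [Finite ι] {φ : (ι → Vec d) → ℝ} (hφ : Differentiable ℝ φ)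
    (x : ι → Vec d) (S : Finset ι) (i : S) (y : S → Vec d) :
    partialSq φ i (Function.updateFinset x S y)
      = partialSq (fun y : S → Vec d => φ (Function.updateFinset x S y)) i y := by
  cases nonempty_fintype ι
  have hcomp : HasFDerivAt (fun y : S → Vec d => φ (Function.updateFinset x S y)) _ y :=
    (hφ (Function.updateFinset x S y)).hasFDerivAt.comp y (hasFDerivAt_updateFinset x S y)
  unfold partialSq
  rw [hcomp.fderiv]
  refine Finset.sum_congr rfl fun k _ => ?_
  rw [ContinuousLinearMap.comp_apply]
  congr 2
  funext j
  by_cases hj : j ∈ S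
  · rcases eq_or_ne j i with rfl | hne
    · simp
    · have hne' : (⟨j, hj⟩ : S) ≠ i := fun h => hne (congrArg Subtype.val h)
      simp [hj, hne, hne']
  · have hne : j ≠ i := fun h => hj (h ▸ i.2)
    simp [hj, hne]

lemma sum_subtype_erase {M : Type*} [AddCommMonoid M] (S : Finset ι) (i : S) (f : ι → M) :
    ∑ j ∈ Finset.univ.erase i, f j = ∑ j ∈ S.erase i, f j := by
  have hmap : S.erase (i : ι) = (Finset.univ.erase i).map (Function.Embedding.subtype _) := by
    ext j
    simp [and_comm]
  rw [hmap, Finset.sum_map]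
  rfl

lemma energyDensity_updateFinset [Finite ι] (V : Vec d → ℝ≥0∞) {φ : (ι → Vec d) → ℝ}
    (hφ : Differentiable ℝ φ) (x : ι → Vec d) (S : Finset ι) (y : S → Vec d) :
    energyDensity V φ S (Function.updateFinset x S y)
      = energyDensity V (fun y : S → Vec d => φ (Function.updateFinset x S y)) Finset.univ y := by
  have hy (i : S) : Function.updateFinset x S y i = y i := by simp [Function.updateFinset]
  unfold energyDensity
  simp_rw [← partialSq_updateFinset hφ]
  congr 1
  · rw [← Finset.sum_coe_sort S]
  · congr 2
    rw [← Finset.sum_coe_sort S]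
    refine Finset.sum_congr rfl fun i _ => ?_
    rw [← sum_subtype_erase S i fun j => V (Function.updateFinset x S y i
      - Function.updateFinset x S y j)]
    simp_rw [hy]

lemma HasCellEnergyBound.mul_lintegral_le_of_subset {ι : Type} [Fintype ι] [DecidableEq ι]
    {V : Vec d → ℝ≥0∞} (hV : Measurable V) {κ ℓ : ℝ} {S : Finset ι}
    (hcell : HasCellEnergyBound V κ ℓ S.card) {β : ι → Vec d} {b : Vec d} (hβ : ∀ i ∈ S, β i = b)
    {φ : (ι → Vec d) → ℝ} (hφ : ContDiff ℝ (⊤ : ℕ∞) φ) :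
    ENNReal.ofReal (κ * (S.card * (S.card - 1)))
        * ∫⁻ x, ENNReal.ofReal (φ x ^ 2) ∂cellsMeasure β ℓ
      ≤ ∫⁻ x, energyDensity V φ S x ∂cellsMeasure β ℓ := by
  have hφ1 : ContDiff ℝ 1 φ := hφ.of_le (by simp)
  have hφm : Measurable φ := hφ.continuous.measurable
  rw [← lintegral_const_mul _ (by fun_prop)]
  refine lintegral_le_of_lmarginal_le S (by fun_prop) (measurable_energyDensity hV hφ1 S)
    fun x => ?_
  have hμ : (fun i : S => (volume : Measure (Vec d)).restrict (cell (β i) ℓ))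
      = fun _ => volume.restrict (cell b ℓ) := by
    funext i
    rw [hβ i i.2]
  have : Measurable fun y : S → Vec d => φ (Function.updateFinset x S y) :=
    hφm.comp measurable_updateFinset
  unfold lmarginal
  simp_rw [hμ, energyDensity_updateFinset V (hφ1.differentiable one_ne_zero)]
  rw [lintegral_const_mul _ (by fun_prop)]
  exact hcell S (by simp) b _ (hφ.comp (contDiff_updateFinset x S))

lemma lintegral_energyDensity_sdiff_add_le [Fintype ι] {V : Vec d → ℝ≥0∞}
    (hV : Measurable V) {φ : (ι → Vec d) → ℝ} (hφ : ContDiff ℝ 1 φ) (μ : Measure (ι → Vec d))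
    {S S' : Finset ι} (hS : S' ⊆ S) :
    (∫⁻ x, energyDensity V φ S' x ∂μ) + ∫⁻ x, energyDensity V φ (S \ S') x ∂μ
      ≤ ∫⁻ x, energyDensity V φ S x ∂μ := by
  rw [← lintegral_add_left (measurable_energyDensity hV hφ S')]
  refine lintegral_mono fun x => ?_
  simpa [Finset.union_sdiff_of_subset hS] using
    energyDensity_add_le V φ (Finset.disjoint_sdiff (s := S') (t := S)) x

-- For at most `p` particles, `n (n - 1) ≥ (2 m - 1) n - m ^ 2` is `(n - m) ^ 2 ≥ 0`; from more
-- particles one splits off groups of `p`, each of which alone gains `p (p - 1) ≥ (2 m - 1) p`.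
lemma ofReal_mul_card_mul_lintegral_le [Fintype ι] {V : Vec d → ℝ≥0∞} (hV : Measurable V)
    {φ : (ι → Vec d) → ℝ} (hφ : ContDiff ℝ 1 φ) (μ : Measure (ι → Vec d)) {κ m : ℝ} (hκ : 0 ≤ κ)
    (hm : 1 ≤ m) {p : ℕ} (hp : 2 * m ≤ p) (S : Finset ι)
    (hS : ∀ S' ⊆ S, S'.card ≤ p → ENNReal.ofReal (κ * (S'.card * (S'.card - 1)))
        * ∫⁻ x, ENNReal.ofReal (φ x ^ 2) ∂μ ≤ ∫⁻ x, energyDensity V φ S' x ∂μ) :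
    ENNReal.ofReal ((2 * m - 1) * S.card * κ) * ∫⁻ x, ENNReal.ofReal (φ x ^ 2) ∂μ
      ≤ (∫⁻ x, energyDensity V φ S x ∂μ)
        + ENNReal.ofReal (m ^ 2 * κ) * ∫⁻ x, ENNReal.ofReal (φ x ^ 2) ∂μ := by
  have h2m : 0 ≤ 2 * m - 1 := by linarith
  induction S using Finset.strongInduction with
  | H S ih =>
  set I := ∫⁻ x, ENNReal.ofReal (φ x ^ 2) ∂μ
  rcases le_or_gt S.card p with hc | hc
  · refine le_trans ?_ (add_le_add_left (hS S subset_rfl hc) _)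
    have := natCast_mul_natCast_sub_one_nonneg S.card
    rw [← add_mul, ← ENNReal.ofReal_add (by positivity) (by positivity)]
    gcongr
    nlinarith [mul_nonneg hκ (sq_nonneg (S.card - m))]
  obtain ⟨S', hS'S, hS'c⟩ := Finset.exists_subset_card_eq hc.le
  have hS'0 : 0 < S'.card := by
    rw [hS'c]
    exact_mod_cast (by linarith : (0 : ℝ) < p)
  have hrest := ih (S \ S') (Finset.sdiff_ssubset hS'S (Finset.card_pos.1 hS'0)) fun S'' h =>
    hS S'' (h.trans Finset.sdiff_subset)
  have hcard : (S.card : ℝ) = S'.card + (S \ S').card := by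
    rw [Finset.card_sdiff_of_subset hS'S, Nat.cast_sub (Finset.card_le_card hS'S)]
    ring
  have hgroup : (2 * m - 1) * S'.card * κ ≤ κ * (S'.card * (S'.card - 1)) := by
    rw [hS'c]
    nlinarith [mul_nonneg hκ p.cast_nonneg]
  calc _ = ENNReal.ofReal ((2 * m - 1) * S'.card * κ) * I
        + ENNReal.ofReal ((2 * m - 1) * (S \ S').card * κ) * I := by
        rw [← add_mul, ← ENNReal.ofReal_add (by positivity) (by positivity), hcard]
        ring_nf
    _ ≤ ENNReal.ofReal (κ * (S'.card * (S'.card - 1))) * I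
        + ((∫⁻ x, energyDensity V φ (S \ S') x ∂μ) + ENNReal.ofReal (m ^ 2 * κ) * I) := by
        gcongr
    _ ≤ _ := by
        rw [← add_assoc]
        exact add_le_add_left ((add_le_add_left (hS S' hS'S hS'c.le) _).trans
          (lintegral_energyDensity_sdiff_add_le hV hφ μ hS'S)) _

end

lemma mul_lintegral_le_lintegral_energyDensity_cellsMeasure {ι γ : Type} [Fintype ι]
    [DecidableEq ι] [Fintype γ] {V : Vec d → ℝ≥0∞} (hV : Measurable V) {φ : (ι → Vec d) → ℝ}
    (hφ : ContDiff ℝ (⊤ : ℕ∞) φ) {κ m ℓ : ℝ} (hκ : 0 ≤ κ) (hm : 1 ≤ m) {p : ℕ} (hp : 2 * m ≤ p)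
    (hcell : ∀ n ≤ p, HasCellEnergyBound V κ ℓ n) (b : γ → Vec d) (α : ι → γ) :
    ENNReal.ofReal ((2 * m - 1) * Fintype.card ι * κ)
        * ∫⁻ x, ENNReal.ofReal (φ x ^ 2) ∂cellsMeasure (b ∘ α) ℓ
      ≤ (∫⁻ x, energyDensity V φ Finset.univ x ∂cellsMeasure (b ∘ α) ℓ)
        + ENNReal.ofReal (Fintype.card γ * (m ^ 2 * κ))
          * ∫⁻ x, ENNReal.ofReal (φ x ^ 2) ∂cellsMeasure (b ∘ α) ℓ := by
  classical
  have hφ1 : ContDiff ℝ 1 φ := hφ.of_le (by simp)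
  set μ := cellsMeasure (b ∘ α) ℓ
  set I := ∫⁻ x, ENNReal.ofReal (φ x ^ 2) ∂μ
  have h2m : 0 ≤ 2 * m - 1 := by linarith
  have hfiber (g : γ) : ENNReal.ofReal ((2 * m - 1) * ({i | α i = g} : Finset ι).card * κ) * I
      ≤ (∫⁻ x, energyDensity V φ {i | α i = g} x ∂μ) + ENNReal.ofReal (m ^ 2 * κ) * I := by
    refine ofReal_mul_card_mul_lintegral_le hV hφ1 μ hκ hm hp _ fun S' hS' hc =>
      (hcell _ hc).mul_lintegral_le_of_subset hV (b := b g) (fun i hi => ?_) hφ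
    rw [Function.comp_apply, (Finset.mem_filter.1 (hS' hi)).2]
  calc _ = ∑ g, ENNReal.ofReal ((2 * m - 1) * ({i | α i = g} : Finset ι).card * κ) * I := by
        rw [← Finset.sum_mul, ← ENNReal.ofReal_sum_of_nonneg fun g _ => by positivity,
          ← Finset.sum_mul, ← Finset.mul_sum, ← Nat.cast_sum,
          ← Finset.card_eq_sum_card_fiberwise fun i _ => Finset.mem_univ (α i), Finset.card_univ]
    _ ≤ ∑ g, ((∫⁻ x, energyDensity V φ {i | α i = g} x ∂μ)
          + ENNReal.ofReal (m ^ 2 * κ) * I) := Finset.sum_le_sum fun g _ => hfiber g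
    _ = (∫⁻ x, ∑ g, energyDensity V φ {i | α i = g} x ∂μ)
          + ENNReal.ofReal (Fintype.card γ * (m ^ 2 * κ)) * I := by
        rw [Finset.sum_add_distrib, lintegral_finsetSum _ fun g _ =>
          measurable_energyDensity hV hφ1 _, Finset.sum_const, Finset.card_univ, nsmul_eq_mul,
          ENNReal.ofReal_mul (Nat.cast_nonneg _), ENNReal.ofReal_natCast, mul_assoc]
    _ ≤ _ := by
        gcongr with x
        simpa using sum_energyDensity_fiber_le V φ α x Finset.univ

/-! ### Subdivision of the torus and the lower bound -/

/-- The lower corner of the cell with index `α` in the subdivision of the cube with lower corner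
`b` into cells of side `ℓ`. -/
def subCorner (b : Vec d) (ℓ : ℝ) {M : ℕ} (α : Fin d → Fin M) : Vec d := fun k => b k + α k * ℓ

lemma mem_cell_subCorner_iff {b : Vec d} {ℓ : ℝ} (hℓ : 0 < ℓ) {M : ℕ} (α : Fin d → Fin M)
    {z : Vec d} :
    z ∈ cell (subCorner b ℓ α) ℓ ↔ ∀ k, 0 ≤ (z k - b k) / ℓ ∧ ⌊(z k - b k) / ℓ⌋₊ = α k := by
  rw [mem_cell]
  refine forall_congr' fun k => ?_
  have hlower : b k + α k * ℓ ≤ z k ↔ (α k : ℝ) ≤ (z k - b k) / ℓ := by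
    rw [le_div_iff₀ hℓ, le_sub_iff_add_le']
  have hupper : z k < b k + α k * ℓ + ℓ ↔ (z k - b k) / ℓ < α k + 1 := by
    rw [div_lt_iff₀ hℓ, sub_lt_iff_lt_add', add_mul, one_mul, add_assoc]
  rw [subCorner, hlower, hupper]
  constructor
  · intro h
    have hnonneg : 0 ≤ (z k - b k) / ℓ := (Nat.cast_nonneg _).trans h.1
    exact ⟨hnonneg, (Nat.floor_eq_iff hnonneg).2 h⟩
  · rintro ⟨hnonneg, hfloor⟩
    exact (Nat.floor_eq_iff hnonneg).1 hfloor

lemma mem_cell_iff_exists_subCorner {b : Vec d} {ℓ : ℝ} (hℓ : 0 < ℓ) {M : ℕ} {z : Vec d} :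
    z ∈ cell b (M * ℓ) ↔ ∃ α : Fin d → Fin M, z ∈ cell (subCorner b ℓ α) ℓ := by
  have hcoord (k : Fin d) : (b k ≤ z k ∧ z k < b k + M * ℓ)
      ↔ (0 ≤ (z k - b k) / ℓ ∧ ⌊(z k - b k) / ℓ⌋₊ < M) := by
    rw [show b k ≤ z k ↔ 0 ≤ (z k - b k) / ℓ by rw [le_div_iff₀ hℓ, zero_mul, sub_nonneg]]
    refine and_congr_right fun h => ?_
    rw [Nat.floor_lt h, div_lt_iff₀ hℓ, sub_lt_iff_lt_add']
  simp_rw [mem_cell_subCorner_iff hℓ, mem_cell, hcoord]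
  constructor
  · intro h
    exact ⟨fun k => ⟨_, (h k).2⟩, fun k => ⟨(h k).1, rfl⟩⟩
  · rintro ⟨α, h⟩ k
    exact ⟨(h k).1, (h k).2 ▸ (α k).2⟩

lemma lintegral_cellsMeasure_eq_sum {ι : Type*} [Fintype ι] [DecidableEq ι] (b : Vec d) {ℓ : ℝ}
    (hℓ : 0 < ℓ) (M : ℕ) (f : (ι → Vec d) → ℝ≥0∞) :
    ∫⁻ x, f x ∂cellsMeasure (fun _ => b) (M * ℓ)
      = ∑ α : ι → Fin d → Fin M, ∫⁻ x, f x ∂cellsMeasure (subCorner b ℓ ∘ α) ℓ := by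
  have hunion : (Set.pi Set.univ fun _ : ι => cell b (M * ℓ))
      = ⋃ α : ι → Fin d → Fin M, Set.pi Set.univ fun i => cell (subCorner b ℓ (α i)) ℓ := by
    ext x
    simp only [Set.mem_pi, Set.mem_univ, true_imp_iff, Set.mem_iUnion,
      mem_cell_iff_exists_subCorner hℓ]
    exact ⟨fun h => ⟨fun i => (h i).choose, fun i => (h i).choose_spec⟩,
      fun ⟨α, h⟩ i => ⟨α i, h i⟩⟩
  simp_rw [cellsMeasure_eq_restrict, hunion]
  rw [lintegral_iUnion, tsum_fintype]
  · rfl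
  · exact fun α => MeasurableSet.univ_pi fun i => measurableSet_cell _ _
  · intro α α' hne
    rw [Function.onFun, Set.disjoint_left]
    intro x hx hx'
    refine hne (funext₂ fun i k => Fin.ext ?_)
    rw [← ((mem_cell_subCorner_iff hℓ _).1 (hx i trivial) k).2,
      ((mem_cell_subCorner_iff hℓ _).1 (hx' i trivial) k).2]

lemma mul_lintegral_le_lintegral_energyDensity {ι : Type} [Fintype ι] [DecidableEq ι]
    {V : Vec d → ℝ≥0∞} (hV : Measurable V) {φ : (ι → Vec d) → ℝ} (hφ : ContDiff ℝ (⊤ : ℕ∞) φ)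
    {κ m ℓ : ℝ} (hκ : 0 ≤ κ) (hm : 1 ≤ m) (hℓ : 0 < ℓ) {p : ℕ} (hp : 2 * m ≤ p)
    (hcell : ∀ n ≤ p, HasCellEnergyBound V κ ℓ n) (b : Vec d) (M : ℕ) :
    ENNReal.ofReal ((2 * m - 1) * Fintype.card ι * κ)
        * ∫⁻ x, ENNReal.ofReal (φ x ^ 2) ∂cellsMeasure (fun _ => b) (M * ℓ)
      ≤ (∫⁻ x, energyDensity V φ Finset.univ x ∂cellsMeasure (fun _ => b) (M * ℓ))
        + ENNReal.ofReal (M ^ d * (m ^ 2 * κ))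
          * ∫⁻ x, ENNReal.ofReal (φ x ^ 2) ∂cellsMeasure (fun _ => b) (M * ℓ) := by
  simp_rw [lintegral_cellsMeasure_eq_sum b hℓ]
  rw [Finset.mul_sum, Finset.mul_sum, ← Finset.sum_add_distrib]
  refine Finset.sum_le_sum fun α _ => ?_
  simpa using mul_lintegral_le_lintegral_energyDensity_cellsMeasure hV hφ hκ hm hp hcell
    (subCorner b ℓ) α

lemma sum_sum_erase_eq_two_mul {ι : Type*} [Fintype ι] [LinearOrder ι] {F : ι → ι → ℝ≥0∞}
    (hF : ∀ i j, F i j = F j i) :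
    ∑ i, ∑ j ∈ Finset.univ.erase i, F i j = 2 * ∑ i, ∑ j, if i < j then F i j else 0 := by
  have hsplit (i : ι) : ∑ j ∈ Finset.univ.erase i, F i j
      = (∑ j, if i < j then F i j else 0) + ∑ j, if j < i then F j i else 0 := by
    rw [← Finset.sum_add_distrib, ← Finset.filter_ne', Finset.sum_filter]
    refine Finset.sum_congr rfl fun j _ => ?_
    rcases lt_trichotomy i j with h | h | h
    · simp [h, h.ne', h.not_gt]
    · simp [h]
    · simp [h, h.ne, h.not_gt, hF i j]
  simp_rw [hsplit]
  rw [Finset.sum_add_distrib, two_mul]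
  congr 1
  exact Finset.sum_comm

lemma le_periodize (V : Vec d → ℝ≥0∞) (T : ℝ) (z : Vec d) : V z ≤ periodize d V T z := by
  refine le_trans (le_of_eq ?_) (ENNReal.le_tsum (0 : Fin d → ℤ))
  simp

lemma measurable_periodize {V : Vec d → ℝ≥0∞} (hV : Measurable V) (T : ℝ) :
    Measurable (periodize d V T) :=
  Measurable.tsum fun n => hV.comp (by fun_prop)

lemma restrict_box_eq_cellsMeasure (N : ℕ) (T : ℝ) :
    volume.restrict (box d N T) = cellsMeasure (fun _ _ => -T / 2) T := by
  have hbox : box d N T = Set.pi Set.univ fun _ => Set.pi Set.univ fun _ =>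
      Set.Icc (-T / 2) (T / 2) := by
    ext x
    exact ⟨fun h i _ k _ => h i k, fun h i k => h i trivial k trivial⟩
  rw [cellsMeasure_eq_restrict]
  refine Measure.restrict_congr_set ?_
  rw [hbox, volume_pi]
  refine Measure.ae_eq_set_pi fun i _ => ?_
  rw [cell, volume_pi]
  refine Measure.ae_eq_set_pi fun k _ => ?_
  rw [show -T / 2 + T = T / 2 by ring]
  exact Ico_ae_eq_Icc.symm

lemma nnnorm_sq_eq_ofReal_re_add_ofReal_im (z : ℂ) :
    (‖z‖₊ : ℝ≥0∞) ^ 2 = ENNReal.ofReal (z.re ^ 2) + ENNReal.ofReal (z.im ^ 2) := by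
  rw [← ENNReal.ofReal_add (sq_nonneg _) (sq_nonneg _), ← enorm_eq_nnnorm, ← ofReal_norm,
    ← ENNReal.ofReal_pow (norm_nonneg _), Complex.sq_norm, Complex.normSq_apply, sq, sq]

lemma fderiv_continuousLinearMap_comp_apply {E F G : Type*} [NormedAddCommGroup E]
    [NormedSpace ℝ E] [NormedAddCommGroup F] [NormedSpace ℝ F] [NormedAddCommGroup G]
    [NormedSpace ℝ G] (L : F →L[ℝ] G) {ψ : E → F} {x : E} (h : DifferentiableAt ℝ ψ x) (v : E) :
    fderiv ℝ (fun y => L (ψ y)) x v = L (fderiv ℝ ψ x v) := by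
  have hcomp : HasFDerivAt (fun y => L (ψ y)) _ x := L.hasFDerivAt.comp x h.hasFDerivAt
  rw [hcomp.fderiv]
  rfl

/-- The energy density of a complex wave function of `N` particles on the torus of side `T`. -/
def stateDensity {N : ℕ} (T : ℝ) (V : Vec d → ℝ≥0∞) (ψ : (Fin N → Vec d) → ℂ)
    (x : Fin N → Vec d) : ℝ≥0∞ :=
  (∑ i : Fin N, ∑ k : Fin d, (‖fderiv ℝ ψ x (Pi.single i (Pi.single k 1))‖₊ : ℝ≥0∞) ^ 2)
    + ∑ i : Fin N, ∑ j : Fin N,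
      if i < j then periodize d V T (fun k => x i k - x j k) * (‖ψ x‖₊ : ℝ≥0∞) ^ 2 else 0

lemma kineticE_add_interE_eq_lintegral {N : ℕ} {T : ℝ} {V : Vec d → ℝ≥0∞} (hV : Measurable V)
    {ψ : (Fin N → Vec d) → ℂ} (hψ : ContDiff ℝ 1 ψ) :
    kineticE d N T ψ + interE d N T V ψ = ∫⁻ x in box d N T, stateDensity T V ψ x := by
  have hkin (i : Fin N) (k : Fin d) : Measurable fun x =>
      (‖fderiv ℝ ψ x (Pi.single i (Pi.single k 1))‖₊ : ℝ≥0∞) ^ 2 := by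
    have hcont : Continuous fun x => fderiv ℝ ψ x (Pi.single i (Pi.single k 1)) :=
      (hψ.continuous_fderiv one_ne_zero).clm_apply continuous_const
    exact (hcont.measurable.nnnorm.coe_nnreal_ennreal).pow_const 2
  have hinter (i j : Fin N) : Measurable fun x : Fin N → Vec d =>
      if i < j then periodize d V T (fun k => x i k - x j k) * (‖ψ x‖₊ : ℝ≥0∞) ^ 2 else 0 := by
    split_ifs
    · refine ((measurable_periodize hV T).comp (by fun_prop)).mul ?_
      exact (hψ.continuous.measurable.nnnorm.coe_nnreal_ennreal).pow_const 2
    · exact measurable_const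
  unfold stateDensity kineticE interE
  rw [lintegral_add_left (Finset.measurable_sum _ fun i _ => Finset.measurable_sum _ fun k _ =>
    hkin i k)]
  congr 1
  · rw [lintegral_finsetSum _ fun i _ => Finset.measurable_sum _ fun k _ => hkin i k]
    exact Finset.sum_congr rfl fun i _ => (lintegral_finsetSum _ fun k _ => hkin i k).symm
  · rw [lintegral_finsetSum _ fun i _ => Finset.measurable_sum _ fun k _ => hinter i k]
    refine Finset.sum_congr rfl fun i _ => ?_
    rw [lintegral_finsetSum _ fun k _ => hinter i k]
    refine Finset.sum_congr rfl fun j _ => ?_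
    split_ifs <;> simp

lemma ofReal_sum_partialSq_re_add_im {ι : Type*} [Fintype ι] [DecidableEq ι]
    {ψ : (ι → Vec d) → ℂ} (hψ : Differentiable ℝ ψ) (x : ι → Vec d) :
    ENNReal.ofReal (∑ i, partialSq (fun y => (ψ y).re) i x)
        + ENNReal.ofReal (∑ i, partialSq (fun y => (ψ y).im) i x)
      = ∑ i, ∑ k, (‖fderiv ℝ ψ x (Pi.single i (Pi.single k 1))‖₊ : ℝ≥0∞) ^ 2 := by
  rw [ENNReal.ofReal_sum_of_nonneg fun i _ => partialSq_nonneg _ _ _,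
    ENNReal.ofReal_sum_of_nonneg fun i _ => partialSq_nonneg _ _ _, ← Finset.sum_add_distrib]
  refine Finset.sum_congr rfl fun i _ => ?_
  unfold partialSq
  rw [ENNReal.ofReal_sum_of_nonneg fun i _ => sq_nonneg _,
    ENNReal.ofReal_sum_of_nonneg fun i _ => sq_nonneg _, ← Finset.sum_add_distrib]
  refine Finset.sum_congr rfl fun k _ => ?_
  have hre := fderiv_continuousLinearMap_comp_apply Complex.reCLM (hψ x)
    (Pi.single i (Pi.single k 1))
  have him := fderiv_continuousLinearMap_comp_apply Complex.imCLM (hψ x)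
    (Pi.single i (Pi.single k 1))
  simp only [Complex.reCLM_apply, Complex.imCLM_apply] at hre him
  rw [nnnorm_sq_eq_ofReal_re_add_ofReal_im, hre, him]

lemma energyDensity_re_add_energyDensity_im_le {N : ℕ} (T : ℝ) {V : Vec d → ℝ≥0∞}
    (hVeven : ∀ z, V (-z) = V z) {ψ : (Fin N → Vec d) → ℂ} (hψ : Differentiable ℝ ψ)
    (x : Fin N → Vec d) :
    energyDensity V (fun y => (ψ y).re) Finset.univ x
      + energyDensity V (fun y => (ψ y).im) Finset.univ x ≤ stateDensity T V ψ x := by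
  have hinter : (∑ i, ∑ j ∈ Finset.univ.erase i, V (x i - x j)) * ENNReal.ofReal ((ψ x).re ^ 2) / 2
      + (∑ i, ∑ j ∈ Finset.univ.erase i, V (x i - x j)) * ENNReal.ofReal ((ψ x).im ^ 2) / 2
      ≤ ∑ i : Fin N, ∑ j : Fin N,
      if i < j then periodize d V T (fun k => x i k - x j k) * (‖ψ x‖₊ : ℝ≥0∞) ^ 2 else 0 := by
    rw [← ENNReal.add_div, ← mul_add, ← nnnorm_sq_eq_ofReal_re_add_ofReal_im,
      sum_sum_erase_eq_two_mul (F := fun i j => V (x i - x j)) fun i j => by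
        rw [← hVeven, neg_sub], mul_assoc, mul_div_assoc]
    refine ENNReal.mul_div_le.trans ?_
    rw [Finset.sum_mul]
    gcongr with i
    rw [Finset.sum_mul]
    gcongr with j
    split_ifs
    · gcongr
      exact le_periodize V T _
    · simp
  rw [energyDensity, energyDensity, add_add_add_comm, ofReal_sum_partialSq_re_add_im hψ]
  exact add_le_add_right hinter _

lemma IsTrialState.ofReal_le_energy_add {V : Vec d → ℝ≥0∞} (hV : Measurable V)
    (hVeven : ∀ z, V (-z) = V z) {κ m ℓ : ℝ} (hκ : 0 ≤ κ) (hm : 1 ≤ m) (hℓ : 0 < ℓ) {p : ℕ}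
    (hp : 2 * m ≤ p) (hcell : ∀ n ≤ p, HasCellEnergyBound V κ ℓ n) {N M : ℕ}
    {ψ : (Fin N → Vec d) → ℂ} (hψ : IsTrialState d N (M * ℓ) ψ) :
    ENNReal.ofReal ((2 * m - 1) * N * κ)
      ≤ (kineticE d N (M * ℓ) ψ + interE d N (M * ℓ) V ψ)
        + ENNReal.ofReal (M ^ d * (m ^ 2 * κ)) := by
  obtain ⟨hs, -, -, hnorm⟩ := hψ
  have hre : ContDiff ℝ (⊤ : ℕ∞) fun y => (ψ y).re := Complex.reCLM.contDiff.comp hs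
  have him : ContDiff ℝ (⊤ : ℕ∞) fun y => (ψ y).im := Complex.imCLM.contDiff.comp hs
  have hrem : Measurable fun y => ENNReal.ofReal ((ψ y).re ^ 2) :=
    (hre.continuous.pow 2).measurable.ennreal_ofReal
  have hsum := add_le_add
    (mul_lintegral_le_lintegral_energyDensity hV hre hκ hm hℓ hp hcell (fun _ => -(M * ℓ) / 2) M)
    (mul_lintegral_le_lintegral_energyDensity hV him hκ hm hℓ hp hcell (fun _ => -(M * ℓ) / 2) M)
  rw [← mul_add, add_add_add_comm, ← mul_add,
    ← lintegral_add_left hrem,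
    ← lintegral_add_left (measurable_energyDensity hV (hre.of_le (by simp)) _)] at hsum
  simp_rw [← nnnorm_sq_eq_ofReal_re_add_ofReal_im, ← restrict_box_eq_cellsMeasure, hnorm, mul_one,
    Fintype.card_fin] at hsum
  refine hsum.trans ?_
  rw [kineticE_add_interE_eq_lintegral hV (hs.of_le (by simp))]
  gcongr with x
  exact energyDensity_re_add_energyDensity_im_le _ hVeven (hs.differentiable (by simp)) x

lemma exists_forall_le_hasCellEnergyBound {V : Vec 3 → ℝ≥0∞} (hV : Measurable V)
    (hVc : HasCompactSupport V) {A : ℝ} (hA : 0 ≤ A) (hAV : ENNReal.ofReal A ≤ sInf (scatSet3 V))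
    (p : ℕ) {ε : ℝ} (hε : 0 < ε) (hε1 : ε < 1) :
    ∃ ℓ₀ : ℝ, 0 < ℓ₀ ∧ ∀ ℓ ≥ ℓ₀, ∀ n ≤ p, HasCellEnergyBound V (A * (1 - ε) / ℓ ^ 3) ℓ n := by
  choose ℓ₁ hℓ₁ hcell using fun n => exists_hasCellEnergyBound hV hVc hA hAV n hε hε1
  refine ⟨∑ n ∈ Finset.range (p + 1), ℓ₁ n, Finset.sum_pos (fun n _ => hℓ₁ n) ⟨0, by simp⟩,
    fun ℓ hℓ n hn => hcell n ℓ (le_trans ?_ hℓ)⟩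
  exact Finset.single_le_sum (f := ℓ₁) (fun n _ => (hℓ₁ n).le) (by simpa [Nat.lt_succ_iff])

lemma sideLength_pow (hd : d ≠ 0) {ρ : ℝ} (hρ : 0 < ρ) (N : ℕ) :
    sideLength d ρ N ^ d = N / ρ := by
  rw [sideLength, one_div, rpow_inv_natCast_pow (by positivity) hd]

lemma sideLength_pos {ρ : ℝ} (hρ : 0 < ρ) {N : ℕ} (hN : 0 < N) : 0 < sideLength d ρ N :=
  rpow_pos_of_pos (by positivity) _

lemma sideLength_mono {ρ : ℝ} (hρ : 0 < ρ) : Monotone (sideLength d ρ) := fun M N h => by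
  unfold sideLength
  gcongr

lemma exists_nat_le_div_le_two_mul {L T : ℝ} (hL : 0 < L) (hLT : L ≤ T) :
    ∃ M : ℕ, 0 < M ∧ L ≤ T / M ∧ T / M ≤ 2 * L := by
  have hTL : 1 ≤ T / L := (one_le_div hL).2 hLT
  have hM : 0 < ⌊T / L⌋₊ := Nat.floor_pos.2 hTL
  have hM1 : (1 : ℝ) ≤ ⌊T / L⌋₊ := Nat.one_le_cast.2 hM
  have hfloor : (⌊T / L⌋₊ : ℝ) ≤ T / L := Nat.floor_le (by positivity)
  have hlt : T / L < ⌊T / L⌋₊ + 1 := Nat.lt_floor_add_one _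
  rw [le_div_iff₀ hL] at hfloor
  rw [div_lt_iff₀ hL] at hlt
  refine ⟨_, hM, ?_, ?_⟩
  · rwa [le_div_iff₀ (by positivity), mul_comm]
  · rw [div_le_iff₀ (by positivity)]
    nlinarith

lemma IsTrialState.ofReal_le_energy_of_hasCellEnergyBound {V : Vec 3 → ℝ≥0∞} (hV : Measurable V)
    (hVeven : ∀ z, V (-z) = V z) {A ε ρ ℓ : ℝ} (hA : 0 ≤ A) (hε : 0 < ε) (hε1 : ε < 1)
    (hℓ : 0 < ℓ) {p : ℕ} (hp : 2 * (ρ * ℓ ^ 3) ≤ p) (hm : 2 ≤ ε * (ρ * ℓ ^ 3))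
    (hcell : ∀ n ≤ p, HasCellEnergyBound V (A * (1 - ε / 2) / ℓ ^ 3) ℓ n) {N M : ℕ}
    (hN : (N : ℝ) = ρ * (M * ℓ) ^ 3) {ψ : (Fin N → Vec 3) → ℂ}
    (hψ : IsTrialState 3 N (M * ℓ) ψ) :
    ENNReal.ofReal (A * (1 - ε) * ρ ^ 2 * (M * ℓ) ^ 3)
      ≤ kineticE 3 N (M * ℓ) ψ + interE 3 N (M * ℓ) V ψ := by
  set m := ρ * ℓ ^ 3 with hm_def
  have hm1 : 1 ≤ m := by nlinarith
  have hε2 : 0 ≤ 1 - ε / 2 := by linarith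
  have henergy := hψ.ofReal_le_energy_add hV hVeven (by positivity) hm1 hℓ hp hcell
  rw [← tsub_le_iff_right, ← ENNReal.ofReal_sub _ (by positivity)] at henergy
  refine le_trans (ENNReal.ofReal_le_ofReal ?_) henergy
  have hfactor : (1 - ε) * m ≤ (1 - ε / 2) * (m - 1) := by nlinarith
  calc A * (1 - ε) * ρ ^ 2 * (M * ℓ) ^ 3
      = A * M ^ 3 / ℓ ^ 3 * (m * ((1 - ε) * m)) := by
        rw [hm_def]
        field_simp
    _ ≤ A * M ^ 3 / ℓ ^ 3 * (m * ((1 - ε / 2) * (m - 1))) := by gcongr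
    _ = (2 * m - 1) * N * (A * (1 - ε / 2) / ℓ ^ 3)
        - M ^ 3 * (m ^ 2 * (A * (1 - ε / 2) / ℓ ^ 3)) := by
        rw [hN, show ρ * (M * ℓ) ^ 3 = M ^ 3 * m by rw [hm_def]; ring]
        ring

-- The cells have at least the side of a box with `q` particles at density `ρ`, so that they hold
-- between `q` and `8 q` particles on average; for a large mean number `m`, the difference
-- `m ^ 2 - m` is close to `m ^ 2`.
lemma eventually_ofReal_le_energy {V : Vec 3 → ℝ≥0∞} (hV : Measurable V)
    (hVc : HasCompactSupport V) (hVeven : ∀ z, V (-z) = V z) {A : ℝ} (hA : 0 ≤ A)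
    (hAV : ENNReal.ofReal A ≤ sInf (scatSet3 V)) {ε : ℝ} (hε : 0 < ε) (hε1 : ε < 1) :
    ∀ᶠ ρ in nhdsWithin 0 (Set.Ioi 0), ∀ᶠ N : ℕ in atTop,
      ∀ ψ, IsTrialState 3 N (sideLength 3 ρ N) ψ →
        ENNReal.ofReal (A * (1 - ε) * ρ ^ 2 * sideLength 3 ρ N ^ 3)
          ≤ kineticE 3 N (sideLength 3 ρ N) ψ + interE 3 N (sideLength 3 ρ N) V ψ := by
  obtain ⟨q, hq⟩ := exists_nat_gt (2 / ε)
  have hq0 : (0 : ℝ) < q := lt_trans (by positivity) hq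
  rw [div_lt_iff₀ hε] at hq
  obtain ⟨ℓ₀, hℓ₀, hcell⟩ := exists_forall_le_hasCellEnergyBound hV hVc hA hAV (16 * q)
    (half_pos hε) (by linarith)
  filter_upwards [Ioo_mem_nhdsGT (show 0 < q / ℓ₀ ^ 3 by positivity)] with ρ ⟨hρ, hρ0⟩
  filter_upwards [eventually_ge_atTop q] with N hN ψ hψ
  set L := sideLength 3 ρ q
  have hL3 : L ^ 3 = q / ρ := sideLength_pow three_ne_zero hρ q
  have hL0 : 0 < L := sideLength_pos hρ (by exact_mod_cast hq0)
  have hℓL : ℓ₀ ≤ L := by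
    refine le_of_pow_le_pow_left₀ three_ne_zero hL0.le ?_
    rw [hL3, le_div_iff₀ hρ, mul_comm]
    exact ((lt_div_iff₀ (by positivity)).1 hρ0).le
  obtain ⟨M, hM, hLℓ, hℓL2⟩ := exists_nat_le_div_le_two_mul hL0 (sideLength_mono hρ hN)
  set ℓ := sideLength 3 ρ N / M with hℓ
  have hTℓ : sideLength 3 ρ N = M * ℓ := by rw [hℓ]; field_simp
  have hℓ0 : 0 < ℓ := hL0.trans_le hLℓ
  have hqm : (q : ℝ) ≤ ρ * ℓ ^ 3 := by
    calc (q : ℝ) = ρ * L ^ 3 := by rw [hL3]; field_simp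
      _ ≤ ρ * ℓ ^ 3 := by gcongr
  have hmq : ρ * ℓ ^ 3 ≤ 8 * q := by
    calc ρ * ℓ ^ 3 ≤ ρ * (2 * L) ^ 3 := by gcongr
      _ = 8 * (ρ * L ^ 3) := by ring
      _ = 8 * q := by rw [hL3]; field_simp
  have hNℓ : (N : ℝ) = ρ * (M * ℓ) ^ 3 := by
    rw [← hTℓ, sideLength_pow three_ne_zero hρ]
    field_simp
  rw [hTℓ] at hψ ⊢
  exact hψ.ofReal_le_energy_of_hasCellEnergyBound hV hVeven hA hε hε1 hℓ0
    (p := 16 * q) (by push_cast; linarith) (by nlinarith) (hcell ℓ (hℓL.trans hLℓ)) hNℓ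

/-! ### Scattering trial functions -/

/-- The odd primitive of a bump function on the line: it is the identity near `0` and constant
far away, so that it truncates its argument smoothly. -/
def bumpPrimitive (B : ContDiffBump (0 : ℝ)) (t : ℝ) : ℝ := ∫ s in 0..t, B s

section bumpPrimitive

variable (B : ContDiffBump (0 : ℝ))

lemma hasDerivAt_bumpPrimitive (t : ℝ) : HasDerivAt (bumpPrimitive B) (B t) t :=
  intervalIntegral.integral_hasDerivAt_right (B.continuous.intervalIntegrable _ _)
    (B.continuous.stronglyMeasurableAtFilter _ _) B.continuous.continuousAt

lemma contDiff_bumpPrimitive : ContDiff ℝ (⊤ : ℕ∞) (bumpPrimitive B) := by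
  have hderiv : deriv (bumpPrimitive B) = B := funext fun t => (hasDerivAt_bumpPrimitive B t).deriv
  rw [contDiff_infty_iff_deriv, hderiv]
  exact ⟨fun t => (hasDerivAt_bumpPrimitive B t).differentiableAt, B.contDiff⟩

lemma bumpPrimitive_monotone : Monotone (bumpPrimitive B) :=
  monotone_of_hasDerivAt_nonneg (hasDerivAt_bumpPrimitive B) fun _ => B.nonneg

lemma bumpPrimitive_neg (t : ℝ) : bumpPrimitive B (-t) = -bumpPrimitive B t := by
  have h := intervalIntegral.integral_comp_neg (a := 0) (b := t) fun s => B s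
  simp only [B.neg, neg_zero] at h
  rw [bumpPrimitive, bumpPrimitive, h, intervalIntegral.integral_symm]

lemma abs_bumpPrimitive_le_abs (t : ℝ) : |bumpPrimitive B t| ≤ |t| := by
  have h := intervalIntegral.norm_integral_le_of_norm_le_const (a := 0) (b := t) (f := B) (C := 1)
    fun s _ => by rw [Real.norm_of_nonneg B.nonneg]; exact B.le_one
  simpa [bumpPrimitive] using h

lemma bumpPrimitive_le (t : ℝ) : bumpPrimitive B t ≤ bumpPrimitive B B.rOut := by
  rcases le_total t B.rOut with h | h
  · exact bumpPrimitive_monotone B h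
  · have hzero : ∫ s in B.rOut..t, B s = 0 := by
      rw [intervalIntegral.integral_congr (g := fun _ => (0 : ℝ)), intervalIntegral.integral_zero]
      intro s hs
      rw [Set.uIcc_of_le h] at hs
      exact B.zero_of_le_dist (by
        rw [Real.dist_eq, sub_zero]; exact hs.1.trans (le_abs_self s))
    have hsplit := intervalIntegral.integral_add_adjacent_intervals (μ := volume) (a := 0)
      (b := B.rOut) (c := t) (B.continuous.intervalIntegrable _ _)
      (B.continuous.intervalIntegrable _ _)
    rw [hzero, add_zero] at hsplit
    exact hsplit.ge

lemma abs_bumpPrimitive_le (t : ℝ) : |bumpPrimitive B t| ≤ bumpPrimitive B B.rOut :=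
  abs_le'.2 ⟨bumpPrimitive_le B t, bumpPrimitive_neg B t ▸ bumpPrimitive_le B (-t)⟩

lemma rIn_le_bumpPrimitive : B.rIn ≤ bumpPrimitive B B.rOut := by
  have hone : bumpPrimitive B B.rIn = B.rIn := by
    rw [bumpPrimitive, intervalIntegral.integral_congr (g := fun _ => (1 : ℝ))]
    · simp
    intro s hs
    rw [Set.uIcc_of_le B.rIn_pos.le] at hs
    exact B.one_of_mem_closedBall (by
      rw [mem_closedBall_zero_iff, Real.norm_of_nonneg hs.1]; exact hs.2)
  exact hone.symm.trans_le (bumpPrimitive_monotone B B.rIn_lt_rOut.le)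

end bumpPrimitive

lemma exists_smooth_clamp {K : ℝ} (hK : 1 < K) :
    ∃ g : ℝ → ℝ, ContDiff ℝ (⊤ : ℕ∞) g ∧ g 1 = 1 ∧ (∀ t, g t ^ 2 ≤ 1) ∧
      (∀ t, g t ^ 2 ≤ K * t ^ 2) ∧ ∀ t, deriv g t ^ 2 ≤ K := by
  have hK0 : 0 < K := by positivity
  let B : ContDiffBump (0 : ℝ) := ⟨(√K)⁻¹, 1, by positivity,
    inv_lt_one_of_one_lt₀ (Real.lt_sqrt_of_sq_lt (by simpa using hK))⟩
  set C := bumpPrimitive B 1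
  have hCK : (√K)⁻¹ ≤ C := rIn_le_bumpPrimitive B
  have hC : 0 < C := lt_of_lt_of_le (by positivity) hCK
  have hinv : (C ^ 2)⁻¹ ≤ K := by
    rw [← inv_pow, ← Real.sq_sqrt hK0.le]
    gcongr
    exact inv_le_of_inv_le₀ (by positivity) hCK
  have hderiv (t : ℝ) : deriv (fun t => bumpPrimitive B t / C) t = B t / C :=
    ((hasDerivAt_bumpPrimitive B t).div_const C).deriv
  have hbound {r s : ℝ} (h : |r| ≤ |s|) : (r / C) ^ 2 ≤ K * s ^ 2 := by
    rw [div_pow, div_eq_inv_mul]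
    exact mul_le_mul hinv (sq_le_sq.2 h) (sq_nonneg r) hK0.le
  refine ⟨fun t => bumpPrimitive B t / C, (contDiff_bumpPrimitive B).div_const C, div_self hC.ne',
    fun t => ?_, fun t => hbound (abs_bumpPrimitive_le_abs B t), fun t => ?_⟩
  · rw [div_pow, div_le_one (by positivity), sq_le_sq, abs_of_pos hC]
    exact abs_bumpPrimitive_le B t
  · rw [hderiv]
    simpa using hbound (s := 1) (by rw [abs_of_nonneg B.nonneg, abs_one]; exact B.le_one)

lemma gradSq_average_neg_le {f : Vec d → ℝ} (hf : Differentiable ℝ f) (x : Vec d) :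
    gradSq (fun y => (f y + f (-y)) / 2) x ≤ (gradSq f x + gradSq f (-x)) / 2 := by
  have hneg : HasFDerivAt (fun y => f (-y)) (-fderiv ℝ f (-x)) x := by
    simpa [Function.comp_def] using (hf (-x)).hasFDerivAt.comp x (hasFDerivAt_id x).neg
  have h : fderiv ℝ (fun y => (f y + f (-y)) / 2) x
      = (2⁻¹ : ℝ) • (fderiv ℝ f x + -fderiv ℝ f (-x)) := by
    simpa only [div_eq_mul_inv] using (((hf x).hasFDerivAt.fun_add hneg).mul_const 2⁻¹).fderiv
  simp only [gradSq, h, ← Finset.sum_add_distrib, Finset.sum_div, smul_apply, add_apply,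
    neg_apply, smul_eq_mul]
  refine Finset.sum_le_sum fun k _ => ?_
  nlinarith [sq_nonneg (fderiv ℝ f x (Pi.single k 1) + fderiv ℝ f (-x) (Pi.single k 1))]

section scatDensity

variable {V : Vec d → ℝ≥0∞}

@[fun_prop]
lemma measurable_scatDensity (hV : Measurable V) {f : Vec d → ℝ} (hf : ContDiff ℝ 1 f) :
    Measurable (scatDensity V f) := by
  have := (continuous_gradSq hf).measurable
  have := hf.continuous.measurable
  unfold scatDensity
  fun_prop

lemma scatDensity_average_neg_le (hVeven : ∀ z, V (-z) = V z) {f : Vec d → ℝ}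
    (hf : Differentiable ℝ f) (x : Vec d) :
    scatDensity V (fun y => (f y + f (-y)) / 2) x
      ≤ (scatDensity V f x + scatDensity V f (-x)) / 2 := by
  have hgrad : ENNReal.ofReal (gradSq (fun y => (f y + f (-y)) / 2) x)
      ≤ (ENNReal.ofReal (gradSq f x) + ENNReal.ofReal (gradSq f (-x))) / 2 := by
    rw [← ENNReal.ofReal_add (gradSq_nonneg _ _) (gradSq_nonneg _ _), ← ENNReal.ofReal_ofNat 2,
      ← ENNReal.ofReal_div_of_pos two_pos]
    exact ENNReal.ofReal_le_ofReal (gradSq_average_neg_le hf x)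
  have hsq : ENNReal.ofReal (((f x + f (-x)) / 2) ^ 2)
      ≤ (ENNReal.ofReal (f x ^ 2) + ENNReal.ofReal (f (-x) ^ 2)) / 2 := by
    rw [← ENNReal.ofReal_add (sq_nonneg _) (sq_nonneg _), ← ENNReal.ofReal_ofNat 2,
      ← ENNReal.ofReal_div_of_pos two_pos]
    exact ENNReal.ofReal_le_ofReal (by nlinarith [sq_nonneg (f x - f (-x))])
  calc scatDensity V (fun y => (f y + f (-y)) / 2) x
      ≤ (ENNReal.ofReal (gradSq f x) + ENNReal.ofReal (gradSq f (-x))) / 2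
        + V x * ((ENNReal.ofReal (f x ^ 2) + ENNReal.ofReal (f (-x) ^ 2)) / 2) / 2 := by
        unfold scatDensity
        gcongr
    _ = (scatDensity V f x + scatDensity V f (-x)) / 2 := by
        simp only [scatDensity, hVeven, div_eq_mul_inv]
        ring

lemma lintegral_scatDensity_average_neg_le (hV : Measurable V) (hVeven : ∀ z, V (-z) = V z)
    {f : Vec d → ℝ} (hf : ContDiff ℝ 1 f) :
    ∫⁻ x, scatDensity V (fun y => (f y + f (-y)) / 2) x ≤ ∫⁻ x, scatDensity V f x := by
  have hm := measurable_scatDensity hV hf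
  calc ∫⁻ x, scatDensity V (fun y => (f y + f (-y)) / 2) x
      ≤ ∫⁻ x, (scatDensity V f x + scatDensity V f (-x)) / 2 :=
        lintegral_mono (scatDensity_average_neg_le hVeven (hf.differentiable one_ne_zero))
    _ = ∫⁻ x, scatDensity V f x := by
        simp only [div_eq_mul_inv]
        rw [lintegral_mul_const _ (by fun_prop), lintegral_add_left hm,
          lintegral_neg_eq_self (fun x => scatDensity V f x), ← two_mul, mul_right_comm,
          ENNReal.mul_inv_cancel two_ne_zero ENNReal.ofNat_ne_top, one_mul]

lemma scatDensity_comp_le {g : ℝ → ℝ} {f : Vec d → ℝ} {K : ℝ} {x : Vec d} (hK : 0 ≤ K)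
    (hg : DifferentiableAt ℝ g (f x)) (hf : DifferentiableAt ℝ f x)
    (hgK : g (f x) ^ 2 ≤ K * f x ^ 2) (hgK' : deriv g (f x) ^ 2 ≤ K) :
    scatDensity V (fun y => g (f y)) x ≤ ENNReal.ofReal K * scatDensity V f x := by
  rw [scatDensity, scatDensity, mul_add, ← mul_div_assoc, mul_left_comm, ← ENNReal.ofReal_mul hK,
    ← ENNReal.ofReal_mul hK, gradSq_comp hg.hasDerivAt hf]
  have := gradSq_nonneg f x
  gcongr

/- Replacing `f` by its even part and truncating it to `[-1, 1]` costs at most the factor `K`. -/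
lemma exists_even_sq_le_one_lintegral_scatDensity_le (hV : Measurable V)
    (hVeven : ∀ z, V (-z) = V z) {K : ℝ} (hK : 1 < K) {f : Vec d → ℝ}
    (hf : ContDiff ℝ (⊤ : ℕ∞) f) (hfc : HasCompactSupport fun x => f x - 1) :
    ∃ h : Vec d → ℝ, ContDiff ℝ (⊤ : ℕ∞) h ∧ (HasCompactSupport fun x => h x - 1) ∧
      (∀ x, h (-x) = h x) ∧ (∀ x, h x ^ 2 ≤ 1) ∧
      ∫⁻ x, scatDensity V h x ≤ ENNReal.ofReal K * ∫⁻ x, scatDensity V f x := by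
  obtain ⟨g, hg, hg1, hgle, hgK, hgK'⟩ := exists_smooth_clamp hK
  let F : Vec d → ℝ := fun y => (f y + f (-y)) / 2
  have hF : ContDiff ℝ (⊤ : ℕ∞) F := (hf.add (hf.comp contDiff_neg)).div_const 2
  have hFc : HasCompactSupport fun x => F x - 1 := by
    refine (HasCompactSupport.add hfc (hfc.comp_homeomorph (.neg _))).mono fun x hx hx' => hx ?_
    simp only [Pi.add_apply, Function.comp_apply, Homeomorph.coe_neg] at hx'
    simp only [F]
    linarith
  refine ⟨fun y => g (F y), hg.comp hF, hFc.mono fun x hx hx' => hx ?_, fun x => ?_,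
    fun x => hgle _, ?_⟩
  · simp only [show F x = 1 by linarith, hg1, sub_self]
  · simp only [F, neg_neg, add_comm]
  · calc ∫⁻ x, scatDensity V (fun y => g (F y)) x
        ≤ ∫⁻ x, ENNReal.ofReal K * scatDensity V F x :=
          lintegral_mono fun x => scatDensity_comp_le (by positivity)
            (hg.differentiable (by simp) _) (hF.differentiable (by simp) _) (hgK _) (hgK' _)
      _ = ENNReal.ofReal K * ∫⁻ x, scatDensity V F x :=
          lintegral_const_mul' _ _ ENNReal.ofReal_ne_top
      _ ≤ ENNReal.ofReal K * ∫⁻ x, scatDensity V f x := by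
          gcongr ENNReal.ofReal K * ?_
          exact lintegral_scatDensity_average_neg_le hV hVeven (hf.of_le (by simp))

end scatDensity

lemma exists_even_sq_le_one_lintegral_scatDensity_le_ofReal {V : Vec 3 → ℝ≥0∞} (hV : Measurable V)
    (hVeven : ∀ z, V (-z) = V z) {B : ℝ} (hVB : sInf (scatSet3 V) < ENNReal.ofReal B) :
    ∃ h : Vec 3 → ℝ, ContDiff ℝ (⊤ : ℕ∞) h ∧ (HasCompactSupport fun x => h x - 1) ∧
      (∀ x, h (-x) = h x) ∧ (∀ x, h x ^ 2 ≤ 1) ∧ ∫⁻ x, scatDensity V h x ≤ ENNReal.ofReal B := by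
  obtain ⟨E, ⟨f, hf, hfc, hE⟩, hEB⟩ := sInf_lt_iff.1 hVB
  simp only [← scatDensity_eq] at hE
  have hB : 0 < B := ENNReal.ofReal_pos.1 (hEB.trans_le' zero_le)
  obtain ⟨A, -, hEA, hAB⟩ := ENNReal.lt_iff_exists_real_btwn.1 hEB
  have hAB' : A < B := (ENNReal.ofReal_lt_ofReal_iff hB).1 hAB
  have hA0 : 0 < A := ENNReal.ofReal_pos.1 (hEA.trans_le' zero_le)
  obtain ⟨h, hh, hhc, hheven, hh1, hhf⟩ := exists_even_sq_le_one_lintegral_scatDensity_le hV hVeven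
    ((one_lt_div hA0).2 hAB') hf hfc
  refine ⟨h, hh, hhc, hheven, hh1, hhf.trans ?_⟩
  calc ENNReal.ofReal (B / A) * ∫⁻ x, scatDensity V f x
      ≤ ENNReal.ofReal (B / A) * ENNReal.ofReal A := by
        rw [← hE]
        gcongr
    _ = ENNReal.ofReal B := by
        rw [← ENNReal.ofReal_mul (by positivity), div_mul_cancel₀ _ hA0.ne']

/-! ### Periodic extensions -/

/-- The representative of `z` modulo `T` in the cube of side `T` centred at the origin. -/
def centralRep (T : ℝ) (z : Vec d) : Vec d := fun k => z k - T * round (z k / T)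

/-- The `T`-periodic function which agrees with `f` on the cube of side `T` centred at the
origin. -/
def periodicExt (f : Vec d → ℝ) (T : ℝ) (z : Vec d) : ℝ := f (centralRep T z)

lemma abs_centralRep_le {T : ℝ} (hT : 0 < T) (z : Vec d) (k : Fin d) :
    |centralRep T z k| ≤ T / 2 := by
  have hscale : centralRep T z k = T * (z k / T - round (z k / T)) := by
    rw [centralRep]
    field_simp
  rw [hscale, abs_mul, abs_of_pos hT]
  linarith [mul_le_mul_of_nonneg_left (abs_sub_round (z k / T)) hT.le]

lemma sub_abs_centralRep_le_abs {T : ℝ} (hT : 0 < T) {z : Vec d} {k : Fin d} {n : ℤ}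
    (hn : n ≠ round (z k / T)) : T - |centralRep T z k| ≤ |z k - T * n| := by
  have hone : (1 : ℝ) ≤ |(n : ℝ) - round (z k / T)| := by
    exact_mod_cast Int.one_le_abs (sub_ne_zero.2 hn)
  have hdist : T ≤ |centralRep T z k - (z k - T * n)| := by
    rw [centralRep, sub_sub_sub_cancel_left, ← mul_sub, abs_mul, abs_of_pos hT]
    exact le_mul_of_one_le_right hT.le hone
  linarith [abs_sub (centralRep T z k) (z k - T * n)]

lemma periodicExt_add_period (f : Vec d → ℝ) {T : ℝ} (hT : T ≠ 0) (z : Vec d) (n : Fin d → ℤ) :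
    periodicExt f T (fun k => z k + T * n k) = periodicExt f T z := by
  refine congrArg f (funext fun k => ?_)
  simp only [centralRep]
  rw [add_div, mul_div_cancel_left₀ _ hT, round_add_intCast]
  push_cast
  ring

section periodicExt

variable {f : Vec d → ℝ} {R T : ℝ} (hf : ∀ z, R ≤ ‖z‖ → f z = 1)
include hf

lemma periodicExt_eq_of_norm_le (hT : 0 < T) (hRT : 2 * R < T) {z : Vec d} (n : Fin d → ℤ)
    (hz : ‖fun k => z k - T * n k‖ ≤ T - R) : periodicExt f T z = f fun k => z k - T * n k := by
  by_cases hn : ∀ k, n k = round (z k / T)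
  · exact congrArg f (funext fun k => by rw [centralRep, hn])
  · push Not at hn
    obtain ⟨k, hk⟩ := hn
    have hfar := sub_abs_centralRep_le_abs hT hk
    have hcoord := norm_le_pi_norm (fun k => z k - T * n k) k
    have hcentral := norm_le_pi_norm (centralRep T z) k
    rw [Real.norm_eq_abs] at hcoord hcentral
    rw [periodicExt, hf _ (by linarith), hf _ (by linarith [abs_centralRep_le hT z k])]

lemma periodicExt_eventuallyEq (hT : 0 < T) (hRT : 2 * R < T) (z : Vec d) :
    periodicExt f T =ᶠ[nhds z] fun y => f fun k => y k - T * round (z k / T) := by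
  filter_upwards [Metric.ball_mem_nhds z (show 0 < T / 2 - R by linarith)] with y hy
  refine periodicExt_eq_of_norm_le hf hT hRT _ ?_
  rw [mem_ball_iff_norm] at hy
  have hcentral : ‖centralRep T z‖ ≤ T / 2 :=
    (pi_norm_le_iff_of_nonneg (by positivity)).2 (abs_centralRep_le hT z)
  have hsplit : (fun k => y k - T * round (z k / T)) = (y - z) + centralRep T z := by
    funext k
    simp [centralRep]
  rw [hsplit]
  linarith [norm_add_le (y - z) (centralRep T z)]

lemma contDiff_periodicExt (hfs : ContDiff ℝ (⊤ : ℕ∞) f) (hT : 0 < T) (hRT : 2 * R < T) :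
    ContDiff ℝ (⊤ : ℕ∞) (periodicExt f T) :=
  contDiff_iff_contDiffAt.2 fun z => ContDiffAt.congr_of_eventuallyEq
    (ContDiff.contDiffAt (hfs.comp (by fun_prop))) (periodicExt_eventuallyEq hf hT hRT z)

lemma fderiv_periodicExt (hT : 0 < T) (hRT : 2 * R < T) (z : Vec d) :
    fderiv ℝ (periodicExt f T) z = fderiv ℝ f (centralRep T z) :=
  (periodicExt_eventuallyEq hf hT hRT z).fderiv_eq.trans
    (fderiv_comp_sub (f := f) fun k => T * round (z k / T))

lemma periodicExt_neg (hfeven : ∀ z, f (-z) = f z) (hT : 0 < T) (hRT : 2 * R < T) (z : Vec d) :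
    periodicExt f T (-z) = periodicExt f T z := by
  have hneg : (fun k => (-z) k - T * ((-round (z k / T) : ℤ) : ℝ)) = -centralRep T z := by
    funext k
    simp only [centralRep, Pi.neg_apply]
    push_cast
    ring
  have hcentral : ‖centralRep T z‖ ≤ T / 2 :=
    (pi_norm_le_iff_of_nonneg (by positivity)).2 (abs_centralRep_le hT z)
  rw [periodicExt_eq_of_norm_le hf hT hRT (fun k => -round (z k / T)), hneg, hfeven, periodicExt]
  rw [hneg, norm_neg]
  linarith

end periodicExt

lemma apply_centralRep_le_periodize (F : Vec d → ℝ≥0∞) (T : ℝ) (z : Vec d) :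
    F (centralRep T z) ≤ periodize d F T z := by
  refine le_trans (le_of_eq (congrArg F (funext fun k => ?_)))
    (ENNReal.le_tsum fun k => -round (z k / T))
  push_cast
  simp only [centralRep]
  ring

lemma periodicExt_sq_le_of_sq_le_one {f : Vec d → ℝ} {R T : ℝ} (hf : ∀ z, R ≤ ‖z‖ → f z = 1)
    (hf1 : ∀ z, f z ^ 2 ≤ 1) (hT : 0 < T) (hRT : 2 * R ≤ T) (z : Vec d) (n : Fin d → ℤ) :
    periodicExt f T z ^ 2 ≤ f (fun k => z k + T * n k) ^ 2 := by
  by_cases hn : ∀ k, n k = -round (z k / T)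
  · refine le_of_eq (congrArg (fun y => f y ^ 2) (funext fun k => ?_))
    rw [centralRep, hn]
    push_cast
    ring
  · push Not at hn
    obtain ⟨k, hk⟩ := hn
    have hfar := sub_abs_centralRep_le_abs hT (n := -n k) (z := z) (k := k) fun h =>
      hk (by lia)
    have hcoord := norm_le_pi_norm (fun k => z k + T * n k) k
    push_cast at hfar
    rw [mul_neg, sub_neg_eq_add] at hfar
    rw [Real.norm_eq_abs] at hcoord
    rw [hf (fun k => z k + T * n k) (by linarith [abs_centralRep_le hT z k]), one_pow]
    exact hf1 _

lemma scatDensity_periodicExt_le (V : Vec d → ℝ≥0∞) {f : Vec d → ℝ} {R T : ℝ}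
    (hf : ∀ z, R ≤ ‖z‖ → f z = 1) (hf1 : ∀ z, f z ^ 2 ≤ 1) (hT : 0 < T) (hRT : 2 * R < T)
    (z : Vec d) :
    scatDensity (periodize d V T) (periodicExt f T) z ≤ periodize d (scatDensity V f) T z := by
  have hgrad : ENNReal.ofReal (gradSq (periodicExt f T) z)
      ≤ periodize d (fun y => ENNReal.ofReal (gradSq f y)) T z := by
    rw [gradSq, fderiv_periodicExt hf hT hRT]
    exact apply_centralRep_le_periodize (fun y => ENNReal.ofReal (gradSq f y)) T z
  have hpot : periodize d V T z * ENNReal.ofReal (periodicExt f T z ^ 2) / 2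
      ≤ periodize d (fun y => V y * ENNReal.ofReal (f y ^ 2) / 2) T z := by
    rw [mul_div_assoc]
    simp only [periodize, mul_div_assoc, ← ENNReal.tsum_mul_right]
    refine ENNReal.tsum_le_tsum fun n => ?_
    gcongr _ * (ENNReal.ofReal ?_ / 2)
    exact periodicExt_sq_le_of_sq_le_one hf hf1 hT hRT.le z n
  refine (add_le_add hgrad hpot).trans_eq ?_
  simp only [periodize, scatDensity, ENNReal.tsum_add]

lemma mem_cell_add_mul_intCast_iff {T : ℝ} (hT : 0 < T) {c z : Vec d} {n : Fin d → ℤ} :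
    z ∈ cell (fun k => c k + T * n k) T ↔ ∀ k, ⌊(z k - c k) / T⌋ = n k := by
  rw [mem_cell]
  refine forall_congr' fun k => ?_
  rw [Int.floor_eq_iff, le_div_iff₀ hT, div_lt_iff₀ hT]
  constructor <;> rintro ⟨hlower, hupper⟩ <;> constructor <;> linarith

lemma lintegral_cell_periodize_le {F : Vec d → ℝ≥0∞} (hF : Measurable F) {T : ℝ} (hT : 0 < T)
    (b w : Vec d) : ∫⁻ z in cell b T, periodize d F T (z - w) ≤ ∫⁻ z, F z := by
  let c : (Fin d → ℤ) → Vec d := fun n k => (b - w) k + T * n k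
  have htranslate (n : Fin d → ℤ) : ∫⁻ z in cell b T, F (fun k => (z - w) k + T * n k)
      = ∫⁻ z in cell (c n) T, F z := by
    let v : Vec d := fun k => T * n k - w k
    rw [← (measurePreserving_add_right volume v).setLIntegral_comp_preimage
      (measurableSet_cell _ _) hF]
    have hpre : (· + v) ⁻¹' cell (c n) T = cell b T := by
      ext z
      simp only [Set.mem_preimage, mem_cell, c, v, Pi.add_apply, Pi.sub_apply]
      refine forall_congr' fun k => ?_
      constructor <;> rintro ⟨hlower, hupper⟩ <;> constructor <;> linarith
    rw [hpre]
    refine lintegral_congr fun z => congrArg F (funext fun k => ?_)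
    simp only [v, Pi.add_apply, Pi.sub_apply]
    ring
  have hdisjoint : Pairwise (Function.onFun Disjoint fun n => cell (c n) T) := by
    refine fun n n' hne => Set.disjoint_left.2 fun z hz hz' => hne (funext fun k => ?_)
    rw [← (mem_cell_add_mul_intCast_iff hT).1 hz k, (mem_cell_add_mul_intCast_iff hT).1 hz' k]
  have hmeas (n : Fin d → ℤ) : Measurable fun z : Vec d => F fun k => (z - w) k + T * n k :=
    hF.comp (by fun_prop)
  simp only [periodize]
  rw [lintegral_tsum fun n => (hmeas n).aemeasurable]
  simp_rw [htranslate]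
  rw [← lintegral_iUnion (fun n => measurableSet_cell _ _) hdisjoint]
  exact setLIntegral_le_lintegral _ _

lemma periodize_neg (F : Vec d → ℝ≥0∞) (T : ℝ) (z : Vec d) :
    periodize d F T (-z) = periodize d (fun y => F (-y)) T z := by
  rw [periodize, periodize, ← (Equiv.neg (Fin d → ℤ)).tsum_eq]
  refine tsum_congr fun n => congrArg F (funext fun k => ?_)
  simp only [Equiv.neg_apply, Pi.neg_apply]
  push_cast
  ring

/-! ### Jastrow products -/

lemma prod_prod_lt_insert {ι M : Type*} [LinearOrder ι] [CommMonoid M] {F : ι → ι → M}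
    (hF : ∀ i j, F i j = F j i) {S : Finset ι} {a : ι} (ha : a ∉ S) :
    (∏ i ∈ insert a S, ∏ j ∈ insert a S, if i < j then F i j else 1)
      = (∏ j ∈ S, F a j) * ∏ i ∈ S, ∏ j ∈ S, if i < j then F i j else 1 := by
  rw [Finset.prod_insert ha]
  simp_rw [Finset.prod_insert ha]
  rw [if_neg (lt_irrefl a), one_mul, Finset.prod_mul_distrib, ← mul_assoc,
    ← Finset.prod_mul_distrib]
  congr 1
  refine Finset.prod_congr rfl fun j hj => ?_
  rcases lt_or_gt_of_ne (ne_of_mem_of_not_mem hj ha) with h | h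
  · simp [h, h.not_gt, hF a j]
  · simp [h, h.not_gt]

section jastrow

variable {ι : Type*} [LinearOrder ι] {u : Vec d → ℝ}

/-- The Jastrow product of the pair factor `u` over all unordered pairs of particles with labels
in `S`. -/
def jastrow (u : Vec d → ℝ) (S : Finset ι) (x : ι → Vec d) : ℝ :=
  ∏ i ∈ S, ∏ j ∈ S, if i < j then u (x i - x j) else 1

lemma jastrow_insert (hueven : ∀ z, u (-z) = u z) {S : Finset ι} {a : ι} (ha : a ∉ S)
    (x : ι → Vec d) : jastrow u (insert a S) x = (∏ j ∈ S, u (x a - x j)) * jastrow u S x :=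
  prod_prod_lt_insert (F := fun i j => u (x i - x j)) (fun i j => by rw [← hueven, neg_sub]) ha

lemma jastrow_eq_prod_mul_erase (hueven : ∀ z, u (-z) = u z) {S : Finset ι} {a : ι} (ha : a ∈ S)
    (x : ι → Vec d) :
    jastrow u S x = (∏ j ∈ S.erase a, u (x a - x j)) * jastrow u (S.erase a) x := by
  conv_lhs => rw [← Finset.insert_erase ha]
  exact jastrow_insert hueven (Finset.notMem_erase a S) x

lemma jastrow_comp (hueven : ∀ z, u (-z) = u z) (σ : Equiv.Perm ι) (S : Finset ι)
    (x : ι → Vec d) : jastrow u S (x ∘ σ) = jastrow u (S.map σ.toEmbedding) x := by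
  induction S using Finset.induction_on with
  | empty => simp [jastrow]
  | insert a S ha ih =>
    rw [jastrow_insert hueven ha, Finset.map_insert, jastrow_insert hueven (by simpa using ha), ih,
      Finset.prod_map]
    rfl

lemma jastrow_update {S : Finset ι} {a : ι} (ha : a ∉ S) (x : ι → Vec d) (z : Vec d) :
    jastrow u S (Function.update x a z) = jastrow u S x := by
  refine Finset.prod_congr rfl fun i hi => Finset.prod_congr rfl fun j hj => ?_
  rw [Function.update_of_ne (ne_of_mem_of_not_mem hi ha),
    Function.update_of_ne (ne_of_mem_of_not_mem hj ha)]

lemma jastrow_add_period {T : ℝ}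
    (huperiod : ∀ (z : Vec d) (n : Fin d → ℤ), u (fun k => z k + T * n k) = u z)
    (S : Finset ι) (x : ι → Vec d) (v : ι → Fin d → ℤ) :
    jastrow u S (fun i k => x i k + T * v i k) = jastrow u S x := by
  refine Finset.prod_congr rfl fun i _ => Finset.prod_congr rfl fun j _ => ?_
  rw [← huperiod (x i - x j) (v i - v j)]
  refine if_congr Iff.rfl (congrArg u (funext fun k => ?_)) rfl
  simp only [Pi.sub_apply]
  push_cast
  ring

lemma contDiff_jastrow [Fintype ι] {n : WithTop ℕ∞} (hu : ContDiff ℝ n u) (S : Finset ι) :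
    ContDiff ℝ n (jastrow u S) := by
  refine contDiff_prod fun i _ => contDiff_prod fun j _ => ?_
  split_ifs
  · exact hu.comp ((contDiff_apply ℝ (Vec d) i).sub (contDiff_apply ℝ (Vec d) j))
  · exact contDiff_const

lemma prod_sq_le_one {κ : Type*} {v : κ → ℝ} (hv : ∀ j, v j ^ 2 ≤ 1) (S : Finset κ) :
    (∏ j ∈ S, v j) ^ 2 ≤ 1 := by
  rw [← Finset.prod_pow]
  exact Finset.prod_le_one (fun _ _ => sq_nonneg _) fun _ _ => hv _

lemma jastrow_sq_le_one (hu1 : ∀ z, u z ^ 2 ≤ 1) (S : Finset ι) (x : ι → Vec d) :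
    jastrow u S x ^ 2 ≤ 1 := by
  refine prod_sq_le_one (fun i => prod_sq_le_one (fun j => ?_) S) S
  split_ifs
  · exact hu1 _
  · simp

/-- The squared Jastrow product, an unnormalised probability density of the particles in `S`. -/
def jastrowDensity (u : Vec d → ℝ) (S : Finset ι) (x : ι → Vec d) : ℝ≥0∞ :=
  ENNReal.ofReal (jastrow u S x ^ 2)

lemma jastrowDensity_update {S : Finset ι} {a : ι} (ha : a ∉ S) (x : ι → Vec d) (z : Vec d) :
    jastrowDensity u S (Function.update x a z) = jastrowDensity u S x := by
  rw [jastrowDensity, jastrow_update ha, jastrowDensity]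

lemma jastrowDensity_le_erase (hueven : ∀ z, u (-z) = u z) (hu1 : ∀ z, u z ^ 2 ≤ 1)
    (S : Finset ι) (a : ι) (x : ι → Vec d) :
    jastrowDensity u S x ≤ jastrowDensity u (S.erase a) x := by
  by_cases ha : a ∈ S
  · rw [jastrowDensity, jastrow_eq_prod_mul_erase hueven ha, mul_pow]
    exact ENNReal.ofReal_le_ofReal
      (mul_le_of_le_one_left (sq_nonneg _) (prod_sq_le_one (fun _ => hu1 _) _))
  · rw [Finset.erase_eq_of_notMem ha]

lemma jastrowDensity_le_mul_erase (hueven : ∀ z, u (-z) = u z) (hu1 : ∀ z, u z ^ 2 ≤ 1)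
    {S : Finset ι} {i j : ι} (hi : i ∈ S) (hj : j ∈ S.erase i) (x : ι → Vec d) :
    jastrowDensity u S x
      ≤ ENNReal.ofReal (u (x i - x j) ^ 2) * jastrowDensity u (S.erase i) x := by
  rw [jastrowDensity, jastrowDensity, jastrow_eq_prod_mul_erase hueven hi, mul_pow,
    ENNReal.ofReal_mul (sq_nonneg _)]
  gcongr ENNReal.ofReal ?_ * _
  rw [← Finset.mul_prod_erase _ _ hj, mul_pow]
  exact mul_le_of_le_one_right (sq_nonneg _) (prod_sq_le_one (fun _ => hu1 _) _)

/-- The `ℓ¹` norm of the gradient, which controls the cross terms in the gradient of a product. -/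
def gradAbs (f : Vec d → ℝ) (x : Vec d) : ℝ := ∑ k, |fderiv ℝ f x (Pi.single k 1)|

lemma gradAbs_nonneg (f : Vec d → ℝ) (x : Vec d) : 0 ≤ gradAbs f x :=
  Finset.sum_nonneg fun _ _ => abs_nonneg _

lemma continuous_gradAbs {f : Vec d → ℝ} (hf : ContDiff ℝ 1 f) : Continuous (gradAbs f) := by
  unfold gradAbs
  have := hf.continuous_fderiv one_ne_zero
  fun_prop

lemma sum_abs_mul_abs_le_gradAbs_mul (f : Vec d → ℝ) (y z : Vec d) :
    ∑ k, |fderiv ℝ f y (Pi.single k 1)| * |fderiv ℝ f z (Pi.single k 1)|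
      ≤ gradAbs f y * gradAbs f z := by
  rw [gradAbs, Finset.sum_mul]
  gcongr with k
  exact Finset.single_le_sum (f := fun k => |fderiv ℝ f z (Pi.single k 1)|)
    (fun _ _ => abs_nonneg _) (Finset.mem_univ k)

lemma sum_sq_eq_sum_sq_add_sum_erase {κ : Type*} [DecidableEq κ] (S : Finset κ) (v : κ → ℝ) :
    (∑ j ∈ S, v j) ^ 2 = ∑ j ∈ S, v j ^ 2 + ∑ j ∈ S, ∑ j' ∈ S.erase j, v j * v j' := by
  rw [sq, Finset.sum_mul_sum, ← Finset.sum_add_distrib]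
  refine Finset.sum_congr rfl fun j hj => ?_
  rw [← Finset.add_sum_erase _ _ hj, sq]

lemma fderiv_prod_mul_const_sq_le (hu : Differentiable ℝ u) (hu1 : ∀ z, u z ^ 2 ≤ 1)
    {κ : Type*} (S : Finset κ) (y : κ → Vec d) (c : ℝ) (z v : Vec d) :
    fderiv ℝ (fun z => (∏ j ∈ S, u (z - y j)) * c) z v ^ 2
      ≤ (∑ j ∈ S, |fderiv ℝ u (z - y j) v|) ^ 2 * c ^ 2 := by
  classical
  have hfactor (j : κ) (_ : j ∈ S) :
      HasFDerivAt (fun z => u (z - y j)) (fderiv ℝ u (z - y j)) z :=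
    (hu (z - y j)).hasFDerivAt.comp z ((hasFDerivAt_id z).sub_const (y j))
  rw [((HasFDerivAt.finsetProd hfactor).mul_const c).fderiv]
  simp only [smul_apply, sum_apply, smul_eq_mul]
  rw [mul_comm, mul_pow, ← sq_abs]
  gcongr
  refine (Finset.abs_sum_le_sum_abs _ _).trans (Finset.sum_le_sum fun j _ => ?_)
  rw [abs_mul]
  refine mul_le_of_le_one_left (abs_nonneg _) ?_
  exact sq_le_one_iff_abs_le_one _ |>.1 (prod_sq_le_one (fun _ => hu1 _) _)

lemma gradSq_prod_mul_const_le (hu : Differentiable ℝ u) (hu1 : ∀ z, u z ^ 2 ≤ 1)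
    {κ : Type*} [DecidableEq κ] (S : Finset κ) (y : κ → Vec d) (c : ℝ) (z : Vec d) :
    gradSq (fun z => (∏ j ∈ S, u (z - y j)) * c) z
      ≤ (∑ j ∈ S, gradSq u (z - y j)
        + ∑ j ∈ S, ∑ j' ∈ S.erase j, gradAbs u (z - y j) * gradAbs u (z - y j')) * c ^ 2 := by
  set D : κ → Fin d → ℝ := fun j k => |fderiv ℝ u (z - y j) (Pi.single k 1)|
  have hdiag : ∑ k, ∑ j ∈ S, D j k ^ 2 = ∑ j ∈ S, gradSq u (z - y j) := by
    rw [Finset.sum_comm]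
    simp only [D, sq_abs, gradSq]
  have hcross : ∑ k, ∑ j ∈ S, ∑ j' ∈ S.erase j, D j k * D j' k
      ≤ ∑ j ∈ S, ∑ j' ∈ S.erase j, gradAbs u (z - y j) * gradAbs u (z - y j') := by
    rw [Finset.sum_comm]
    refine Finset.sum_le_sum fun j _ => ?_
    rw [Finset.sum_comm]
    exact Finset.sum_le_sum fun j' _ => sum_abs_mul_abs_le_gradAbs_mul u _ _
  calc gradSq (fun z => (∏ j ∈ S, u (z - y j)) * c) z
      ≤ ∑ k, (∑ j ∈ S, D j k) ^ 2 * c ^ 2 :=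
        Finset.sum_le_sum fun k _ => fderiv_prod_mul_const_sq_le hu hu1 S y c z _
    _ = (∑ k, ∑ j ∈ S, D j k ^ 2 + ∑ k, ∑ j ∈ S, ∑ j' ∈ S.erase j, D j k * D j' k) * c ^ 2 := by
        simp_rw [← Finset.sum_mul, sum_sq_eq_sum_sq_add_sum_erase, Finset.sum_add_distrib]
    _ ≤ _ := by
        gcongr
        exact hdiag.le

lemma partialSq_jastrow_le [Finite ι] (hu : ContDiff ℝ 1 u) (hueven : ∀ z, u (-z) = u z)
    (hu1 : ∀ z, u z ^ 2 ≤ 1) {S : Finset ι} {i : ι} (hi : i ∈ S) (x : ι → Vec d) :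
    partialSq (jastrow u S) i x
      ≤ (∑ j ∈ S.erase i, gradSq u (x i - x j)
        + ∑ j ∈ S.erase i, ∑ j' ∈ (S.erase i).erase j,
          gradAbs u (x i - x j) * gradAbs u (x i - x j'))
        * jastrow u (S.erase i) x ^ 2 := by
  cases nonempty_fintype ι
  have hupdate : (fun z => jastrow u S (Function.update x i z))
      = fun z => (∏ j ∈ S.erase i, u (z - x j)) * jastrow u (S.erase i) x := by
    funext z
    rw [jastrow_eq_prod_mul_erase hueven hi, jastrow_update (Finset.notMem_erase i _)]
    refine congrArg (· * _) (Finset.prod_congr rfl fun j hj => ?_)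
    rw [Function.update_self, Function.update_of_ne (Finset.ne_of_mem_erase hj)]
  have hpartial := gradSq_comp_update (x := x) (i := i) (z := x i)
    ((contDiff_jastrow hu S).differentiable one_ne_zero _)
  rw [Function.update_eq_self, hupdate] at hpartial
  rw [← hpartial]
  exact gradSq_prod_mul_const_le (hu.differentiable one_ne_zero) hu1 _ x _ (x i)

lemma ofReal_partialSq_jastrow_le [Finite ι] (hu : ContDiff ℝ 1 u) (hueven : ∀ z, u (-z) = u z)
    (hu1 : ∀ z, u z ^ 2 ≤ 1) {S : Finset ι} {i : ι} (hi : i ∈ S) (x : ι → Vec d) :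
    ENNReal.ofReal (partialSq (jastrow u S) i x)
      ≤ ∑ j ∈ S.erase i,
          ENNReal.ofReal (gradSq u (x i - x j)) * jastrowDensity u (S.erase i) x
        + ∑ j ∈ S.erase i, ∑ j' ∈ (S.erase i).erase j,
          ENNReal.ofReal (gradAbs u (x i - x j)) * (ENNReal.ofReal (gradAbs u (x i - x j'))
            * jastrowDensity u ((S.erase i).erase j) x) := by
  have hcross (j j' : ι) : 0 ≤ gradAbs u (x i - x j) * gradAbs u (x i - x j') :=
    mul_nonneg (gradAbs_nonneg _ _) (gradAbs_nonneg _ _)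
  have hcrossSum (j : ι) : 0 ≤ ∑ j' ∈ (S.erase i).erase j,
      gradAbs u (x i - x j) * gradAbs u (x i - x j') := Finset.sum_nonneg fun j' _ => hcross j j'
  refine (ENNReal.ofReal_le_ofReal (partialSq_jastrow_le hu hueven hu1 hi x)).trans ?_
  rw [ENNReal.ofReal_mul' (sq_nonneg _), ← jastrowDensity,
    ENNReal.ofReal_add (Finset.sum_nonneg fun _ _ => gradSq_nonneg _ _)
      (Finset.sum_nonneg fun j _ => hcrossSum j), add_mul,
    ENNReal.ofReal_sum_of_nonneg fun _ _ => gradSq_nonneg _ _,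
    ENNReal.ofReal_sum_of_nonneg fun j _ => hcrossSum j, Finset.sum_mul, Finset.sum_mul]
  gcongr with j
  rw [ENNReal.ofReal_sum_of_nonneg fun j' _ => hcross j j', Finset.sum_mul]
  refine Finset.sum_le_sum fun j' _ => ?_
  rw [ENNReal.ofReal_mul (gradAbs_nonneg _ _), mul_assoc]
  gcongr
  exact jastrowDensity_le_erase hueven hu1 _ _ _

end jastrow

lemma stateDensity_ofReal {N : ℕ} (T : ℝ) {V : Vec d → ℝ≥0∞} (hVeven : ∀ z, V (-z) = V z)
    {φ : (Fin N → Vec d) → ℝ} (hφ : Differentiable ℝ φ) (x : Fin N → Vec d) :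
    stateDensity T V (fun y => (φ y : ℂ)) x
      = ∑ i, (ENNReal.ofReal (partialSq φ i x) + ∑ j ∈ Finset.univ.erase i,
        periodize d V T (x i - x j) * ENNReal.ofReal (φ x ^ 2) / 2) := by
  have hnorm (r : ℝ) : (‖(r : ℂ)‖₊ : ℝ≥0∞) ^ 2 = ENNReal.ofReal (r ^ 2) := by
    rw [Complex.nnnorm_real, nnnorm_sq_eq_ofReal]
  have hkin (i : Fin N) :
      ∑ k, (‖fderiv ℝ (fun y => (φ y : ℂ)) x (Pi.single i (Pi.single k 1))‖₊ : ℝ≥0∞) ^ 2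
        = ENNReal.ofReal (partialSq φ i x) := by
    rw [partialSq, ENNReal.ofReal_sum_of_nonneg fun k _ => sq_nonneg _]
    refine Finset.sum_congr rfl fun k _ => ?_
    have hderiv := fderiv_continuousLinearMap_comp_apply Complex.ofRealCLM (hφ x)
      (Pi.single i (Pi.single k 1))
    simp only [Complex.ofRealCLM_apply] at hderiv
    rw [hderiv, hnorm]
  have hsymm := sum_sum_erase_eq_two_mul
    (F := fun i j : Fin N => periodize d V T (x i - x j) * ENNReal.ofReal (φ x ^ 2)) fun i j => by
      rw [← neg_sub, periodize_neg]
      simp_rw [hVeven]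
  have hinter : ∑ i : Fin N, ∑ j : Fin N,
      (if i < j then periodize d V T (fun k => x i k - x j k) * (‖(φ x : ℂ)‖₊ : ℝ≥0∞) ^ 2 else 0)
      = ∑ i, ∑ j ∈ Finset.univ.erase i,
        periodize d V T (x i - x j) * ENNReal.ofReal (φ x ^ 2) / 2 := by
    simp_rw [div_eq_mul_inv _ (2 : ℝ≥0∞), ← Finset.sum_mul _ _ (2 : ℝ≥0∞)⁻¹]
    rw [hsymm, mul_comm, ← mul_assoc, ENNReal.inv_mul_cancel two_ne_zero ENNReal.ofNat_ne_top,
      one_mul]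
    simp_rw [hnorm]
    rfl
  rw [stateDensity, hinter, Finset.sum_add_distrib]
  simp_rw [hkin]

lemma stateDensity_jastrow_le {N : ℕ} (T : ℝ) {V : Vec d → ℝ≥0∞} (hVeven : ∀ z, V (-z) = V z)
    {u : Vec d → ℝ} (hu : ContDiff ℝ 1 u) (hueven : ∀ z, u (-z) = u z) (hu1 : ∀ z, u z ^ 2 ≤ 1)
    (x : Fin N → Vec d) :
    stateDensity T V (fun y => (jastrow u Finset.univ y : ℂ)) x
      ≤ ∑ i, ∑ j ∈ Finset.univ.erase i, scatDensity (periodize d V T) u (x i - x j)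
          * jastrowDensity u (Finset.univ.erase i) x
        + ∑ i, ∑ j ∈ Finset.univ.erase i, ∑ j' ∈ (Finset.univ.erase i).erase j,
          ENNReal.ofReal (gradAbs u (x i - x j)) * (ENNReal.ofReal (gradAbs u (x i - x j'))
            * jastrowDensity u ((Finset.univ.erase i).erase j) x) := by
  have hpot (i j : Fin N) (hj : j ∈ Finset.univ.erase i) :
      periodize d V T (x i - x j) * jastrowDensity u Finset.univ x / 2
        ≤ periodize d V T (x i - x j) * ENNReal.ofReal (u (x i - x j) ^ 2) / 2
          * jastrowDensity u (Finset.univ.erase i) x := by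
    rw [ENNReal.mul_div_right_comm, ENNReal.mul_div_right_comm, mul_assoc]
    gcongr
    exact jastrowDensity_le_mul_erase hueven hu1 (Finset.mem_univ i) hj x
  rw [stateDensity_ofReal T hVeven ((contDiff_jastrow hu _).differentiable one_ne_zero),
    ← Finset.sum_add_distrib]
  refine Finset.sum_le_sum fun i _ => ?_
  refine (add_le_add (ofReal_partialSq_jastrow_le hu hueven hu1 (Finset.mem_univ i) x)
    (Finset.sum_le_sum fun j hj => hpot i j hj)).trans_eq ?_
  simp_rw [scatDensity, add_mul, Finset.sum_add_distrib]
  exact add_right_comm _ _ _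

/-! ### The norm and the energy of a Jastrow product -/

lemma one_le_prod_add_sum_one_sub {κ : Type*} (S : Finset κ) {v : κ → ℝ} (h0 : ∀ i, 0 ≤ v i)
    (h1 : ∀ i, v i ≤ 1) : 1 ≤ ∏ i ∈ S, v i + ∑ i ∈ S, (1 - v i) := by
  classical
  induction S using Finset.induction_on with
  | empty => simp
  | insert a S ha ih =>
    rw [Finset.prod_insert ha, Finset.sum_insert ha]
    have hprod : ∏ i ∈ S, v i ≤ 1 := Finset.prod_le_one (fun i _ => h0 i) fun i _ => h1 i
    nlinarith [mul_nonneg (sub_nonneg.2 (h1 a)) (sub_nonneg.2 hprod)]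

lemma mul_lintegral_sum_le {α κ : Type*} [MeasurableSpace α] {ν : Measure α} {S : Finset κ}
    {F : κ → α → ℝ≥0∞} (hF : ∀ i ∈ S, Measurable (F i)) {t C : ℝ≥0∞} {n : ℕ} (hn : S.card ≤ n)
    (h : ∀ i ∈ S, t * ∫⁻ x, F i x ∂ν ≤ C) : t * ∫⁻ x, ∑ i ∈ S, F i x ∂ν ≤ n * C := by
  rw [lintegral_finsetSum _ hF, Finset.mul_sum]
  refine (Finset.sum_le_card_nsmul _ _ _ h).trans ?_
  rw [nsmul_eq_mul]
  gcongr

lemma gradAbs_neg {u : Vec d → ℝ} (hueven : ∀ z, u (-z) = u z) (z : Vec d) :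
    gradAbs u (-z) = gradAbs u z := by
  have hcomp : u ∘ ContinuousLinearEquiv.neg ℝ = u := funext hueven
  have hfderiv := (ContinuousLinearEquiv.neg ℝ (M := Vec d)).comp_right_fderiv (f := u) (x := z)
  rw [hcomp] at hfderiv
  simp [gradAbs, hfderiv]

section jastrowMass

variable {ι : Type*} [LinearOrder ι] {u : Vec d → ℝ}

@[fun_prop]
lemma measurable_jastrowDensity (hu : Measurable u) (S : Finset ι) :
    Measurable (jastrowDensity u S) := by
  refine ((Finset.measurable_prod _ fun i _ => Finset.measurable_prod _ fun j _ => ?_).pow_const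
    2).ennreal_ofReal
  split_ifs <;> fun_prop

lemma jastrowDensity_le_insert_add_sum (hueven : ∀ z, u (-z) = u z) (hu1 : ∀ z, u z ^ 2 ≤ 1)
    {S : Finset ι} {a : ι} (ha : a ∉ S) (x : ι → Vec d) :
    jastrowDensity u S x ≤ jastrowDensity u (insert a S) x
      + ∑ j ∈ S, ENNReal.ofReal (1 - u (x a - x j) ^ 2) * jastrowDensity u S x := by
  have hdefect (j : ι) (_ : j ∈ S) : 0 ≤ 1 - u (x a - x j) ^ 2 := sub_nonneg.2 (hu1 _)
  simp only [jastrowDensity]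
  rw [← Finset.sum_mul, ← ENNReal.ofReal_sum_of_nonneg hdefect,
    ← ENNReal.ofReal_mul (Finset.sum_nonneg hdefect), ← ENNReal.ofReal_add (sq_nonneg _)
      (mul_nonneg (Finset.sum_nonneg hdefect) (sq_nonneg _)), jastrow_insert hueven ha, mul_pow,
    ← Finset.prod_pow, ← add_mul]
  exact ENNReal.ofReal_le_ofReal <| le_mul_of_one_le_left (sq_nonneg _) <|
    one_le_prod_add_sum_one_sub S (fun _ => sq_nonneg _) fun _ => hu1 _

variable [Fintype ι] (μ : Measure (Vec d)) [IsFiniteMeasure μ]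

/-- The squared norm of the Jastrow product of the particles in `S`. All particles, also those
outside `S`, are integrated over `μ`, so that different `S` can be compared. -/
def jastrowMass (u : Vec d → ℝ) (S : Finset ι) : ℝ≥0∞ :=
  ∫⁻ x, jastrowDensity u S x ∂Measure.pi fun _ => μ

lemma jastrowMass_ne_top (hu1 : ∀ z, u z ^ 2 ≤ 1) (S : Finset ι) : jastrowMass μ u S ≠ ⊤ := by
  refine ne_top_of_le_ne_top (b := ∫⁻ _, 1 ∂Measure.pi fun _ : ι => μ) (by simp) ?_
  exact lintegral_mono fun x => ENNReal.ofReal_le_one.2 (jastrow_sq_le_one hu1 S x)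

lemma lintegral_sub_mul_jastrowDensity_le (hu : Measurable u) {F : Vec d → ℝ≥0∞}
    (hF : Measurable F) {c : ℝ≥0∞} (hc : ∀ w, ∫⁻ z, F (z - w) ∂μ ≤ c * μ Set.univ)
    {S : Finset ι} {i j : ι} (hi : i ∉ S) (hji : j ≠ i) :
    ∫⁻ x, F (x i - x j) * jastrowDensity u S x ∂(Measure.pi fun _ => μ)
      ≤ c * jastrowMass μ u S := by
  refine lintegral_pi_mul_le_of_forall_update (fun _ => μ) i (by fun_prop) (by fun_prop)
    (fun x z => jastrowDensity_update hi x z) fun x => ?_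
  simp only [Function.update_self, Function.update_of_ne hji]
  exact hc _

lemma lintegral_sub_mul_sub_mul_jastrowDensity_le (hu : Measurable u) {F : Vec d → ℝ≥0∞}
    (hF : Measurable F) (hFeven : ∀ z, F (-z) = F z) {c : ℝ≥0∞}
    (hc : ∀ w, ∫⁻ z, F (z - w) ∂μ ≤ c * μ Set.univ)
    {S : Finset ι} {i j j' : ι} (hi : i ∉ S) (hj : j ∉ S) (hij : i ≠ j) (hj'i : j' ≠ i)
    (hj'j : j' ≠ j) :
    ∫⁻ x, F (x i - x j) * (F (x i - x j') * jastrowDensity u S x) ∂(Measure.pi fun _ => μ)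
      ≤ c ^ 2 * jastrowMass μ u S := by
  rw [sq, mul_assoc]
  refine (lintegral_pi_mul_le_of_forall_update (fun _ => μ) j (by fun_prop) (by fun_prop)
    (fun x z => ?_) fun x => ?_).trans
      (mul_le_mul_right (lintegral_sub_mul_jastrowDensity_le μ hu hF hc hi hj'i) c)
  · rw [jastrowDensity_update hj, Function.update_of_ne hij, Function.update_of_ne hj'j]
  · simp_rw [Function.update_self, Function.update_of_ne hij, ← hFeven (x i - _), neg_sub]
    exact hc _

section

variable (hu : Measurable u) (hueven : ∀ z, u (-z) = u z) (hu1 : ∀ z, u z ^ 2 ≤ 1) {β : ℝ≥0∞}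
  (hβ : ∀ w, ∫⁻ z, ENNReal.ofReal (1 - u (z - w) ^ 2) ∂μ ≤ β * μ Set.univ)

include hu hueven hu1 hβ

lemma jastrowMass_le_insert_add {S : Finset ι} {a : ι} (ha : a ∉ S) :
    jastrowMass μ u S
      ≤ jastrowMass μ u (insert a S) + Fintype.card ι * (β * jastrowMass μ u S) := by
  refine (lintegral_mono (jastrowDensity_le_insert_add_sum hueven hu1 ha)).trans ?_
  rw [lintegral_add_left (by fun_prop)]
  gcongr
  · rfl
  rw [← one_mul (∫⁻ _, _ ∂_)]
  refine mul_lintegral_sum_le (fun j _ => by fun_prop) (Finset.card_le_univ S) fun j hj => ?_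
  rw [one_mul]
  exact lintegral_sub_mul_jastrowDensity_le μ hu (F := fun z => ENNReal.ofReal (1 - u z ^ 2))
    (by fun_prop) hβ ha (ne_of_mem_of_not_mem hj ha)

variable {t : ℝ≥0∞} (ht : t + Fintype.card ι * β ≤ 1)

include ht

lemma mul_jastrowMass_le_insert {S : Finset ι} {a : ι} (ha : a ∉ S) :
    t * jastrowMass μ u S ≤ jastrowMass μ u (insert a S) := by
  have hcard : Fintype.card ι * β ≠ ⊤ :=
    ne_top_of_le_ne_top ENNReal.one_ne_top (le_add_self.trans ht)
  refine (ENNReal.add_le_add_iff_right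
    (ENNReal.mul_ne_top hcard (jastrowMass_ne_top μ hu1 S))).1 ?_
  rw [← add_mul, mul_assoc]
  exact (mul_le_of_le_one_left' ht).trans (jastrowMass_le_insert_add μ hu hueven hu1 hβ ha)

lemma mul_jastrowMass_erase_le {S : Finset ι} {a : ι} (ha : a ∈ S) :
    t * jastrowMass μ u (S.erase a) ≤ jastrowMass μ u S := by
  conv_rhs => rw [← Finset.insert_erase ha]
  exact mul_jastrowMass_le_insert μ hu hueven hu1 hβ ht (Finset.notMem_erase a S)

lemma jastrowMass_ne_zero (hμ : μ Set.univ ≠ 0) (ht0 : t ≠ 0) (S : Finset ι) :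
    jastrowMass μ u S ≠ 0 := by
  induction S using Finset.induction_on with
  | empty =>
    simp only [jastrowMass, jastrowDensity, jastrow, Finset.prod_empty, one_pow, ENNReal.ofReal_one,
      lintegral_one, Measure.pi_univ]
    exact Finset.prod_ne_zero_iff.2 fun _ _ => hμ
  | insert a S ha ih =>
    exact ((ENNReal.mul_pos ht0 ih).trans_le
      (mul_jastrowMass_le_insert μ hu hueven hu1 hβ ht ha)).ne'

lemma sq_mul_lintegral_sub_mul_jastrowDensity_erase_le {F : Vec d → ℝ≥0∞} (hF : Measurable F)
    {e : ℝ≥0∞} (he : ∀ w, ∫⁻ z, F (z - w) ∂μ ≤ e * μ Set.univ) {i j : ι} (hji : j ≠ i) :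
    t ^ 2 * ∫⁻ x, F (x i - x j) * jastrowDensity u (Finset.univ.erase i) x ∂(Measure.pi fun _ => μ)
      ≤ e * jastrowMass μ u (Finset.univ : Finset ι) := by
  have ht1 : t ≤ 1 := le_self_add.trans ht
  calc _ ≤ t ^ 2 * (e * jastrowMass μ u (Finset.univ.erase i)) := by
        gcongr
        exact lintegral_sub_mul_jastrowDensity_le μ hu hF he (Finset.notMem_erase i _) hji
    _ = e * (t * (t * jastrowMass μ u (Finset.univ.erase i))) := by ring
    _ ≤ e * (1 * jastrowMass μ u Finset.univ) := by
        gcongr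
        exact mul_jastrowMass_erase_le μ hu hueven hu1 hβ ht (Finset.mem_univ i)
    _ = _ := by rw [one_mul]

lemma sq_mul_lintegral_sub_mul_sub_mul_jastrowDensity_erase_le {G : Vec d → ℝ≥0∞}
    (hG : Measurable G) (hGeven : ∀ z, G (-z) = G z) {g : ℝ≥0∞}
    (hg : ∀ w, ∫⁻ z, G (z - w) ∂μ ≤ g * μ Set.univ) {i j j' : ι}
    (hj : j ∈ Finset.univ.erase i) (hj' : j' ∈ (Finset.univ.erase i).erase j) :
    t ^ 2 * ∫⁻ x, G (x i - x j)
        * (G (x i - x j') * jastrowDensity u ((Finset.univ.erase i).erase j) x)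
        ∂(Measure.pi fun _ => μ)
      ≤ g ^ 2 * jastrowMass μ u (Finset.univ : Finset ι) := by
  calc _ ≤ t ^ 2 * (g ^ 2 * jastrowMass μ u ((Finset.univ.erase i).erase j)) := by
        gcongr
        exact lintegral_sub_mul_sub_mul_jastrowDensity_le μ hu hG hGeven hg
          (by simp) (by simp) (Finset.ne_of_mem_erase hj).symm
          (Finset.ne_of_mem_erase (Finset.mem_of_mem_erase hj')) (Finset.ne_of_mem_erase hj')
    _ = g ^ 2 * (t * (t * jastrowMass μ u ((Finset.univ.erase i).erase j))) := by ring
    _ ≤ g ^ 2 * (t * jastrowMass μ u (Finset.univ.erase i)) := by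
        gcongr
        exact mul_jastrowMass_erase_le μ hu hueven hu1 hβ ht hj
    _ ≤ _ := by
        gcongr
        exact mul_jastrowMass_erase_le μ hu hueven hu1 hβ ht (Finset.mem_univ i)

end

end jastrowMass

section JastrowEnergy

variable {N : ℕ} {u : Vec d → ℝ} (μ : Measure (Vec d)) [IsFiniteMeasure μ]

lemma sq_mul_lintegral_stateDensity_jastrow_le {T : ℝ} {V : Vec d → ℝ≥0∞} (hV : Measurable V)
    (hVeven : ∀ z, V (-z) = V z) (hu : ContDiff ℝ 1 u) (hueven : ∀ z, u (-z) = u z)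
    (hu1 : ∀ z, u z ^ 2 ≤ 1) {β t e g : ℝ≥0∞}
    (hβ : ∀ w, ∫⁻ z, ENNReal.ofReal (1 - u (z - w) ^ 2) ∂μ ≤ β * μ Set.univ)
    (ht : t + N * β ≤ 1)
    (he : ∀ w, ∫⁻ z, scatDensity (periodize d V T) u (z - w) ∂μ ≤ e * μ Set.univ)
    (hg : ∀ w, ∫⁻ z, ENNReal.ofReal (gradAbs u (z - w)) ∂μ ≤ g * μ Set.univ) :
    t ^ 2 * ∫⁻ x, stateDensity T V (fun y => (jastrow u Finset.univ y : ℂ)) x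
        ∂(Measure.pi fun _ : Fin N => μ)
      ≤ (N ^ 2 * e + N ^ 3 * g ^ 2) * jastrowMass μ u (Finset.univ : Finset (Fin N)) := by
  have hum : Measurable u := hu.continuous.measurable
  have hE : Measurable (scatDensity (periodize d V T) u) :=
    measurable_scatDensity (measurable_periodize hV T) hu
  have hgradAbs : Measurable (gradAbs u) := (continuous_gradAbs hu).measurable
  have ht' : t + Fintype.card (Fin N) * β ≤ 1 := by rwa [Fintype.card_fin]
  have huniv : (Finset.univ : Finset (Fin N)).card ≤ N := (Finset.card_fin N).le
  have herase (S : Finset (Fin N)) (i : Fin N) (hS : S.card ≤ N) : (S.erase i).card ≤ N :=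
    Finset.card_erase_le.trans hS
  have hpair := mul_lintegral_sum_le (ν := Measure.pi fun _ : Fin N => μ) (t := t ^ 2)
    (fun i _ => by fun_prop) huniv fun i _ =>
      mul_lintegral_sum_le (fun j _ => by fun_prop) (herase _ i huniv) fun j hj =>
        sq_mul_lintegral_sub_mul_jastrowDensity_erase_le μ hum hueven hu1 hβ ht' hE he
          (Finset.ne_of_mem_erase hj)
  have htriple := mul_lintegral_sum_le (ν := Measure.pi fun _ : Fin N => μ) (t := t ^ 2)
    (fun i _ => by fun_prop) huniv fun i _ =>
      mul_lintegral_sum_le (fun j _ => by fun_prop) (herase _ i huniv) fun j hj =>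
        mul_lintegral_sum_le (fun j' _ => by fun_prop) (herase _ j (herase _ i huniv))
          fun j' hj' => sq_mul_lintegral_sub_mul_sub_mul_jastrowDensity_erase_le μ hum hueven hu1
            hβ ht' hgradAbs.ennreal_ofReal (fun z => by rw [gradAbs_neg hueven]) hg hj hj'
  refine (mul_le_mul_right (lintegral_mono fun x =>
    stateDensity_jastrow_le T hVeven hu hueven hu1 x) _).trans ?_
  rw [lintegral_add_left (by fun_prop), mul_add]
  refine (add_le_add hpair htriple).trans_eq ?_
  ring

end JastrowEnergy

lemma stateDensity_const_smul {N : ℕ} (T : ℝ) (V : Vec d → ℝ≥0∞) {φ : (Fin N → Vec d) → ℂ}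
    (hφ : Differentiable ℝ φ) (c : ℝ) (x : Fin N → Vec d) :
    stateDensity T V (fun y => c • φ y) x = ENNReal.ofReal (c ^ 2) * stateDensity T V φ x := by
  have hnorm (z : ℂ) : (‖c • z‖₊ : ℝ≥0∞) ^ 2 = ENNReal.ofReal (c ^ 2) * (‖z‖₊ : ℝ≥0∞) ^ 2 := by
    rw [nnnorm_smul, ENNReal.coe_mul, mul_pow, nnnorm_sq_eq_ofReal]
  simp only [stateDensity, fderiv_fun_const_smul (hφ x) c, smul_apply, hnorm,
    mul_left_comm _ (ENNReal.ofReal (c ^ 2)), mul_add, Finset.mul_sum, mul_ite, mul_zero]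

lemma exists_isTrialState_mul_eq_lintegral_stateDensity {N : ℕ} {T : ℝ} {V : Vec d → ℝ≥0∞}
    (hV : Measurable V) {φ : (Fin N → Vec d) → ℂ} (hφ : ContDiff ℝ (⊤ : ℕ∞) φ)
    (hperiod : ∀ (x : Fin N → Vec d) (v : Fin N → Fin d → ℤ),
      φ (fun i k => x i k + T * v i k) = φ x)
    (hsymm : ∀ (σ : Equiv.Perm (Fin N)) (x : Fin N → Vec d), φ (x ∘ σ) = φ x)
    {Z : ℝ≥0∞} (hZ : ∫⁻ x in box d N T, (‖φ x‖₊ : ℝ≥0∞) ^ 2 = Z) (hZ0 : Z ≠ 0) (hZtop : Z ≠ ⊤) :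
    ∃ ψ, IsTrialState d N T ψ ∧ (kineticE d N T ψ + interE d N T V ψ) * Z
      = ∫⁻ x in box d N T, stateDensity T V φ x := by
  set c : ℝ := (√Z.toReal)⁻¹
  have hZpos : 0 < Z.toReal := ENNReal.toReal_pos hZ0 hZtop
  have hcZ : ENNReal.ofReal (c ^ 2) * Z = 1 := by
    rw [← ENNReal.ofReal_toReal hZtop, ← ENNReal.ofReal_mul (sq_nonneg c), inv_pow,
      Real.sq_sqrt hZpos.le, inv_mul_cancel₀ hZpos.ne', ENNReal.ofReal_one]
  have hψ : ContDiff ℝ (⊤ : ℕ∞) fun x => c • φ x := hφ.const_smul c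
  refine ⟨_, ⟨hψ, fun x v => ?_, fun σ x => ?_, ?_⟩, ?_⟩
  · simp only [hperiod]
  · simp only [hsymm]
  · simp_rw [nnnorm_smul, ENNReal.coe_mul, mul_pow, nnnorm_sq_eq_ofReal]
    rw [lintegral_const_mul' _ _ ENNReal.ofReal_ne_top, hZ, hcZ]
  · rw [kineticE_add_interE_eq_lintegral hV (hψ.of_le (by simp))]
    simp_rw [stateDensity_const_smul T V (hφ.differentiable (by simp)) c]
    rw [lintegral_const_mul' _ _ ENNReal.ofReal_ne_top, mul_right_comm, hcZ, one_mul]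

lemma exists_isTrialState_sq_mul_le {N : ℕ} {T : ℝ} (hT : 0 < T) {V : Vec d → ℝ≥0∞}
    (hV : Measurable V) (hVeven : ∀ z, V (-z) = V z) {u : Vec d → ℝ}
    (hu : ContDiff ℝ (⊤ : ℕ∞) u)
    (huperiod : ∀ (z : Vec d) (n : Fin d → ℤ), u (fun k => z k + T * n k) = u z)
    (hueven : ∀ z, u (-z) = u z) (hu1 : ∀ z, u z ^ 2 ≤ 1) {β t e g : ℝ≥0∞}
    (hβ : ∀ w, ∫⁻ z in cell (fun _ => -T / 2) T, ENNReal.ofReal (1 - u (z - w) ^ 2)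
      ≤ β * ENNReal.ofReal T ^ d) (ht0 : t ≠ 0) (ht : t + N * β ≤ 1)
    (he : ∀ w, ∫⁻ z in cell (fun _ => -T / 2) T, scatDensity (periodize d V T) u (z - w)
      ≤ e * ENNReal.ofReal T ^ d)
    (hg : ∀ w, ∫⁻ z in cell (fun _ => -T / 2) T, ENNReal.ofReal (gradAbs u (z - w))
      ≤ g * ENNReal.ofReal T ^ d) :
    ∃ ψ, IsTrialState d N T ψ ∧
      t ^ 2 * (kineticE d N T ψ + interE d N T V ψ) ≤ N ^ 2 * e + N ^ 3 * g ^ 2 := by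
  set μ : Measure (Vec d) := volume.restrict (cell (fun _ => -T / 2) T)
  have : IsFiniteMeasure μ := isFiniteMeasure_restrict_cell _ _
  have hμ : μ Set.univ = ENNReal.ofReal T ^ d := by
    rw [Measure.restrict_apply_univ, volume_cell]
  rw [← hμ] at hβ he hg
  have hZ0 := jastrowMass_ne_zero μ hu.continuous.measurable hueven hu1 hβ
    (ι := Fin N) (t := t) (by rwa [Fintype.card_fin])
    (by rw [hμ]; exact pow_ne_zero _ (ENNReal.ofReal_pos.2 hT).ne') ht0 Finset.univ
  have hZtop := jastrowMass_ne_top μ hu1 (Finset.univ : Finset (Fin N))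
  obtain ⟨ψ, hψ, henergy⟩ := exists_isTrialState_mul_eq_lintegral_stateDensity (N := N) (T := T)
    (φ := fun x => (jastrow u Finset.univ x : ℂ)) hV
    (Complex.ofRealCLM.contDiff.comp (contDiff_jastrow hu _))
    (fun x v => by rw [jastrow_add_period huperiod])
    (fun σ x => by rw [jastrow_comp hueven, Finset.map_univ_equiv])
    (by simp_rw [Complex.nnnorm_real, nnnorm_sq_eq_ofReal, restrict_box_eq_cellsMeasure]; rfl)
    hZ0 hZtop
  refine ⟨ψ, hψ, (ENNReal.mul_le_mul_iff_left hZ0 hZtop).1 ?_⟩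
  rw [mul_assoc, henergy, restrict_box_eq_cellsMeasure]
  exact sq_mul_lintegral_stateDensity_jastrow_le μ hV hVeven (hu.of_le (by simp)) hueven hu1 hβ ht
    he hg

/-! ### The upper bound -/

section upperBound

variable {f : Vec d → ℝ}

lemma lintegral_one_sub_sq_ne_top (hf : Continuous f) (hfc : HasCompactSupport fun x => f x - 1) :
    ∫⁻ x, ENNReal.ofReal (1 - f x ^ 2) ≠ ⊤ := by
  have hcont : Continuous fun x => 1 - f x ^ 2 := by fun_prop
  have hsupp : HasCompactSupport fun x => 1 - f x ^ 2 := by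
    convert hfc.comp_left (g := fun r => 1 - (r + 1) ^ 2) (by simp) using 2 with x
    simp
  exact (hcont.integrable_of_hasCompactSupport hsupp).lintegral_lt_top.ne

lemma lintegral_gradAbs_ne_top (hf : ContDiff ℝ 1 f) (hfc : HasCompactSupport fun x => f x - 1) :
    ∫⁻ x, ENNReal.ofReal (gradAbs f x) ≠ ⊤ := by
  have hderiv : HasCompactSupport (fderiv ℝ f) := by
    have hfderiv : fderiv ℝ (fun x => f x - 1) = fderiv ℝ f := funext fun _ => fderiv_sub_const 1
    exact hfderiv ▸ hfc.fderiv (𝕜 := ℝ)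
  have hsupp : HasCompactSupport (gradAbs f) :=
    hderiv.comp_left (g := fun L : Vec d →L[ℝ] ℝ => ∑ k, |L (Pi.single k 1)|) (by simp)
  exact ((continuous_gradAbs hf).integrable_of_hasCompactSupport hsupp).lintegral_lt_top.ne

lemma gradAbs_periodicExt_le {R T : ℝ} (hf : ∀ z, R ≤ ‖z‖ → f z = 1) (hT : 0 < T)
    (hRT : 2 * R < T) (z : Vec d) :
    ENNReal.ofReal (gradAbs (periodicExt f T) z)
      ≤ periodize d (fun y => ENNReal.ofReal (gradAbs f y)) T z := by
  rw [gradAbs, fderiv_periodicExt hf hT hRT]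
  exact apply_centralRep_le_periodize (fun y => ENNReal.ofReal (gradAbs f y)) T z

lemma exists_isTrialState_ofReal_sq_mul_le {V : Vec d → ℝ≥0∞} (hV : Measurable V)
    (hVeven : ∀ z, V (-z) = V z) (hf : ContDiff ℝ (⊤ : ℕ∞) f) (hfeven : ∀ z, f (-z) = f z)
    (hf1 : ∀ z, f z ^ 2 ≤ 1) {R T : ℝ} (hR : ∀ z, R ≤ ‖z‖ → f z = 1) (hT : 0 < T)
    (hRT : 2 * R < T) {ρ B β g : ℝ} (hρ : 0 < ρ) (hB0 : 0 ≤ B) (hβ0 : 0 ≤ β) (hg0 : 0 ≤ g)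
    (hB : ∫⁻ x, scatDensity V f x ≤ ENNReal.ofReal B)
    (hβ : ∫⁻ x, ENNReal.ofReal (1 - f x ^ 2) ≤ ENNReal.ofReal β)
    (hg : ∫⁻ x, ENNReal.ofReal (gradAbs f x) ≤ ENNReal.ofReal g) (hρβ : ρ * β < 1) {N : ℕ}
    (hN : (N : ℝ) = ρ * T ^ d) :
    ∃ ψ, IsTrialState d N T ψ ∧
      ENNReal.ofReal ((1 - ρ * β) ^ 2) * (kineticE d N T ψ + interE d N T V ψ)
        ≤ ENNReal.ofReal ((B + ρ * g ^ 2) * ρ ^ 2 * T ^ d) := by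
  have hfC1 : ContDiff ℝ 1 f := hf.of_le (by simp)
  have hfcont := hf.continuous
  have hgradcont := continuous_gradAbs hfC1
  have haverage (c : ℝ) : ENNReal.ofReal (c / T ^ d) * ENNReal.ofReal T ^ d = ENNReal.ofReal c := by
    rw [← ENNReal.ofReal_pow hT.le, ← ENNReal.ofReal_mul' (by positivity),
      div_mul_cancel₀ _ (by positivity)]
  have hNcast : (N : ℝ≥0∞) = ENNReal.ofReal (ρ * T ^ d) := by
    rw [← hN, ENNReal.ofReal_natCast]
  have hNβ : ENNReal.ofReal (1 - ρ * β) + N * ENNReal.ofReal (β / T ^ d) ≤ 1 := by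
    rw [hNcast, ← ENNReal.ofReal_mul (by positivity), ← ENNReal.ofReal_add (by linarith)
      (by positivity), ← ENNReal.ofReal_one]
    exact ENNReal.ofReal_le_ofReal (le_of_eq (by field_simp; ring))
  obtain ⟨ψ, hψ, henergy⟩ := exists_isTrialState_sq_mul_le hT hV hVeven
    (contDiff_periodicExt hR hf hT hRT) (periodicExt_add_period f hT.ne')
    (periodicExt_neg hR hfeven hT hRT) (fun z => hf1 _)
    (β := ENNReal.ofReal (β / T ^ d)) (e := ENNReal.ofReal (B / T ^ d))
    (g := ENNReal.ofReal (g / T ^ d))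
    (fun w => by
      rw [haverage]
      refine (lintegral_mono fun z => apply_centralRep_le_periodize
        (fun y => ENNReal.ofReal (1 - f y ^ 2)) T (z - w)).trans
        ((lintegral_cell_periodize_le (by fun_prop) hT _ w).trans hβ))
    (ENNReal.ofReal_pos.2 (by linarith)).ne' hNβ
    (fun w => by
      rw [haverage]
      exact (lintegral_mono fun z => scatDensity_periodicExt_le V hR hf1 hT hRT (z - w)).trans
        ((lintegral_cell_periodize_le (measurable_scatDensity hV hfC1) hT _ w).trans hB))
    (fun w => by
      rw [haverage]
      exact (lintegral_mono fun z => gradAbs_periodicExt_le hR hT hRT (z - w)).trans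
        ((lintegral_cell_periodize_le (by fun_prop) hT _ w).trans hg))
  refine ⟨ψ, hψ, ?_⟩
  rw [ENNReal.ofReal_pow (by linarith)]
  refine henergy.trans_eq ?_
  rw [hNcast, ← ENNReal.ofReal_pow (by positivity), ← ENNReal.ofReal_pow (by positivity),
    ← ENNReal.ofReal_pow (by positivity), ← ENNReal.ofReal_mul (by positivity),
    ← ENNReal.ofReal_mul (by positivity), ← ENNReal.ofReal_add (by positivity) (by positivity)]
  congr 1
  field_simp

end upperBound

lemma tendsto_sideLength (hd : d ≠ 0) {ρ : ℝ} (hρ : 0 < ρ) :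
    Tendsto (sideLength d ρ) atTop atTop :=
  (tendsto_rpow_atTop (by positivity)).comp (tendsto_natCast_atTop_atTop.atTop_div_const hρ)

lemma eventually_exists_energy_le_ofReal {V : Vec 3 → ℝ≥0∞} (hV : Measurable V)
    (hVeven : ∀ z, V (-z) = V z) {C : ℝ} (hVC : sInf (scatSet3 V) < ENNReal.ofReal C) :
    ∀ᶠ ρ in nhdsWithin 0 (Set.Ioi 0), ∀ᶠ N : ℕ in atTop,
      ∃ ψ, IsTrialState 3 N (sideLength 3 ρ N) ψ ∧
        kineticE 3 N (sideLength 3 ρ N) ψ + interE 3 N (sideLength 3 ρ N) V ψ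
          ≤ ENNReal.ofReal (C * ρ ^ 2 * sideLength 3 ρ N ^ 3) := by
  obtain ⟨B, hB0, hVB, hBC⟩ := ENNReal.lt_iff_exists_real_btwn.1 hVC
  replace hBC : B < C := (ENNReal.ofReal_lt_ofReal_iff_of_nonneg hB0).1 hBC
  obtain ⟨f, hf, hfc, hfeven, hf1, hfB⟩ :=
    exists_even_sq_le_one_lintegral_scatDensity_le_ofReal hV hVeven hVB
  obtain ⟨R, -, hR⟩ := hfc.exists_pos_le_norm
  set β := (∫⁻ x, ENNReal.ofReal (1 - f x ^ 2)).toReal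
  set g := (∫⁻ x, ENNReal.ofReal (gradAbs f x)).toReal
  have hβ : ∀ᶠ ρ : ℝ in nhds 0, 0 < 1 - ρ * β :=
    (Continuous.tendsto (by fun_prop) 0).eventually_const_lt (by simp)
  have hBβ : ∀ᶠ ρ : ℝ in nhds 0, 0 < (1 - ρ * β) ^ 2 * C - (B + ρ * g ^ 2) :=
    (Continuous.tendsto (by fun_prop) 0).eventually_const_lt (by simpa using hBC)
  filter_upwards [self_mem_nhdsWithin, nhdsWithin_le_nhds hβ, nhdsWithin_le_nhds hBβ]
    with ρ hρ hρβ hρB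
  replace hρ : 0 < ρ := hρ
  filter_upwards [(tendsto_sideLength three_ne_zero hρ).eventually_gt_atTop (2 * R),
    eventually_gt_atTop 0] with N hRT hN
  have hT := sideLength_pos (d := 3) hρ hN
  obtain ⟨ψ, hψ, henergy⟩ := exists_isTrialState_ofReal_sq_mul_le hV hVeven hf hfeven hf1
    (fun z hz => sub_eq_zero.1 (hR z hz)) hT hRT hρ hB0 ENNReal.toReal_nonneg
    ENNReal.toReal_nonneg hfB
    (ENNReal.ofReal_toReal (lintegral_one_sub_sq_ne_top hf.continuous hfc)).ge
    (ENNReal.ofReal_toReal (lintegral_gradAbs_ne_top (hf.of_le (by simp)) hfc)).ge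
    (by linarith) (N := N) (by rw [sideLength_pow three_ne_zero hρ]; field_simp)
  refine ⟨ψ, hψ, (ENNReal.mul_le_mul_iff_right
    (ENNReal.ofReal_pos.2 (pow_pos hρβ 2)).ne' ENNReal.ofReal_ne_top).1 (henergy.trans ?_)⟩
  rw [← ENNReal.ofReal_mul (sq_nonneg _), ← mul_assoc, ← mul_assoc]
  gcongr
  linarith

/-! ### The energy per volume -/

lemma gsEnergy_mem_Icc {N : ℕ} {T : ℝ} {V : Vec d → ℝ≥0∞} {m M : ℝ} (hM : 0 ≤ M)
    (hlower : ∀ ψ, IsTrialState d N T ψ →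
      ENNReal.ofReal m ≤ kineticE d N T ψ + interE d N T V ψ)
    (hupper : ∃ ψ, IsTrialState d N T ψ ∧
      kineticE d N T ψ + interE d N T V ψ ≤ ENNReal.ofReal M) :
    gsEnergy d N T V ∈ Set.Icc m M := by
  obtain ⟨ψ, hψ, henergy⟩ := hupper
  have hfinite := ne_top_of_le_ne_top ENNReal.ofReal_ne_top henergy
  constructor
  · refine le_csInf ⟨_, ψ, hψ, hfinite, rfl⟩ ?_
    rintro _ ⟨φ, hφ, hφtop, rfl⟩
    exact (ENNReal.ofReal_le_iff_le_toReal hφtop).1 (hlower φ hφ)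
  · refine csInf_le_of_le ⟨0, ?_⟩ ⟨ψ, hψ, hfinite, rfl⟩ (ENNReal.toReal_le_of_le_ofReal hM henergy)
    rintro _ ⟨φ, -, -, rfl⟩
    exact ENNReal.toReal_nonneg

lemma liminf_limsup_mem_Icc {ι : Type*} {l : Filter ι} [l.NeBot] {F : ι → ℝ} {m M : ℝ}
    (h : ∀ᶠ i in l, F i ∈ Set.Icc m M) :
    liminf F l ∈ Set.Icc m M ∧ limsup F l ∈ Set.Icc m M := by
  obtain ⟨hm, hM⟩ := eventually_and.1 h
  have hbelow : IsBoundedUnder (· ≥ ·) l F := isBoundedUnder_of_eventually_ge hm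
  have habove : IsBoundedUnder (· ≤ ·) l F := isBoundedUnder_of_eventually_le hM
  have hliminf : m ≤ liminf F l := le_liminf_of_le habove.isCoboundedUnder_ge hm
  have hlimsup : limsup F l ≤ M := limsup_le_of_le hbelow.isCoboundedUnder_le hM
  have hle : liminf F l ≤ limsup F l := liminf_le_limsup habove hbelow
  exact ⟨⟨hliminf, hle.trans hlimsup⟩, ⟨hliminf.trans hle, hlimsup⟩⟩

lemma eventually_eMinus_ePlus_div_mem_Icc {V : Vec 3 → ℝ≥0∞} (hV : Measurable V)
    (hVc : HasCompactSupport V) (hVeven : ∀ z, V (-z) = V z) {A : ℝ} (hA : 0 < A)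
    (hVA : sInf (scatSet3 V) = ENNReal.ofReal A) {ε : ℝ} (hε : 0 < ε) (hε1 : ε < 1) :
    ∀ᶠ ρ in nhdsWithin 0 (Set.Ioi 0),
      eMinus 3 V ρ / (A * ρ ^ 2) ∈ Set.Icc (1 - ε) (1 + ε) ∧
      ePlus 3 V ρ / (A * ρ ^ 2) ∈ Set.Icc (1 - ε) (1 + ε) := by
  have hVA' : sInf (scatSet3 V) < ENNReal.ofReal (A * (1 + ε)) := by
    rw [hVA, ENNReal.ofReal_lt_ofReal_iff (by positivity)]
    nlinarith
  filter_upwards [self_mem_nhdsWithin,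
    eventually_ofReal_le_energy hV hVc hVeven hA.le hVA.ge hε hε1,
    eventually_exists_energy_le_ofReal hV hVeven hVA'] with ρ hρ hlower hupper
  replace hρ : 0 < ρ := hρ
  have hdensity : ∀ᶠ N : ℕ in atTop, gsEnergy 3 N (sideLength 3 ρ N) V / sideLength 3 ρ N ^ 3
      ∈ Set.Icc ((1 - ε) * (A * ρ ^ 2)) ((1 + ε) * (A * ρ ^ 2)) := by
    filter_upwards [hlower, hupper, eventually_gt_atTop 0] with N hNlower hNupper hN
    have hT : 0 < sideLength 3 ρ N ^ 3 := pow_pos (sideLength_pos hρ hN) 3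
    obtain ⟨hm, hM⟩ := gsEnergy_mem_Icc (by positivity) hNlower hNupper
    rw [Set.mem_Icc, le_div_iff₀ hT, div_le_iff₀ hT]
    constructor <;> linarith
  have hpos : 0 < A * ρ ^ 2 := by positivity
  simp only [Set.mem_Icc, le_div_iff₀ hpos, div_le_iff₀ hpos]
  exact liminf_limsup_mem_Icc hdensity

lemma tendsto_one_of_eventually_mem_Icc {ι : Type*} {l : Filter ι} {F : ι → ℝ}
    (h : ∀ ε : ℝ, 0 < ε → ε < 1 → ∀ᶠ i in l, F i ∈ Set.Icc (1 - ε) (1 + ε)) :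
    Tendsto F l (nhds 1) := by
  refine ((nhds_basis_Icc_pos (1 : ℝ)).tendsto_right_iff).2 fun ε hε => ?_
  filter_upwards [h (min ε (1 / 2)) (by positivity)
    ((min_le_right _ _).trans_lt one_half_lt_one)] with i hi
  exact Set.Icc_subset_Icc (by gcongr; exact min_le_left _ _) (by gcongr; exact min_le_left _ _) hi

theorem leading_order_3d_general (V : Vec 3 → ℝ≥0∞) (hVmeas : Measurable V)
    (hVeven : ∀ x, V (-x) = V x) (hVsupp : HasCompactSupport V) (a : ℝ) (ha : 0 < a)
    (hscat : sInf (scatSet3 V) = ENNReal.ofReal (4 * π * a)) :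
    Tendsto (fun ρ : ℝ => eMinus 3 V ρ / (4 * π * a * ρ ^ 2))
        (nhdsWithin 0 (Set.Ioi 0)) (nhds 1) ∧
    Tendsto (fun ρ : ℝ => ePlus 3 V ρ / (4 * π * a * ρ ^ 2))
        (nhdsWithin 0 (Set.Ioi 0)) (nhds 1) := by
  have hbounds (ε : ℝ) (hε : 0 < ε) (hε1 : ε < 1) :=
    eventually_eMinus_ePlus_div_mem_Icc hVmeas hVsupp hVeven (by positivity) hscat hε hε1
  exact ⟨tendsto_one_of_eventually_mem_Icc fun ε hε hε1 => (hbounds ε hε hε1).mono fun _ h => h.1,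
    tendsto_one_of_eventually_mem_Icc fun ε hε hε1 => (hbounds ε hε hε1).mono fun _ h => h.2⟩

/-- **Leading order of the ground state energy in three dimensions (Lieb–Yngvason).**
For a radial, compactly supported, nonnegative (possibly infinite) interaction with
scattering length `a ∈ (0,∞)`, the specific ground state energy satisfies
`e₃(ρ) = 4πaρ²(1+o(1))` as `ρ → 0⁺`, both for the `liminf` and the `limsup` version. -/
theorem leading_order_3d
    (V : Vec 3 → ℝ≥0∞) (hVmeas : Measurable V)
    (hVrad : ∀ x y : Vec 3, ∑ k, (x k) ^ 2 = ∑ k, (y k) ^ 2 → V x = V y)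
    (hVsupp : HasCompactSupport V)
    (a : ℝ) (ha : 0 < a)
    (hscat : sInf (scatSet3 V) = ENNReal.ofReal (4 * π * a)) :
    Tendsto (fun ρ : ℝ => eMinus 3 V ρ / (4 * π * a * ρ ^ 2))
        (nhdsWithin 0 (Set.Ioi 0)) (nhds 1) ∧
    Tendsto (fun ρ : ℝ => ePlus 3 V ρ / (4 * π * a * ρ ^ 2))
        (nhdsWithin 0 (Set.Ioi 0)) (nhds 1) :=
  leading_order_3d_general V hVmeas (fun _ => hVrad _ _ (by simp)) hVsupp a ha hscat
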